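/- Fix τ > 0. There exists a unique family of maps i = (i_n)_{n≥1}, where i_n : P_τ(2n) → ℤ, satisfying the following five axioms: (1) (homotopy invariance) if γ₀, γ₁ ∈ P_τ(2n) and there is a continuous δ : [0,1] × [0,τ] → Sp(2n,ℝ) with δ(0,·) = γ₀, δ(1,·) = γ₁, δ(s,0) = I for all s, and the rank of δ(s,τ) − I constant in s, then i_n(γ₀) = i_n(γ₁); (2) (additivity) i_{n₀+n₁}(γ₀ ⋄ γ₁) = i_{n₀}(γ₀) + i_{n₁}(γ₁) for γ₀ ∈ P_τ(2n₀), γ₁ ∈ P_τ(2n₁); (3) for any γ ∈ P_τ(2) with γ(τ) = [[1,a],[0,1]] for a ∈ {0, 1, −1}, there exists θ₀ > 0 such that i₁([γ(τ)·φ_{τ,−θ}] * γ) = i₁(γ) for all θ ∈ (0, θ₀]; (4) for any γ ∈ P_τ(2) with γ(τ) = [[1,a],[0,1]] for a ∈ {1, −1}, there exists θ₀ > 0 such that i₁([γ(τ)·φ_{τ,θ}] * γ) = i₁(γ) + 1 for all θ ∈ (0, θ₀]; (5) (normalization) for γ₀ ∈ P_τ(2) defined by γ₀(t) = diag(1 +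 t/τ, (1 + t/τ)^{-1}), one has i₁(γ₀) = 0. -/

import Mathlib

open Set Matrix

noncomputable section

/-- `2n × 2n` real matrices. -/
abbrev Mat (n : ℕ) := Matrix (Fin (2*n)) (Fin (2*n)) ℝ

/-- The standard symplectic form `ω_n` on `ℝ^{2n}`, in coordinates
`(q₁, p₁, …, q_n, p_n)`. -/
def stdSympForm (n : ℕ) (x y : Fin (2*n) → ℝ) : ℝ :=
  ∑ k : Fin n,
    (x ⟨2*(k:ℕ)+1, by have := k.isLt; omega⟩ * y ⟨2*(k:ℕ), by have := k.isLt; omega⟩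
     - x ⟨2*(k:ℕ), by have := k.isLt; omega⟩ * y ⟨2*(k:ℕ)+1, by have := k.isLt; omega⟩)

/-- The symplectic group `Sp(2n, ℝ)`: matrices preserving the standard symplectic form
(acting on row vectors). -/
def Sp (n : ℕ) : Set (Mat n) :=
  {V | ∀ x y : Fin (2*n) → ℝ, stdSympForm n (x ᵥ* V) (y ᵥ* V) = stdSympForm n x y}

/-- `P_τ(2n)`: continuous paths `[0, τ] → Sp(2n, ℝ)` starting at the identity. -/
structure SympPath (τ : ℝ) (n : ℕ) where
  toFun : ℝ → Mat n
  continuousOn : ContinuousOn toFun (Icc 0 τ)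
  init : toFun 0 = 1
  mem_Sp : ∀ t ∈ Icc (0:ℝ) τ, toFun t ∈ Sp n

/-- The block-diagonal sum of a `2n₀ × 2n₀` matrix and a `2n₁ × 2n₁` matrix. -/
def blockDiagSum (n₀ n₁ : ℕ) (A : Mat n₀) (B : Mat n₁) : Mat (n₀ + n₁) :=
  Matrix.of fun j k =>
    if hj : (j : ℕ) < 2*n₀ then
      (if hk : (k : ℕ) < 2*n₀ then A ⟨j, hj⟩ ⟨k, hk⟩ else 0)
    else
      (if hk : (k : ℕ) < 2*n₀ then 0
       else B ⟨(j:ℕ) - 2*n₀, by have := j.isLt; omega⟩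
              ⟨(k:ℕ) - 2*n₀, by have := k.isLt; omega⟩)

/-- The unipotent upper-triangular matrix `[[1, a], [0, 1]]` in `Sp(2, ℝ)`. -/
def upperTri (a : ℝ) : Mat 1 :=
  Matrix.of ![![1, a], ![0, 1]]

/-- The rotation path `φ_{τ,θ}(t) = [[cos(tθ/τ), −sin(tθ/τ)], [sin(tθ/τ), cos(tθ/τ)]]`. -/
def rotPath (τ θ t : ℝ) : Mat 1 :=
  Matrix.of ![![Real.cos (t*θ/τ), -Real.sin (t*θ/τ)], ![Real.sin (t*θ/τ), Real.cos (t*θ/τ)]]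

/-- The diagonal path `γ₀(t) = diag(1 + t/τ, (1 + t/τ)⁻¹)`. -/
def diagPath (τ t : ℝ) : Mat 1 :=
  Matrix.of ![![1 + t/τ, 0], ![0, (1 + t/τ)⁻¹]]

/-- The five axioms characterizing the (Conley–Zehnder / Long) index
`i : ⋃_{n ≥ 1} P_τ(2n) → ℤ`:
(1) homotopy invariance (rel. endpoints with constant nullity);
(2) additivity under the block-diagonal sum `⋄`;
(3)–(4) behaviour under concatenation with small rotations `[γ(τ)·φ_{τ,∓θ}] * γ`;
(5) normalization on the diagonal path. -/
def CZAxioms (τ : ℝ) (i : ∀ n : ℕ, SympPath τ n → ℤ) : Prop :=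
  -- (1) homotopy invariance
  (∀ n : ℕ, 1 ≤ n → ∀ γ₀ γ₁ : SympPath τ n,
    (∃ δ : ℝ → ℝ → Mat n,
      ContinuousOn (fun p : ℝ × ℝ => δ p.1 p.2) (Icc 0 1 ×ˢ Icc 0 τ) ∧
      (∀ s ∈ Icc (0:ℝ) 1, ∀ t ∈ Icc (0:ℝ) τ, δ s t ∈ Sp n) ∧
      (∀ t ∈ Icc (0:ℝ) τ, δ 0 t = γ₀.toFun t ∧ δ 1 t = γ₁.toFun t) ∧
      (∀ s ∈ Icc (0:ℝ) 1, δ s 0 = 1) ∧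
      (∀ s ∈ Icc (0:ℝ) 1, ∀ s' ∈ Icc (0:ℝ) 1,
        (δ s τ - 1).rank = (δ s' τ - 1).rank)) →
    i n γ₀ = i n γ₁) ∧
  -- (2) additivity under `⋄`
  (∀ n₀ n₁ : ℕ, 1 ≤ n₀ → 1 ≤ n₁ →
    ∀ γ₀ : SympPath τ n₀, ∀ γ₁ : SympPath τ n₁, ∀ γ : SympPath τ (n₀ + n₁),
    (∀ t ∈ Icc (0:ℝ) τ, γ.toFun t = blockDiagSum n₀ n₁ (γ₀.toFun t) (γ₁.toFun t)) →
    i (n₀ + n₁) γ = i n₀ γ₀ + i n₁ γ₁) ∧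
  -- (3)
  (∀ a : ℝ, (a = 0 ∨ a = 1 ∨ a = -1) → ∀ γ : SympPath τ 1, γ.toFun τ = upperTri a →
    ∃ θ₀ > (0:ℝ), ∀ θ ∈ Ioc (0:ℝ) θ₀, ∀ β : SympPath τ 1,
      (∀ t ∈ Icc (0:ℝ) (τ/2), β.toFun t = γ.toFun (2*t)) →
      (∀ t ∈ Icc (τ/2) τ, β.toFun t = γ.toFun τ * rotPath τ (-θ) (2*t - τ)) →
      i 1 β = i 1 γ) ∧
  -- (4)
  (∀ a : ℝ, (a = 1 ∨ a = -1) → ∀ γ : SympPath τ 1, γ.toFun τ = upperTri a →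
    ∃ θ₀ > (0:ℝ), ∀ θ ∈ Ioc (0:ℝ) θ₀, ∀ β : SympPath τ 1,
      (∀ t ∈ Icc (0:ℝ) (τ/2), β.toFun t = γ.toFun (2*t)) →
      (∀ t ∈ Icc (τ/2) τ, β.toFun t = γ.toFun τ * rotPath τ θ (2*t - τ)) →
      i 1 β = i 1 γ + 1) ∧
  -- (5) normalization
  (∀ γ : SympPath τ 1, (∀ t ∈ Icc (0:ℝ) τ, γ.toFun t = diagPath τ t) → i 1 γ = 0)

/-!
Existence. The Cayley transform `a ↦ ((a + 1) - i J (a - 1)) ((a + 1) + i J (a - 1))⁻¹` sends `a`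
to a unitary matrix that has `e^{iα}` as an eigenvalue exactly when `a` composed with the rotation
by `-α` has `1` as an eigenvalue, and the multiplicity of its eigenvalue `1` is `dim ker (a - 1)`.
Along a path `γ` starting at the identity, the argument of the determinant of the transform lifts
to a continuous real function; the sum of the angles in `(0, 2π]` of the eigenvalues at the
endpoint is another value of the same argument. Their difference, divided by `2π`, is an integer.
It does not change in a homotopy along which the multiplicity of the eigenvalue `1` is constant,
and the jump of the angle at `1` produces the behavior under small rotations.

Uniqueness. The difference `D` of two indices satisfies the same axioms with jump `0` in (4). Call
an endpoint `a` stable if `D` does not change when a path ending at `a` is prolonged by a small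
rotation, of either sign. A nondegenerate `a` is stable by homotopy invariance. If `a` is
unipotent, its real Cayley transform `K = S J` with `S` symmetric may be scaled and `S`
diagonalized by congruence, keeping the rank; this deforms `a` into a block sum of matrices of the
symplectic plane, where the axioms apply. In general the Fitting decomposition of `a - 1` is
symplectically orthogonal and reduces `a` to the first two cases. So all endpoints are stable;
since a small rotation makes any endpoint nondegenerate, `D` is locally constant along the initial
segments of a path, and vanishes.
-/

/-! ### The symplectic group -/

/-- The coordinate conjugate to the `i`-th one: `q_k ↔ p_k`. -/
def conjIndex {n : ℕ} (i : Fin (2 * n)) : Fin (2 * n) :=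
  if h : (i : ℕ) % 2 = 1 then ⟨i - 1, by omega⟩ else ⟨i + 1, by omega⟩

/-- `1` on the coordinates `p_k` (odd index) and `-1` on the coordinates `q_k` (even index). -/
def conjSign {n : ℕ} (i : Fin (2 * n)) : ℝ := if (i : ℕ) % 2 = 1 then 1 else -1

lemma conjIndex_conjIndex {n : ℕ} (i : Fin (2 * n)) : conjIndex (conjIndex i) = i := by
  have val_conjIndex (j : Fin (2 * n)) :
      (conjIndex j : ℕ) = if (j : ℕ) % 2 = 1 then (j : ℕ) - 1 else j + 1 := by
    unfold conjIndex
    split_ifs <;> rfl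
  ext
  rw [val_conjIndex, val_conjIndex]
  split_ifs <;> omega

lemma conjSign_conjIndex {n : ℕ} (i : Fin (2 * n)) : conjSign (conjIndex i) = -conjSign i := by
  unfold conjIndex conjSign
  split_ifs <;> simp_all <;> omega

lemma conjSign_mul_self {n : ℕ} (i : Fin (2 * n)) : conjSign i * conjSign i = 1 := by
  unfold conjSign
  split_ifs <;> simp

/-- The Gram matrix of `stdSympForm`: a complex structure on `ℝ^{2n}`, block diagonal with blocks
`[[0, -1], [1, 0]]`. -/
def stdJ (n : ℕ) : Mat n := of fun i j ↦ if j = conjIndex i then conjSign i else 0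

lemma stdJ_mulVec_apply {n : ℕ} (y : Fin (2 * n) → ℝ) (i : Fin (2 * n)) :
    (stdJ n *ᵥ y) i = conjSign i * y (conjIndex i) := by
  simp [stdJ, mulVec, dotProduct]

lemma stdJ_mulVec_stdJ_mulVec {n : ℕ} (y : Fin (2 * n) → ℝ) : stdJ n *ᵥ (stdJ n *ᵥ y) = -y := by
  ext i
  rw [stdJ_mulVec_apply, stdJ_mulVec_apply, conjIndex_conjIndex, conjSign_conjIndex, ← mul_assoc,
    mul_neg, conjSign_mul_self]
  simp

lemma stdJ_mul_stdJ (n : ℕ) : stdJ n * stdJ n = -1 :=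
  ext_iff_mulVec.2 fun y ↦ by rw [← mulVec_mulVec, stdJ_mulVec_stdJ_mulVec, neg_mulVec, one_mulVec]

lemma stdJ_mul_stdJ_mul {n : ℕ} (A : Mat n) : stdJ n * (stdJ n * A) = -A := by
  rw [← mul_assoc, stdJ_mul_stdJ, neg_one_mul]

lemma transpose_stdJ (n : ℕ) : (stdJ n)ᵀ = -stdJ n := by
  ext i j
  by_cases h : i = conjIndex j
  · simp [stdJ, h, conjIndex_conjIndex, conjSign_conjIndex]
  · have h' : j ≠ conjIndex i := fun h' ↦ h (by rw [h', conjIndex_conjIndex])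
    simp [stdJ, h, h']

lemma isUnit_det_stdJ (n : ℕ) : IsUnit (stdJ n).det :=
  isUnit_det_of_left_inverse (B := -stdJ n) (by rw [neg_mul, stdJ_mul_stdJ, neg_neg])

lemma stdSympForm_eq_dotProduct {n : ℕ} (x y : Fin (2 * n) → ℝ) :
    stdSympForm n x y = x ⬝ᵥ (stdJ n *ᵥ y) := by
  rw [stdSympForm, dotProduct, ← (finProdFinEquiv.trans (finCongr (mul_comm n 2))).sum_comp,
    Fintype.sum_prod_type]
  refine Finset.sum_congr rfl fun k _ ↦ ?_
  have even_apply : finProdFinEquiv.trans (finCongr (mul_comm n 2)) (k, 0) =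
      ⟨2 * k, by omega⟩ := by ext; simp
  have odd_apply : finProdFinEquiv.trans (finCongr (mul_comm n 2)) (k, 1) =
      ⟨2 * k + 1, by omega⟩ := by ext; simp [add_comm]
  rw [Fin.sum_univ_two, stdJ_mulVec_apply, stdJ_mulVec_apply, even_apply, odd_apply]
  simp [conjIndex, conjSign]
  ring

lemma stdSympForm_vecMul {n : ℕ} (V : Mat n) (x y : Fin (2 * n) → ℝ) :
    stdSympForm n (x ᵥ* V) (y ᵥ* V) = x ⬝ᵥ ((V * stdJ n * Vᵀ) *ᵥ y) := by
  rw [stdSympForm_eq_dotProduct, ← mulVec_mulVec, ← mulVec_mulVec, ← mulVec_transpose V y,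
    ← dotProduct_mulVec]

lemma mem_Sp_iff_mul_stdJ_mul_transpose {n : ℕ} {V : Mat n} :
    V ∈ Sp n ↔ V * stdJ n * Vᵀ = stdJ n := by
  refine ⟨fun h ↦ ?_, fun h x y ↦ by rw [stdSympForm_vecMul, h, stdSympForm_eq_dotProduct]⟩
  ext i j
  have := h (Pi.single i 1) (Pi.single j 1)
  rw [stdSympForm_vecMul, stdSympForm_eq_dotProduct] at this
  simpa using this

lemma transpose_mul_stdJ_mul_of_mem_Sp {n : ℕ} {V : Mat n} (hV : V ∈ Sp n) :
    Vᵀ * stdJ n * V = stdJ n := by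
  have right_inv : V * (-(stdJ n * Vᵀ * stdJ n)) = 1 := by
    rw [mul_neg, ← mul_assoc, ← mul_assoc, mem_Sp_iff_mul_stdJ_mul_transpose.1 hV, stdJ_mul_stdJ,
      neg_neg]
  calc Vᵀ * stdJ n * V
      = stdJ n * (-(stdJ n * Vᵀ * stdJ n) * V) := by
        simp only [mul_assoc, neg_mul, mul_neg, stdJ_mul_stdJ_mul, neg_neg]
    _ = stdJ n := by rw [mul_eq_one_comm.1 right_inv, mul_one]

lemma transpose_mem_Sp {n : ℕ} {V : Mat n} (hV : V ∈ Sp n) : Vᵀ ∈ Sp n :=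
  mem_Sp_iff_mul_stdJ_mul_transpose.2 <| by
    rw [transpose_transpose, transpose_mul_stdJ_mul_of_mem_Sp hV]

lemma mem_Sp_iff_transpose_mul_stdJ_mul {n : ℕ} {V : Mat n} :
    V ∈ Sp n ↔ Vᵀ * stdJ n * V = stdJ n :=
  ⟨transpose_mul_stdJ_mul_of_mem_Sp, fun h ↦ V.transpose_transpose ▸ transpose_mem_Sp
    (mem_Sp_iff_mul_stdJ_mul_transpose.2 (by rwa [transpose_transpose]))⟩

namespace Sp

variable {n : ℕ}

lemma coe_mul_stdJ_mul_transpose (a : Sp n) : (a : Mat n) * stdJ n * (a : Mat n)ᵀ = stdJ n :=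
  mem_Sp_iff_mul_stdJ_mul_transpose.1 a.2

lemma transpose_mul_stdJ_mul_coe (a : Sp n) : (a : Mat n)ᵀ * stdJ n * (a : Mat n) = stdJ n :=
  mem_Sp_iff_transpose_mul_stdJ_mul.1 a.2

instance : Mul (Sp n) where
  mul a b := ⟨a * b, fun x y ↦ by simp only [← vecMul_vecMul]; rw [b.2, a.2]⟩

instance : One (Sp n) where
  one := ⟨1, fun x y ↦ by simp⟩

instance : Inv (Sp n) where
  inv a := ⟨-(stdJ n * (a : Mat n)ᵀ * stdJ n), mem_Sp_iff_mul_stdJ_mul_transpose.2 <| by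
    have h : (a : Mat n)ᵀ * (stdJ n * (a * stdJ n)) = -1 := by
      rw [← mul_assoc, ← mul_assoc, transpose_mul_stdJ_mul_coe, stdJ_mul_stdJ]
    simp [transpose_stdJ, mul_assoc, stdJ_mul_stdJ_mul, h]⟩

lemma coe_mul (a b : Sp n) : ((a * b : Sp n) : Mat n) = (a : Mat n) * b := rfl

lemma coe_one : ((1 : Sp n) : Mat n) = 1 := rfl

lemma coe_inv (a : Sp n) : ((a⁻¹ : Sp n) : Mat n) = -(stdJ n * (a : Mat n)ᵀ * stdJ n) := rfl

instance : Group (Sp n) where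
  mul_assoc a b c := Subtype.ext (mul_assoc (a : Mat n) b c)
  one_mul a := Subtype.ext (one_mul (a : Mat n))
  mul_one a := Subtype.ext (mul_one (a : Mat n))
  inv_mul_cancel a := Subtype.ext <| by
    rw [coe_mul, coe_inv, neg_mul, mul_assoc, mul_assoc, ← mul_assoc (a : Mat n)ᵀ,
      transpose_mul_stdJ_mul_coe, stdJ_mul_stdJ, neg_neg, coe_one]

instance : IsTopologicalGroup (Sp n) where
  continuous_mul := by
    refine continuous_induced_rng.2 ?_
    change Continuous fun x : Sp n × Sp n ↦ (x.1 : Mat n) * x.2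
    fun_prop
  continuous_inv := by
    refine continuous_induced_rng.2 ?_
    change Continuous fun x : Sp n ↦ -(stdJ n * (x : Mat n)ᵀ * stdJ n)
    fun_prop

lemma coe_inv_mul_coe (a : Sp n) : ((a⁻¹ : Sp n) : Mat n) * a = 1 := by
  rw [← coe_mul, inv_mul_cancel, coe_one]

lemma coe_mul_coe_inv (a : Sp n) : (a : Mat n) * (a⁻¹ : Sp n) = 1 := by
  rw [← coe_mul, mul_inv_cancel, coe_one]

lemma isUnit_det (a : Sp n) : IsUnit (a : Mat n).det :=
  isUnit_det_of_left_inverse (coe_inv_mul_coe a)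

/-- The rank of `a - 1`, whose constancy along a homotopy is what leaves the index unchanged. -/
def rankSubOne (a : Sp n) : ℕ := ((a : Mat n) - 1).rank

lemma rankSubOne_conj (g a : Sp n) : rankSubOne (g * a * g⁻¹) = rankSubOne a := by
  have h : ((g * a * g⁻¹ : Sp n) : Mat n) - 1 = g * ((a : Mat n) - 1) * (g⁻¹ : Sp n) := by
    rw [mul_sub, sub_mul, mul_one, coe_mul_coe_inv, coe_mul, coe_mul]
  rw [rankSubOne, h, rank_mul_eq_left_of_isUnit_det _ _ (isUnit_det _),
    rank_mul_eq_right_of_isUnit_det _ _ (isUnit_det _), rankSubOne]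

/-- `1` is not an eigenvalue. -/
def Nondegenerate (a : Sp n) : Prop := ((a : Mat n) - 1).det ≠ 0

lemma Nondegenerate.rankSubOne_eq {a : Sp n} (h : Nondegenerate a) : rankSubOne a = 2 * n := by
  rw [rankSubOne, rank_of_isUnit _ ((isUnit_iff_isUnit_det _).2 (isUnit_iff_ne_zero.2 h)),
    Fintype.card_fin]

end Sp

/-! ### Block sums and rotations -/

/-- Splitting the coordinates of `ℝ^{2(p+q)}` into the first `2p` and the last `2q`. -/
def blockEquiv (p q : ℕ) : Fin (2 * p) ⊕ Fin (2 * q) ≃ Fin (2 * (p + q)) :=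
  finSumFinEquiv.trans (finCongr (by ring))

/-- The block-diagonal sum, over any commutative ring, as an algebra homomorphism. -/
def blockHom (R : Type*) [CommRing R] (p q : ℕ) :
    Matrix (Fin (2 * p)) (Fin (2 * p)) R × Matrix (Fin (2 * q)) (Fin (2 * q)) R →ₐ[R]
      Matrix (Fin (2 * (p + q))) (Fin (2 * (p + q))) R :=
  (reindexAlgEquiv R R (blockEquiv p q)).toAlgHom.comp <|
    AlgHom.ofLinearMap
      { toFun := fun A ↦ fromBlocks A.1 0 0 A.2
        map_add' := fun A B ↦ by simp [fromBlocks_add]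
        map_smul' := fun c A ↦ by simp [fromBlocks_smul] }
      (by simp) fun A B ↦ by simp [fromBlocks_multiply]

section BlockHom

variable {R : Type*} [CommRing R] {p q : ℕ}
  (A : Matrix (Fin (2 * p)) (Fin (2 * p)) R) (B : Matrix (Fin (2 * q)) (Fin (2 * q)) R)

lemma blockHom_apply : blockHom R p q (A, B) =
    reindex (blockEquiv p q) (blockEquiv p q) (fromBlocks A 0 0 B) := rfl

lemma transpose_blockHom : (blockHom R p q (A, B))ᵀ = blockHom R p q (Aᵀ, Bᵀ) := by
  simp [blockHom_apply, fromBlocks_transpose]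

lemma det_blockHom : (blockHom R p q (A, B)).det = A.det * B.det := by
  rw [blockHom_apply, det_reindex_self, det_fromBlocks_zero₂₁]

lemma charpoly_blockHom : (blockHom R p q (A, B)).charpoly = A.charpoly * B.charpoly := by
  rw [blockHom_apply, charpoly_reindex, charpoly_fromBlocks_zero₁₂]

lemma mapMatrix_blockHom {S : Type*} [CommRing S] (f : R →+* S) :
    f.mapMatrix (blockHom R p q (A, B)) = blockHom S p q (f.mapMatrix A, f.mapMatrix B) := by
  ext i j
  obtain ⟨i, rfl⟩ := (blockEquiv p q).surjective i
  obtain ⟨j, rfl⟩ := (blockEquiv p q).surjective j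
  rcases i with i | i <;> rcases j with j | j <;> simp [blockHom_apply]

end BlockHom

lemma blockDiagSum_eq_blockHom {p q : ℕ} (A : Mat p) (B : Mat q) :
    blockDiagSum p q A B = blockHom ℝ p q (A, B) := by
  rw [blockHom_apply, ← Equiv.symm_apply_eq]
  have val_inl (i : Fin (2 * p)) : (blockEquiv p q (Sum.inl i) : ℕ) = i := by simp [blockEquiv]
  have val_inr (i : Fin (2 * q)) : (blockEquiv p q (Sum.inr i) : ℕ) = 2 * p + i := by
    simp [blockEquiv]
  ext i j
  rcases i with i | i <;> rcases j with j | j <;> simp [blockDiagSum, val_inl, val_inr]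

lemma blockHom_stdJ (p q : ℕ) : blockHom ℝ p q (stdJ p, stdJ q) = stdJ (p + q) := by
  rw [← blockDiagSum_eq_blockHom]
  ext i j
  simp only [blockDiagSum, stdJ, of_apply, conjIndex, conjSign, Fin.ext_iff]
  split_ifs <;> simp_all <;> omega

namespace Sp

variable {p q n : ℕ}

/-- The block-diagonal sum `a ⋄ b` of symplectic matrices. -/
def blockSum (a : Sp p) (b : Sp q) : Sp (p + q) :=
  ⟨blockHom ℝ p q (a, b), mem_Sp_iff_mul_stdJ_mul_transpose.2 <| by
    rw [transpose_blockHom, ← blockHom_stdJ, ← map_mul, ← map_mul, Prod.mk_mul_mk, Prod.mk_mul_mk,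
      coe_mul_stdJ_mul_transpose, coe_mul_stdJ_mul_transpose]⟩

lemma coe_blockSum (a : Sp p) (b : Sp q) :
    (blockSum a b : Mat (p + q)) = blockHom ℝ p q (a, b) := rfl

lemma blockSum_mul (a a' : Sp p) (b b' : Sp q) :
    blockSum (a * a') (b * b') = blockSum a b * blockSum a' b' :=
  Subtype.ext (map_mul (blockHom ℝ p q) ((a : Mat p), (b : Mat q)) ((a' : Mat p), (b' : Mat q)))

lemma blockSum_one : blockSum (1 : Sp p) (1 : Sp q) = 1 :=
  Subtype.ext (map_one (blockHom ℝ p q))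

@[fun_prop]
lemma continuous_blockSum {X : Type*} [TopologicalSpace X] {f : X → Sp p} {g : X → Sp q}
    (hf : Continuous f) (hg : Continuous g) : Continuous fun x ↦ blockSum (f x) (g x) :=
  continuous_induced_rng.2 <|
    ((continuous_subtype_val.comp hf).matrix_fromBlocks continuous_const continuous_const
      (continuous_subtype_val.comp hg)).matrix_reindex _ _

/-- The rotation `exp (θ J)`, by the angle `θ` in each plane `(q_k, p_k)`. -/
def rotation (n : ℕ) (θ : ℝ) : Sp n :=
  ⟨Real.cos θ • 1 + Real.sin θ • stdJ n, mem_Sp_iff_mul_stdJ_mul_transpose.2 <| by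
    simp only [transpose_add, transpose_smul, transpose_one, transpose_stdJ, add_mul, mul_add,
      smul_mul_assoc, one_mul, mul_one, mul_smul_comm, mul_neg, stdJ_mul_stdJ, neg_mul, smul_neg]
    match_scalars
    · linear_combination Real.cos_sq_add_sin_sq θ
    · ring⟩

lemma coe_rotation (θ : ℝ) : (rotation n θ : Mat n) = Real.cos θ • 1 + Real.sin θ • stdJ n := rfl

lemma rotation_add (θ θ' : ℝ) : rotation n (θ + θ') = rotation n θ * rotation n θ' := by
  refine Subtype.ext ?_
  rw [coe_mul, coe_rotation, coe_rotation, coe_rotation, Real.cos_add, Real.sin_add]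
  simp only [add_mul, mul_add, smul_mul_assoc, one_mul, mul_one, mul_smul_comm, stdJ_mul_stdJ]
  module

@[simp]
lemma rotation_zero : rotation n 0 = 1 := Subtype.ext (by simp [coe_rotation, coe_one])

lemma rotation_neg (θ : ℝ) : rotation n (-θ) = (rotation n θ)⁻¹ := by
  rw [eq_inv_iff_mul_eq_one, ← rotation_add, neg_add_cancel, rotation_zero]

@[fun_prop]
lemma continuous_rotation : Continuous (rotation n) :=
  continuous_induced_rng.2 <| by
    change Continuous fun θ ↦ Real.cos θ • (1 : Mat n) + Real.sin θ • stdJ n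
    fun_prop

lemma blockSum_rotation (θ : ℝ) :
    blockSum (rotation p θ) (rotation q θ) = rotation (p + q) θ := by
  refine Subtype.ext ?_
  rw [coe_blockSum, coe_rotation, coe_rotation, coe_rotation, ← blockHom_stdJ,
    ← map_one (blockHom ℝ p q), ← map_smul, ← map_smul, ← map_add]
  rfl

end Sp

/-! ### The Cayley transform into the unitary group -/

/-- `2n × 2n` complex matrices. -/
abbrev CMat (n : ℕ) := Matrix (Fin (2 * n)) (Fin (2 * n)) ℂ

/-- Real matrices viewed as complex ones. -/
abbrev complexify (n : ℕ) : Mat n →+* CMat n := Complex.ofRealHom.mapMatrix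

lemma rank_mapMatrix {m K L : Type*} [Fintype m] [DecidableEq m] [Field K] [Field L]
    (f : K →+* L) (A : Matrix m m K) : (f.mapMatrix A).rank = A.rank := by
  classical
  obtain ⟨T, T', D, hA⟩ := Pivot.exists_list_transvec_mul_diagonal_mul_list_transvec A
  have isUnit_transvec (T : List (TransvectionStruct m K)) :
      IsUnit (T.map TransvectionStruct.toMatrix).prod.det := by
    rw [TransvectionStruct.det_toMatrix_prod]
    exact isUnit_one
  have isUnit_map (B : Matrix m m K) (hB : IsUnit B.det) : IsUnit (f.mapMatrix B).det := by
    rw [← RingHom.map_det]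
    exact hB.map f
  rw [hA, map_mul, map_mul, rank_mul_eq_left_of_isUnit_det _ _ (isUnit_map _ (isUnit_transvec _)),
    rank_mul_eq_right_of_isUnit_det _ _ (isUnit_map _ (isUnit_transvec _)),
    rank_mul_eq_left_of_isUnit_det _ _ (isUnit_transvec _),
    rank_mul_eq_right_of_isUnit_det _ _ (isUnit_transvec _), RingHom.mapMatrix_apply,
    diagonal_map (map_zero f), rank_diagonal, rank_diagonal]
  simp

lemma conjTranspose_complexify {n : ℕ} (A : Mat n) :
    (complexify n A)ᴴ = complexify n Aᵀ := by
  ext i j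
  simp [conjTranspose_apply]

@[fun_prop]
lemma continuous_complexify {n : ℕ} : Continuous (complexify n) :=
  continuous_id.matrix_map Complex.continuous_ofReal

lemma conjTranspose_mul_self_add_I_smul {n : ℕ} {X Y : Mat n} (h : Xᵀ * Y = Yᵀ * X) :
    (complexify n X + Complex.I • complexify n Y)ᴴ *
      (complexify n X + Complex.I • complexify n Y) = complexify n (Xᵀ * X + Yᵀ * Y) := by
  have h' := congrArg (complexify n) h
  rw [map_mul, map_mul] at h'
  rw [conjTranspose_add, conjTranspose_smul, conjTranspose_complexify, conjTranspose_complexify,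
    Complex.star_def, Complex.conj_I, map_add, map_mul, map_mul]
  simp only [add_mul, mul_add, smul_mul_assoc, mul_smul_comm, h']
  match_scalars <;> simp

namespace Sp

variable {n p q : ℕ}

/-- The denominator `(a + 1) + i J (a - 1)` of the Cayley transform. -/
def cayleyDenom (a : Sp n) : CMat n :=
  complexify n ((a : Mat n) + 1) + Complex.I • complexify n (stdJ n * ((a : Mat n) - 1))

/-- The numerator `(a + 1) - i J (a - 1)` of the Cayley transform. -/
def cayleyNum (a : Sp n) : CMat n :=
  complexify n ((a : Mat n) + 1) - Complex.I • complexify n (stdJ n * ((a : Mat n) - 1))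

lemma transpose_add_one_mul_comm (a : Sp n) :
    (a.1 + 1)ᵀ * (stdJ n * (a.1 - 1)) = (stdJ n * (a.1 - 1))ᵀ * (a.1 + 1) := by
  have h := transpose_mul_stdJ_mul_coe a
  rw [mul_assoc] at h
  simp only [transpose_add, transpose_mul, transpose_sub, transpose_one, transpose_stdJ, add_mul,
    mul_add, mul_sub, sub_mul, mul_one, one_mul, mul_neg, neg_mul, mul_assoc, h]
  abel

lemma transpose_mul_self_add_transpose_mul_self (a : Sp n) :
    (a.1 + 1)ᵀ * (a.1 + 1) + (stdJ n * (a.1 - 1))ᵀ * (stdJ n * (a.1 - 1)) =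
      2 • (a.1ᵀ * a.1 + 1) := by
  simp only [transpose_add, transpose_mul, transpose_sub, transpose_one, transpose_stdJ, add_mul,
    mul_add, mul_sub, sub_mul, mul_one, one_mul, mul_neg, neg_mul, mul_assoc, stdJ_mul_stdJ_mul,
    stdJ_mul_stdJ, two_smul]
  abel

lemma conjTranspose_cayleyDenom_mul_self (a : Sp n) :
    (cayleyDenom a)ᴴ * cayleyDenom a = complexify n (2 • (a.1ᵀ * a.1 + 1)) := by
  rw [cayleyDenom, conjTranspose_mul_self_add_I_smul (transpose_add_one_mul_comm a),
    transpose_mul_self_add_transpose_mul_self]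

lemma conjTranspose_cayleyNum_mul_self (a : Sp n) :
    (cayleyNum a)ᴴ * cayleyNum a = complexify n (2 • (a.1ᵀ * a.1 + 1)) := by
  have h := conjTranspose_mul_self_add_I_smul (X := a.1 + 1) (Y := -(stdJ n * (a.1 - 1)))
    (by rw [mul_neg, transpose_neg, neg_mul, transpose_add_one_mul_comm])
  rwa [map_neg, smul_neg, ← sub_eq_add_neg, transpose_neg, neg_mul_neg,
    transpose_mul_self_add_transpose_mul_self] at h

lemma isUnit_det_cayleyDenom (a : Sp n) : IsUnit (cayleyDenom a).det := by
  have posDef : (2 • ((a : Mat n)ᵀ * (a : Mat n) + 1)).PosDef := by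
    have := PosDef.one.add_posSemidef (posSemidef_conjTranspose_mul_self (a : Mat n))
    rw [conjTranspose_eq_transpose_of_trivial, add_comm] at this
    rw [two_smul]
    exact this.add this
  refine isUnit_iff_ne_zero.2 fun h ↦ posDef.det_pos.ne' ?_
  have := congrArg det (conjTranspose_cayleyDenom_mul_self a)
  rw [det_mul, h, mul_zero, ← RingHom.map_det] at this
  exact Complex.ofReal_eq_zero.1 this.symm

/-- The Cayley transform `a ↦ ((a + 1) - i J (a - 1)) ((a + 1) + i J (a - 1))⁻¹`, which is unitary
and has the same kernel dimension of `· - 1` as `a`. -/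
def cayley (a : Sp n) : CMat n := cayleyNum a * (cayleyDenom a)⁻¹

lemma cayley_mul_cayleyDenom (a : Sp n) : cayley a * cayleyDenom a = cayleyNum a := by
  rw [cayley, mul_assoc, nonsing_inv_mul _ (isUnit_det_cayleyDenom a), mul_one]

lemma eq_cayley_of_mul_cayleyDenom {a : Sp n} {W : CMat n} (h : W * cayleyDenom a = cayleyNum a) :
    W = cayley a := by
  rw [cayley, ← h, mul_assoc, mul_nonsing_inv _ (isUnit_det_cayleyDenom a), mul_one]

lemma cayley_mem_unitaryGroup (a : Sp n) : cayley a ∈ unitaryGroup (Fin (2 * n)) ℂ := by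
  rw [mem_unitaryGroup_iff', star_eq_conjTranspose]
  calc (cayley a)ᴴ * cayley a
      = (cayleyDenom a)⁻¹ᴴ * ((cayleyNum a)ᴴ * cayleyNum a) * (cayleyDenom a)⁻¹ := by
        simp only [cayley, conjTranspose_mul, mul_assoc]
    _ = (cayleyDenom a * (cayleyDenom a)⁻¹)ᴴ * (cayleyDenom a * (cayleyDenom a)⁻¹) := by
        rw [conjTranspose_cayleyNum_mul_self, ← conjTranspose_cayleyDenom_mul_self]
        simp only [conjTranspose_mul, mul_assoc]
    _ = 1 := by
        rw [mul_nonsing_inv _ (isUnit_det_cayleyDenom a), conjTranspose_one, one_mul]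

@[fun_prop]
lemma continuous_cayley : Continuous (cayley (n := n)) := by
  have continuous_denom : Continuous (cayleyDenom (n := n)) := by unfold cayleyDenom; fun_prop
  have continuous_num : Continuous (cayleyNum (n := n)) := by unfold cayleyNum; fun_prop
  unfold cayley
  refine continuous_num.matrix_mul ?_
  simp only [inv_def, Ring.inverse_eq_inv']
  exact (continuous_denom.matrix_det.inv₀ fun a ↦ (isUnit_det_cayleyDenom a).ne_zero).smul
    continuous_denom.matrix_adjugate

lemma cayley_one : cayley (1 : Sp n) = 1 :=
  (eq_cayley_of_mul_cayleyDenom (by simp [cayleyNum, cayleyDenom, coe_one])).symm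

lemma rank_cayley_sub_one (a : Sp n) : (cayley a - 1).rank = rankSubOne a := by
  have h : (cayley a - 1) * cayleyDenom a =
      complexify n (stdJ n * ((a : Mat n) - 1)) * Matrix.diagonal fun _ ↦ -2 * Complex.I := by
    rw [sub_mul, cayley_mul_cayleyDenom, one_mul, ← smul_eq_mul_diagonal, cayleyNum, cayleyDenom]
    module
  rw [← rank_mul_eq_left_of_isUnit_det _ (cayley a - 1) (isUnit_det_cayleyDenom a), h,
    rank_mul_eq_left_of_isUnit_det, rank_mapMatrix,
    rank_mul_eq_right_of_isUnit_det _ _ (isUnit_det_stdJ n), rankSubOne]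
  rw [isUnit_iff_ne_zero]
  simp

lemma complexify_coe_blockSum_add_one (a : Sp p) (b : Sp q) :
    complexify (p + q) ((blockSum a b : Mat (p + q)) + 1) =
      blockHom ℂ p q (complexify p ((a : Mat p) + 1), complexify q ((b : Mat q) + 1)) := by
  rw [← mapMatrix_blockHom, coe_blockSum, ← map_one (blockHom ℝ p q), ← map_add]
  rfl

lemma complexify_stdJ_mul_coe_blockSum_sub_one (a : Sp p) (b : Sp q) :
    complexify (p + q) (stdJ (p + q) * ((blockSum a b : Mat (p + q)) - 1)) =
      blockHom ℂ p q
        (complexify p (stdJ p * ((a : Mat p) - 1)), complexify q (stdJ q * ((b : Mat q) - 1))) := by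
  rw [← mapMatrix_blockHom, coe_blockSum, ← map_one (blockHom ℝ p q), ← map_sub, ← blockHom_stdJ,
    ← map_mul]
  rfl

lemma cayley_blockSum (a : Sp p) (b : Sp q) :
    cayley (blockSum a b) = blockHom ℂ p q (cayley a, cayley b) := by
  refine (eq_cayley_of_mul_cayleyDenom ?_).symm
  rw [cayleyDenom, cayleyNum, complexify_coe_blockSum_add_one,
    complexify_stdJ_mul_coe_blockSum_sub_one, ← map_smul, ← map_add, ← map_mul, ← map_sub]
  exact congrArg (blockHom ℂ p q)
    (Prod.ext (cayley_mul_cayleyDenom a) (cayley_mul_cayleyDenom b))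

/-- The determinant of the Cayley transform, as a point of the unit circle. -/
def detCayley (a : Sp n) : Circle :=
  ⟨(cayley a).det, mem_sphere_zero_iff_norm.2 <|
    CStarRing.norm_of_mem_unitary (det_of_mem_unitary (cayley_mem_unitaryGroup a))⟩

lemma coe_detCayley (a : Sp n) : (detCayley a : ℂ) = (cayley a).det := rfl

lemma continuous_detCayley : Continuous (detCayley (n := n)) :=
  continuous_induced_rng.2 continuous_cayley.matrix_det

lemma detCayley_one : detCayley (1 : Sp n) = 1 :=
  Circle.ext (by rw [coe_detCayley, cayley_one, det_one, Circle.coe_one])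

lemma detCayley_blockSum (a : Sp p) (b : Sp q) :
    detCayley (blockSum a b) = detCayley a * detCayley b :=
  Circle.ext (by rw [coe_detCayley, cayley_blockSum, det_blockHom]; rfl)

end Sp

/-! ### Sums over the spectrum of a unitary matrix -/

section Roots

open Filter Topology Polynomial

lemma exists_eq_map_univ_val {α : Type*} (s : Multiset α) {d : ℕ} (h : s.card = d) :
    ∃ z : Fin d → α, s = Finset.univ.val.map z := by
  subst h
  rcases s with ⟨l⟩
  exact ⟨l.get, ((Fin.univ_val_map _).trans (congrArg _ (List.ofFn_get l))).symm⟩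

lemma eval_eq_prod_of_roots_eq {k : Type*} [Field k] [IsAlgClosed k] {d : ℕ} {p : k[X]}
    (hp : p.Monic) {z : Fin d → k} (h : p.roots = Finset.univ.val.map z) (c : k) :
    p.eval c = ∏ i, (c - z i) := by
  rw [(IsAlgClosed.splits p).eq_prod_roots_of_monic hp, h, Multiset.map_map, eval_multiset_prod,
    Multiset.map_map, Finset.prod]
  simp only [Function.comp_def, eval_sub, eval_X, eval_C]

/-- Continuity of roots, in the form convenient for taking limits along ultrafilters. -/
lemma exists_tendsto_roots {ι k : Type*} [Field k] [IsAlgClosed k] [TopologicalSpace k]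
    [IsTopologicalRing k] [T2Space k] (U : Ultrafilter ι) {p : ι → k[X]} {q : k[X]} {d : ℕ}
    {K : Set k} (hp : ∀ x, (p x).Monic) (hd : ∀ x, (p x).natDegree = d) (hK : IsCompact K)
    (hpK : ∀ x, ∀ z ∈ (p x).roots, z ∈ K)
    (hlim : ∀ c, Tendsto (fun x ↦ (p x).eval c) U (𝓝 (q.eval c))) :
    ∃ (z : ι → Fin d → k) (ζ : Fin d → k), (∀ x, (p x).roots = Finset.univ.val.map (z x)) ∧
      q.roots = Finset.univ.val.map ζ ∧ ∀ i, Tendsto (fun x ↦ z x i) U (𝓝 (ζ i)) := by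
  choose z hz using fun x ↦ exists_eq_map_univ_val (p x).roots
    ((IsAlgClosed.splits (p x)).natDegree_eq_card_roots.symm.trans (hd x))
  have z_mem (x i) : z x i ∈ K :=
    hpK x _ (by rw [hz x]; exact Multiset.mem_map_of_mem _ (Finset.mem_univ i))
  have exists_lim (i) : ∃ ζ, Tendsto (fun x ↦ z x i) U (𝓝 ζ) := by
    obtain ⟨ζ, -, hζ⟩ := isCompact_iff_ultrafilter_le_nhds.1 hK (U.map (z · i))
      (le_principal_iff.2 (mem_map.2 (Eventually.of_forall (z_mem · i))))
    exact ⟨ζ, hζ⟩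
  choose ζ hζ using exists_lim
  refine ⟨z, ζ, hz, ?_, hζ⟩
  have hq : q = ∏ i, (X - C (ζ i)) := by
    have : Infinite k := IsAlgClosed.instInfinite
    refine Polynomial.funext fun c ↦ tendsto_nhds_unique (hlim c) ?_
    simp only [eval_prod, eval_sub, eval_X, eval_C, eval_eq_prod_of_roots_eq (hp _) (hz _)]
    exact tendsto_finsetProd _ fun i _ ↦ tendsto_const_nhds.sub (hζ i)
  rw [hq, roots_prod _ _ (Finset.prod_ne_zero_iff.2 fun i _ ↦ X_sub_C_ne_zero _)]
  simp only [roots_X_sub_C]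
  exact Multiset.bind_singleton _ _

end Roots

section SpectrumOfMatrix

variable {m : Type*} [Fintype m]

open ComplexOrder in
lemma mulVec_eq_zero_of_isStarNormal {N : Matrix m m ℂ} (hN : IsStarNormal N) {v : m → ℂ}
    (h : N *ᵥ (N *ᵥ v) = 0) : N *ᵥ v = 0 := by
  have normal : Nᴴ * N = N * Nᴴ := hN.star_comm_self
  rw [← conjTranspose_mul_self_mulVec_eq_zero, normal, self_mul_conjTranspose_mulVec_eq_zero,
    mulVec_mulVec, conjTranspose_mul_self_mulVec_eq_zero] at h
  exact h

variable [DecidableEq m]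

open scoped Matrix.Norms.L2Operator in
lemma norm_eq_one_of_mem_roots_charpoly {W : Matrix m m ℂ} (hW : W ∈ unitaryGroup m ℂ) {z : ℂ}
    (hz : z ∈ W.charpoly.roots) : ‖z‖ = 1 :=
  spectrum.norm_eq_one_of_unitary hW
    (mem_spectrum_iff_isRoot_charpoly.2 (Polynomial.isRoot_of_mem_roots hz))

lemma mem_maxGenEigenspace_iff_of_isStarNormal {A : Matrix m m ℂ} (hA : IsStarNormal A) (μ : ℂ)
    {v : m → ℂ} : v ∈ Module.End.maxGenEigenspace (toLin' A) μ ↔ (A - μ • 1) *ᵥ v = 0 := by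
  have hN : IsStarNormal (A - μ • 1) := by
    have : IsStarNormal (μ • 1 : Matrix m m ℂ) := by
      refine ⟨?_⟩
      rw [star_smul, star_one]
      exact (Commute.one_left _).smul_left _
    refine Commute.isStarNormal_sub ?_
    rw [star_smul, star_one]
    exact (Commute.one_right A).smul_right _
  have toLin'_sub : toLin' A - μ • (1 : Module.End ℂ (m → ℂ)) = toLin' (A - μ • 1) := by
    rw [map_sub, map_smul, toLin'_one]; rfl
  rw [Module.End.mem_maxGenEigenspace, toLin'_sub]
  refine ⟨fun ⟨k, hk⟩ ↦ ?_, fun h ↦ ⟨1, by rwa [pow_one, toLin'_apply]⟩⟩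
  induction k with
  | zero => rw [show v = 0 from hk, mulVec_zero]
  | succ k ih =>
    rcases k with _ | k
    · rwa [zero_add, pow_one, toLin'_apply] at hk
    · rw [pow_succ', pow_succ', Module.End.mul_apply, Module.End.mul_apply] at hk
      exact ih (by rw [pow_succ']; exact mulVec_eq_zero_of_isStarNormal hN hk)

lemma rootMultiplicity_charpoly_add_rank {A : Matrix m m ℂ} (hA : IsStarNormal A) (μ : ℂ) :
    A.charpoly.rootMultiplicity μ + (A - μ • 1).rank = Fintype.card m := by
  have ker_eq : LinearMap.ker (A - μ • 1).mulVecLin = Module.End.maxGenEigenspace (toLin' A) μ :=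
    Submodule.ext fun _ ↦ (mem_maxGenEigenspace_iff_of_isStarNormal hA μ).symm
  have := LinearMap.finrank_range_add_finrank_ker (A - μ • 1).mulVecLin
  rw [ker_eq, LinearMap.finrank_maxGenEigenspace_eq, charpoly_toLin', add_comm,
    Module.finrank_fintype_fun_eq_card] at this
  exact this

end SpectrumOfMatrix

section Angles

open Complex Real ComplexConjugate

/-- The angle in `(0, 2π]` of a point of the unit circle; it jumps at `1`, where it is `2π`. -/
def angleIoc (z : ℂ) : ℝ := arg (-z) + π

/-- The angle in `[0, 2π)` of a point of the unit circle; it jumps at `1`, where it is `0`. -/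
def angleIco (z : ℂ) : ℝ := 2 * π - angleIoc (conj z)

lemma exp_angleIoc {z : ℂ} (hz : ‖z‖ = 1) : Complex.exp (angleIoc z * I) = z := by
  have := norm_mul_exp_arg_mul_I (-z)
  rw [norm_neg, hz, ofReal_one, one_mul] at this
  rw [angleIoc, ofReal_add, add_mul, Complex.exp_add, exp_pi_mul_I, this, mul_neg_one, neg_neg]

lemma angleIoc_one : angleIoc 1 = 2 * π := by rw [angleIoc, arg_neg_one]; ring

lemma angleIco_one : angleIco 1 = 0 := by rw [angleIco, map_one, angleIoc_one, sub_self]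

open ComplexOrder in
lemma neg_mem_slitPlane {z : ℂ} (hz : ‖z‖ = 1) (h1 : z ≠ 1) : -z ∈ slitPlane := by
  refine mem_slitPlane_iff_not_le_zero.2 fun h ↦ h1 ?_
  have hle : 0 ≤ z := neg_nonpos.1 h
  rw [eq_coe_norm_of_nonneg hle, hz, ofReal_one]

lemma angleIco_eq_angleIoc {z : ℂ} (hz : ‖z‖ = 1) (h1 : z ≠ 1) : angleIco z = angleIoc z := by
  rw [angleIco, angleIoc, angleIoc, ← map_neg, arg_conj,
    if_neg (slitPlane_arg_ne_pi (neg_mem_slitPlane hz h1))]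
  ring

lemma continuousAt_angleIoc {z : ℂ} (hz : ‖z‖ = 1) (h1 : z ≠ 1) : ContinuousAt angleIoc z :=
  (ContinuousAt.comp (g := arg) (continuousAt_arg (neg_mem_slitPlane hz h1))
    continuous_neg.continuousAt).add continuousAt_const

/-- The unit circle minus an open arc going counterclockwise from `1`. -/
def lowerArc (ε : ℝ) : Set ℂ := {z | ‖z‖ = 1 ∧ (z.im ≤ 0 ∨ z.re ≤ 1 - ε)}

/-- The unit circle minus an open arc going clockwise from `1`. -/
def upperArc (ε : ℝ) : Set ℂ := {z | ‖z‖ = 1 ∧ (0 ≤ z.im ∨ z.re ≤ 1 - ε)}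

lemma isClosed_lowerArc (ε : ℝ) : IsClosed (lowerArc ε) :=
  (isClosed_eq continuous_norm continuous_const).inter <|
    (isClosed_le continuous_im continuous_const).union (isClosed_le continuous_re continuous_const)

lemma isClosed_upperArc (ε : ℝ) : IsClosed (upperArc ε) :=
  (isClosed_eq continuous_norm continuous_const).inter <|
    (isClosed_le continuous_const continuous_im).union (isClosed_le continuous_re continuous_const)

lemma continuousWithinAt_angleIoc_one : ContinuousWithinAt angleIoc {z | z.im ≤ 0} 1 := by
  refine ContinuousWithinAt.add ?_ continuousWithinAt_const
  exact ContinuousWithinAt.comp (g := arg)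
    (continuousWithinAt_arg_of_re_neg_of_im_zero (z := -1) (by simp) (by simp))
    continuous_neg.continuousWithinAt fun w hw ↦ by simpa using hw

lemma continuousOn_angleIoc {ε : ℝ} (hε : 0 < ε) : ContinuousOn angleIoc (lowerArc ε) := by
  intro z hz
  by_cases h1 : z = 1
  · subst h1
    refine continuousWithinAt_angleIoc_one.mono_of_mem_nhdsWithin ?_
    have near : {w : ℂ | 1 - ε < w.re} ∈ nhds 1 :=
      (isOpen_lt continuous_const continuous_re).mem_nhds (by simp [hε])
    filter_upwards [mem_nhdsWithin_of_mem_nhds near, self_mem_nhdsWithin] with w hw hw'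
    exact hw'.2.resolve_right (not_le.2 hw)
  · exact (continuousAt_angleIoc hz.1 h1).continuousWithinAt

lemma continuousOn_angleIco {ε : ℝ} (hε : 0 < ε) : ContinuousOn angleIco (upperArc ε) :=
  continuousOn_const.sub <| (continuousOn_angleIoc hε).comp continuous_conj.continuousOn
    fun z hz ↦ ⟨by simpa using hz.1, by simpa using hz.2⟩

end Angles

section SpectralSum

open Filter Topology Complex Real

variable {m : Type*} [Fintype m] [DecidableEq m]

/-- The sum of `g` over the eigenvalues of `W`, counted with algebraic multiplicity. -/
def spectralSum (g : ℂ → ℝ) (W : Matrix m m ℂ) : ℝ := (W.charpoly.roots.map g).sum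

lemma spectralSum_eq_sum {g : ℂ → ℝ} {W : Matrix m m ℂ} {d : ℕ} {z : Fin d → ℂ}
    (h : W.charpoly.roots = Finset.univ.val.map z) : spectralSum g W = ∑ i, g (z i) := by
  rw [spectralSum, h, Multiset.map_map]; rfl

lemma spectralSum_blockHom (g : ℂ → ℝ) {p q : ℕ} (A : CMat p) (B : CMat q) :
    spectralSum g (blockHom ℂ p q (A, B)) = spectralSum g A + spectralSum g B := by
  rw [spectralSum, charpoly_blockHom, Polynomial.roots_mul, Multiset.map_add, Multiset.sum_add]
  · rfl
  · exact mul_ne_zero (charpoly_monic A).ne_zero (charpoly_monic B).ne_zero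

lemma exp_spectralSum_angleIoc {W : Matrix m m ℂ} (hW : W ∈ unitaryGroup m ℂ) :
    Complex.exp (spectralSum angleIoc W * I) = W.det := by
  have norm_root (z) (hz : z ∈ W.charpoly.roots) : ‖z‖ = 1 :=
    norm_eq_one_of_mem_roots_charpoly hW hz
  rw [det_eq_prod_roots_charpoly, spectralSum]
  generalize W.charpoly.roots = s at norm_root
  induction s using Multiset.induction_on with
  | empty => simp
  | cons a s ih =>
    rw [Multiset.map_cons, Multiset.sum_cons, Multiset.prod_cons, ofReal_add, add_mul,
      Complex.exp_add, exp_angleIoc (norm_root a (Multiset.mem_cons_self a s)),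
      ih fun z hz ↦ norm_root z (Multiset.mem_cons_of_mem hz)]

lemma spectralSum_angleIco {W : Matrix m m ℂ} (hW : W ∈ unitaryGroup m ℂ) :
    spectralSum angleIco W =
      spectralSum angleIoc W - 2 * π * W.charpoly.rootMultiplicity 1 := by
  classical
  have norm_root (z) (hz : z ∈ W.charpoly.roots) : ‖z‖ = 1 :=
    norm_eq_one_of_mem_roots_charpoly hW hz
  rw [← Polynomial.count_roots, spectralSum, spectralSum]
  generalize W.charpoly.roots = s at norm_root
  induction s using Multiset.induction_on with
  | empty => simp
  | cons a s ih =>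
    rw [Multiset.map_cons, Multiset.sum_cons, Multiset.map_cons, Multiset.sum_cons,
      ih fun z hz ↦ norm_root z (Multiset.mem_cons_of_mem hz), Multiset.count_cons]
    by_cases h : 1 = a
    · rw [← h, angleIco_one, angleIoc_one, if_pos rfl]; push_cast; ring
    · rw [angleIco_eq_angleIoc (norm_root a (Multiset.mem_cons_self a s)) (Ne.symm h), if_neg h]
      rw [add_zero]; ring

variable {ι : Type*} {W : ι → Matrix m m ℂ} {V : Matrix m m ℂ}

lemma exists_tendsto_eigenvalues (U : Ultrafilter ι) (hW : ∀ x, W x ∈ unitaryGroup m ℂ)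
    (hlim : Tendsto W U (𝓝 V)) :
    ∃ (z : ι → Fin (Fintype.card m) → ℂ) (ζ : Fin (Fintype.card m) → ℂ),
      (∀ x, (W x).charpoly.roots = Finset.univ.val.map (z x)) ∧
      V.charpoly.roots = Finset.univ.val.map ζ ∧ ∀ i, Tendsto (fun x ↦ z x i) U (𝓝 (ζ i)) := by
  refine exists_tendsto_roots U (fun x ↦ charpoly_monic (W x))
    (fun x ↦ charpoly_natDegree_eq_dim (W x)) (isCompact_sphere (0 : ℂ) 1)
    (fun x z hz ↦ by simpa using norm_eq_one_of_mem_roots_charpoly (hW x) hz) fun c ↦ ?_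
  simp only [eval_charpoly]
  have : Continuous fun A : Matrix m m ℂ ↦ (scalar m c - A).det := by fun_prop
  exact (this.tendsto V).comp hlim

variable {l : Filter ι}

lemma tendsto_spectralSum_of_isClosed (hW : ∀ x, W x ∈ unitaryGroup m ℂ)
    (hlim : Tendsto W l (𝓝 V)) {S : Set ℂ} (hS : IsClosed S) {g : ℂ → ℝ} (hg : ContinuousOn g S)
    (hWS : ∀ᶠ x in l, ∀ z ∈ (W x).charpoly.roots, z ∈ S) :
    Tendsto (fun x ↦ spectralSum g (W x)) l (𝓝 (spectralSum g V)) := by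
  refine (tendsto_iff_ultrafilter _ _ _).2 fun U hU ↦ ?_
  obtain ⟨z, ζ, hz, hζ, hzζ⟩ := exists_tendsto_eigenvalues U hW (hlim.mono_left hU)
  simp only [spectralSum_eq_sum (hz _), spectralSum_eq_sum hζ]
  refine tendsto_finsetSum _ fun i _ ↦ ?_
  have z_mem : ∀ᶠ x in (U : Filter ι), z x i ∈ S := by
    filter_upwards [hU hWS] with x hx
    exact hx _ (by rw [hz]; exact Multiset.mem_map_of_mem _ (Finset.mem_univ i))
  exact (hg _ (hS.mem_of_tendsto (hzζ i) z_mem)).tendsto.comp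
    (tendsto_nhdsWithin_iff.2 ⟨hzζ i, z_mem⟩)

lemma eventually_eq_of_card_filter_eq {α d : Type*} [TopologicalSpace α] [T1Space α]
    [DecidableEq α] [Fintype d] {z : ι → d → α} {ζ : d → α}
    (hzζ : ∀ i, Tendsto (fun x ↦ z x i) l (𝓝 (ζ i))) {c : α}
    (hcard : ∀ᶠ x in l, (Finset.univ.filter (c = z x ·)).card = (Finset.univ.filter (c = ζ ·)).card)
    (i : d) (hi : c = ζ i) : ∀ᶠ x in l, c = z x i := by
  have stays_away : ∀ᶠ x in l, ∀ j, c ≠ ζ j → c ≠ z x j := by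
    refine eventually_all.2 fun j ↦ ?_
    by_cases h : c = ζ j
    · exact Eventually.of_forall fun _ h' ↦ absurd h h'
    · filter_upwards [(hzζ j).eventually_ne (Ne.symm h)] with x hx _ using hx.symm
  filter_upwards [stays_away, hcard] with x hx hxcard
  have subset : Finset.univ.filter (c = z x ·) ⊆ Finset.univ.filter (c = ζ ·) :=
    Finset.monotone_filter_right _ fun j _ hj ↦ by_contra fun h ↦ hx j h hj
  have : i ∈ Finset.univ.filter (c = z x ·) := by
    rw [Finset.eq_of_subset_of_card_le subset hxcard.ge]
    exact Finset.mem_filter.2 ⟨Finset.mem_univ i, hi⟩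
  exact (Finset.mem_filter.1 this).2

lemma tendsto_spectralSum_angleIoc (hW : ∀ x, W x ∈ unitaryGroup m ℂ) (hV : V ∈ unitaryGroup m ℂ)
    (hlim : Tendsto W l (𝓝 V))
    (hmult : ∀ᶠ x in l, (W x).charpoly.rootMultiplicity 1 = V.charpoly.rootMultiplicity 1) :
    Tendsto (fun x ↦ spectralSum angleIoc (W x)) l (𝓝 (spectralSum angleIoc V)) := by
  classical
  refine (tendsto_iff_ultrafilter _ _ _).2 fun U hU ↦ ?_
  obtain ⟨z, ζ, hz, hζ, hzζ⟩ := exists_tendsto_eigenvalues U hW (hlim.mono_left hU)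
  simp only [spectralSum_eq_sum (hz _), spectralSum_eq_sum hζ]
  refine tendsto_finsetSum _ fun i _ ↦ ?_
  by_cases hi : 1 = ζ i
  · refine tendsto_const_nhds.congr' ?_
    refine (eventually_eq_of_card_filter_eq hzζ ?_ i hi).mono fun x hx ↦ by simp only [← hx, ← hi]
    simp only [← Polynomial.count_roots, hz, hζ, Multiset.count_map] at hmult
    exact hU hmult
  · refine (continuousAt_angleIoc ?_ (Ne.symm hi)).tendsto.comp (hzζ i)
    refine norm_eq_one_of_mem_roots_charpoly hV ?_
    rw [hζ]
    exact Multiset.mem_map_of_mem _ (Finset.mem_univ i)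

end SpectralSum

namespace Sp

open Filter Topology Real

/-- The sum of the angles in `(0, 2π]` of the eigenvalues of the Cayley transform. Jumps of this
branch of the argument of `detCayley` are the crossings counted by the index. -/
def spectralAngle {n : ℕ} (a : Sp n) : ℝ := spectralSum angleIoc (cayley a)

lemma rootMultiplicity_one_cayley {n : ℕ} (a : Sp n) :
    (cayley a).charpoly.rootMultiplicity 1 + rankSubOne a = 2 * n := by
  have normal : IsStarNormal (cayley a) :=
    Unitary.coe_isStarNormal ⟨cayley a, cayley_mem_unitaryGroup a⟩
  have := rootMultiplicity_charpoly_add_rank normal 1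
  rwa [one_smul, rank_cayley_sub_one, Fintype.card_fin] at this

lemma exp_spectralAngle {n : ℕ} (a : Sp n) : Circle.exp (spectralAngle a) = detCayley a :=
  Circle.ext (exp_spectralSum_angleIoc (cayley_mem_unitaryGroup a))

lemma spectralAngle_blockSum {p q : ℕ} (a : Sp p) (b : Sp q) :
    spectralAngle (blockSum a b) = spectralAngle a + spectralAngle b := by
  rw [spectralAngle, cayley_blockSum, spectralSum_blockHom]; rfl

lemma continuous_spectralAngle {X : Type*} [TopologicalSpace X] {n : ℕ} {f : X → Sp n}
    (hf : Continuous f) (hrank : ∀ x y, rankSubOne (f x) = rankSubOne (f y)) :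
    Continuous fun x ↦ spectralAngle (f x) := by
  refine continuous_iff_continuousAt.2 fun x₀ ↦ tendsto_spectralSum_angleIoc
    (fun x ↦ cayley_mem_unitaryGroup (f x)) (cayley_mem_unitaryGroup (f x₀))
    ((continuous_cayley.comp hf).tendsto x₀) (Eventually.of_forall fun x ↦ ?_)
  have := rootMultiplicity_one_cayley (f x)
  have := rootMultiplicity_one_cayley (f x₀)
  have := hrank x x₀
  omega

end Sp

/-! ### Based paths -/

/-- The group of continuous paths in `Sp n` that start at the identity, parametrized by the unit
interval and carrying the compact-open topology. -/
def basedPaths (n : ℕ) : Subgroup C(unitInterval, Sp n) where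
  carrier := {γ | γ 0 = 1}
  mul_mem' {γ γ'} hγ hγ' := by
    change γ 0 * γ' 0 = 1
    rw [hγ, hγ', one_mul]
  one_mem' := rfl
  inv_mem' {γ} hγ := by
    change (γ 0)⁻¹ = 1
    rw [hγ, inv_one]

/-- The type of elements of `basedPaths n`. A homotopy of based paths with parameter space `X` is a
continuous map `X → BasedPath n`. -/
abbrev BasedPath (n : ℕ) := ↥(basedPaths n)

namespace BasedPath

variable {n p q : ℕ} {X : Type*} [TopologicalSpace X]

instance : FunLike (BasedPath n) unitInterval (Sp n) where
  coe γ := γ.1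
  coe_injective _ _ h := Subtype.ext (DFunLike.coe_injective h)

/-- The based path with the given values. -/
def of (f : unitInterval → Sp n) (hf : Continuous f) (h0 : f 0 = 1) : BasedPath n := ⟨⟨f, hf⟩, h0⟩

lemma of_apply {f : unitInterval → Sp n} (hf : Continuous f) (h0 : f 0 = 1) (t : unitInterval) :
    of f hf h0 t = f t := rfl

lemma apply_zero (γ : BasedPath n) : γ 0 = 1 := γ.2

lemma mul_apply (γ γ' : BasedPath n) (t : unitInterval) : (γ * γ') t = γ t * γ' t := rfl

lemma one_apply (t : unitInterval) : (1 : BasedPath n) t = 1 := rfl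

lemma inv_apply (γ : BasedPath n) (t : unitInterval) : γ⁻¹ t = (γ t)⁻¹ := rfl

@[fun_prop]
lemma continuous_apply {f : X → BasedPath n} {g : X → unitInterval} (hf : Continuous f)
    (hg : Continuous g) : Continuous fun x ↦ f x (g x) :=
  continuous_eval.comp ((continuous_subtype_val.comp hf).prodMk hg)

lemma continuous_of_uncurry {f : X → BasedPath n}
    (hf : Continuous fun x : X × unitInterval ↦ f x.1 x.2) : Continuous f :=
  continuous_induced_rng.2 <| ContinuousMap.continuous_of_continuous_uncurry _ hf

instance : ContinuousMul (BasedPath n) where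
  continuous_mul := continuous_of_uncurry (by simp only [mul_apply]; fun_prop)

/-- The path `t ↦ a t ⋄ b t`. -/
def blockSum (a : BasedPath p) (b : BasedPath q) : BasedPath (p + q) :=
  of (fun t ↦ Sp.blockSum (a t) (b t)) (by fun_prop)
    (by rw [apply_zero, apply_zero, Sp.blockSum_one])

lemma blockSum_apply (a : BasedPath p) (b : BasedPath q) (t : unitInterval) :
    blockSum a b t = Sp.blockSum (a t) (b t) := rfl

/-- The path `t ↦ exp (t θ J)`. -/
def rotation (n : ℕ) (θ : ℝ) : BasedPath n :=
  of (fun t ↦ Sp.rotation n (θ * t)) (by fun_prop) (by simp)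

lemma rotation_apply (θ : ℝ) (t : unitInterval) : rotation n θ t = Sp.rotation n (θ * t) := rfl

end BasedPath

/-! ### The index -/

section Index

open Filter Topology Real

variable {n p q : ℕ}

/-- The continuous branch along `γ`, vanishing at `0`, of the argument of the determinant of the
Cayley transform, jointly continuous in the path and the time. -/
def angleLift (n : ℕ) : C(unitInterval × BasedPath n, ℝ) :=
  Circle.isCoveringMap_exp.liftHomotopy
    ⟨fun x ↦ Sp.detCayley (x.2 x.1), Sp.continuous_detCayley.comp (by fun_prop)⟩ (.const _ 0)
    fun γ ↦ by simp [BasedPath.apply_zero, Sp.detCayley_one]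

/-- The total variation along `γ` of the argument of the determinant of the Cayley transform. -/
def totalAngle (γ : BasedPath n) : ℝ := angleLift n (1, γ)

lemma exp_angleLift (γ : BasedPath n) (t : unitInterval) :
    Circle.exp (angleLift n (t, γ)) = Sp.detCayley (γ t) :=
  congrFun (Circle.isCoveringMap_exp.liftHomotopy_lifts _ _ _) (t, γ)

lemma angleLift_zero (γ : BasedPath n) : angleLift n (0, γ) = 0 :=
  Circle.isCoveringMap_exp.liftHomotopy_zero _ _ _ γ

lemma continuous_totalAngle : Continuous (totalAngle (n := n)) :=
  (angleLift n).continuous.comp (by fun_prop)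

lemma totalAngle_eq_of_lift {γ : BasedPath n} (φ : C(unitInterval, ℝ)) (h0 : φ 0 = 0)
    (hφ : ∀ t, Circle.exp (φ t) = Sp.detCayley (γ t)) : totalAngle γ = φ 1 := by
  refine (DFunLike.congr_fun ((Circle.isCoveringMap_exp.eq_liftPath_iff' _).2 ⟨?_, h0⟩) 1).symm
  exact funext hφ

lemma totalAngle_blockSum (a : BasedPath p) (b : BasedPath q) :
    totalAngle (BasedPath.blockSum a b) = totalAngle a + totalAngle b := by
  refine totalAngle_eq_of_lift
    ⟨fun t ↦ angleLift p (t, a) + angleLift q (t, b), by fun_prop⟩ ?_ fun t ↦ ?_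
  · simp [angleLift_zero]
  · change Circle.exp (_ + _) = _
    rw [Circle.exp_add, exp_angleLift, exp_angleLift,
      BasedPath.blockSum_apply, Sp.detCayley_blockSum]

/-- The Conley–Zehnder index, counting the crossings of the eigenvalue `1`: both angles are
arguments of the same complex number, so the quotient is an integer. -/
def czIndex (γ : BasedPath n) : ℤ :=
  round ((totalAngle γ - Sp.spectralAngle (γ 1)) / (2 * π)) + n

lemma coe_czIndex (γ : BasedPath n) :
    (czIndex γ : ℝ) = (totalAngle γ - Sp.spectralAngle (γ 1)) / (2 * π) + n := by
  have h : Circle.exp (totalAngle γ) = Circle.exp (Sp.spectralAngle (γ 1)) := by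
    rw [Sp.exp_spectralAngle]; exact exp_angleLift γ 1
  obtain ⟨m, hm⟩ := Circle.exp_eq_exp.1 h
  have hquot : (totalAngle γ - Sp.spectralAngle (γ 1)) / (2 * π) = m := by
    rw [hm]; field_simp; ring
  rw [czIndex, hquot]; simp

lemma czIndex_eq_of_continuous {X : Type*} [TopologicalSpace X] [PreconnectedSpace X]
    {F : X → BasedPath n} (hF : Continuous F)
    (hrank : ∀ x y, Sp.rankSubOne (F x 1) = Sp.rankSubOne (F y 1)) (x y : X) :
    czIndex (F x) = czIndex (F y) := by
  refine PreconnectedSpace.constant inferInstance (f := fun x ↦ czIndex (F x)) ?_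
  rw [Int.isClosedEmbedding_coe_real.isEmbedding.continuous_iff]
  simp only [Function.comp_def, coe_czIndex]
  have := continuous_totalAngle.comp hF
  have := Sp.continuous_spectralAngle (f := fun x ↦ F x 1) (by fun_prop) hrank
  simp only [Function.comp_def] at *
  fun_prop

lemma eventually_czIndex_eq {F : ℝ → BasedPath n} (hF : Continuous F) {k : ℤ}
    (hlim : Tendsto (fun s ↦ Sp.spectralAngle (F s 1)) (𝓝[>] 0)
      (𝓝 (Sp.spectralAngle (F 0 1) + k * (2 * π)))) :
    ∀ᶠ s in 𝓝[>] (0 : ℝ), czIndex (F s) = czIndex (F 0) - k := by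
  have hangle : Tendsto (fun s ↦ totalAngle (F s)) (𝓝[>] 0) (𝓝 (totalAngle (F 0))) :=
    ((continuous_totalAngle.comp hF).tendsto 0).mono_left nhdsWithin_le_nhds
  have hreal :
      Tendsto (fun s ↦ (czIndex (F s) : ℝ)) (𝓝[>] 0) (𝓝 ((czIndex (F 0) - k : ℤ) : ℝ)) := by
    simp only [coe_czIndex, Int.cast_sub]
    convert ((hangle.sub hlim).div_const (2 * π)).add_const (n : ℝ) using 2
    field_simp
    ring
  have hint : Tendsto (fun s ↦ czIndex (F s)) (𝓝[>] 0) (𝓝 (czIndex (F 0) - k)) :=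
    Int.isClosedEmbedding_coe_real.isEmbedding.tendsto_nhds_iff.2 hreal
  rwa [nhds_discrete, tendsto_pure] at hint

lemma czIndex_blockSum (a : BasedPath p) (b : BasedPath q) :
    czIndex (BasedPath.blockSum a b) = czIndex a + czIndex b := by
  have h : (czIndex (BasedPath.blockSum a b) : ℝ) = czIndex a + czIndex b := by
    simp only [coe_czIndex, totalAngle_blockSum, BasedPath.blockSum_apply,
      Sp.spectralAngle_blockSum, Nat.cast_add]
    ring
  exact_mod_cast h

end Index

/-! ### Degeneracy along rotations -/

section EigenvaluesNear

open Filter Topology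

variable {m ι : Type*} [Fintype m] [DecidableEq m] {W : ι → Matrix m m ℂ} {V : Matrix m m ℂ}
  {l : Filter ι}

lemma eventually_eq_of_mem_roots_charpoly {c : ℂ} (hW : ∀ x, W x ∈ unitaryGroup m ℂ)
    (hlim : Tendsto W l (𝓝 V))
    (hmult : ∀ᶠ x in l, (W x).charpoly.rootMultiplicity c = V.charpoly.rootMultiplicity c) :
    ∀ᶠ y : ι × ℂ in l ×ˢ 𝓝 c, y.2 ∈ (W y.1).charpoly.roots → y.2 = c := by
  classical
  refine mem_iff_ultrafilter.2 fun U hU ↦ ?_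
  have fst_le : Tendsto Prod.fst U l := (tendsto_fst (g := 𝓝 c)).mono_left hU
  have snd_le : Tendsto Prod.snd U (𝓝 c) := (tendsto_snd (f := l)).mono_left hU
  obtain ⟨z, ζ, hz, hζ, hzζ⟩ :=
    exists_tendsto_eigenvalues U (fun y ↦ hW y.1) (hlim.comp fst_le)
  simp only [← Polynomial.count_roots] at hmult
  have hcard := fst_le.eventually hmult
  simp only [hz, hζ, Multiset.count_map] at hcard
  have eventually_each : ∀ i, ∀ᶠ y in U, z y i = y.2 → y.2 = c := by
    intro i
    by_cases hi : c = ζ i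
    · filter_upwards [eventually_eq_of_card_filter_eq hzζ hcard i hi] with y hy hy'
      rw [hy, hy']
    · have separated := ((hzζ i).prodMk_nhds snd_le).eventually
        (isClosed_diagonal.isOpen_compl.mem_nhds (Ne.symm hi))
      exact separated.mono fun y hy hy' ↦ absurd hy' hy
  filter_upwards [eventually_all.2 eventually_each] with y hy hmem
  rw [hz] at hmem
  obtain ⟨i, -, hi⟩ := Multiset.mem_map.1 hmem
  exact hy i hi

end EigenvaluesNear

namespace Sp

open Filter Topology Real

variable {n : ℕ}

lemma nondegenerate_mul_comm (a b : Sp n) : Nondegenerate (a * b) ↔ Nondegenerate (b * a) := by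
  have det_comm : ((a : Mat n) * b - 1).det = ((b : Mat n) * a - 1).det := by
    rw [← neg_sub 1, ← neg_sub 1 ((b : Mat n) * a), det_neg, det_neg, det_one_sub_mul_comm]
  rw [Nondegenerate, Nondegenerate, coe_mul, coe_mul, det_comm]

lemma stdJ_mul_rotation_mul_sub_one (α : ℝ) (a : Sp n) :
    stdJ n * (rotation n (α / 2) * ((rotation n (-α) * a : Sp n) - 1 : Mat n)) =
      sin (α / 2) • ((a : Mat n) + 1) + cos (α / 2) • (stdJ n * ((a : Mat n) - 1)) := by
  rw [mul_sub, mul_one, ← coe_mul, ← mul_assoc, ← rotation_add, coe_mul, coe_rotation,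
    coe_rotation, show α / 2 + -α = -(α / 2) by ring, cos_neg, sin_neg]
  simp only [mul_sub, mul_add, add_mul, smul_mul_assoc, mul_smul_comm, mul_one, one_mul,
    stdJ_mul_stdJ, stdJ_mul_stdJ_mul]
  module

lemma exp_smul_cayleyDenom_sub_cayleyNum (α : ℝ) (a : Sp n) :
    (Circle.exp α : ℂ) • cayleyDenom a - cayleyNum a =
      (2 * Complex.I * Circle.exp (α / 2) : ℂ) • complexify n
        (stdJ n * (rotation n (α / 2) * ((rotation n (-α) * a : Sp n) - 1 : Mat n))) := by
  have complexify_smul (c : ℝ) (A : Mat n) : complexify n (c • A) = (c : ℂ) • complexify n A := by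
    ext i j
    simp
  have coe_exp (θ : ℝ) : (Circle.exp θ : ℂ) = cos θ + sin θ * Complex.I := by
    rw [Circle.coe_exp, Complex.exp_mul_I, Complex.ofReal_cos, Complex.ofReal_sin]
  have coe_exp_sq : (Circle.exp α : ℂ) = Circle.exp (α / 2) * Circle.exp (α / 2) := by
    rw [← Circle.coe_mul, ← Circle.exp_add, add_halves]
  have pythagoras : (cos (α / 2) : ℂ) ^ 2 + (sin (α / 2) : ℂ) ^ 2 = 1 := by
    exact_mod_cast cos_sq_add_sin_sq (α / 2)
  rw [stdJ_mul_rotation_mul_sub_one, map_add, complexify_smul, complexify_smul, coe_exp_sq,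
    coe_exp, cayleyDenom, cayleyNum]
  generalize cos (α / 2) = c, sin (α / 2) = s at pythagoras
  match_scalars
  · linear_combination pythagoras - (s : ℂ) ^ 2 * Complex.I_sq
  · linear_combination -Complex.I * pythagoras + (s : ℂ) ^ 2 * Complex.I * Complex.I_sq

lemma mem_roots_charpoly_cayley_iff (α : ℝ) (a : Sp n) :
    (Circle.exp α : ℂ) ∈ (cayley a).charpoly.roots ↔ ¬ Nondegenerate (a * rotation n (-α)) := by
  have hdet := congrArg det (exp_smul_cayleyDenom_sub_cayleyNum α a)
  rw [← cayley_mul_cayleyDenom, ← one_mul (cayleyDenom a), ← smul_mul_assoc, ← mul_assoc, mul_one,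
    ← sub_mul, det_mul, det_smul, ← RingHom.map_det, det_mul, det_mul] at hdet
  have smul_one_eq : (Circle.exp α : ℂ) • (1 : CMat n) = scalar _ (Circle.exp α : ℂ) := by
    rw [smul_one_eq_diagonal, scalar_apply]
  rw [Polynomial.mem_roots (charpoly_monic _).ne_zero, Polynomial.IsRoot, eval_charpoly,
    ← smul_one_eq, nondegenerate_mul_comm, Nondegenerate, not_not,
    ← mul_eq_zero_iff_right (isUnit_det_cayleyDenom a).ne_zero, hdet]
  simp [(isUnit_det_stdJ n).ne_zero, (isUnit_det (rotation n (α / 2))).ne_zero]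

lemma eventually_nondegenerate_mul_rotation {X : Type*} [TopologicalSpace X] [CompactSpace X]
    {f : X → Sp n} (hf : Continuous f) (hrank : ∀ x y, rankSubOne (f x) = rankSubOne (f y)) :
    ∀ᶠ u in 𝓝[≠] (0 : ℝ), ∀ x, Nondegenerate (f x * rotation n u) := by
  have multiplicity_eq (x y : X) : (cayley (f x)).charpoly.rootMultiplicity 1 =
      (cayley (f y)).charpoly.rootMultiplicity 1 := by
    have := rootMultiplicity_one_cayley (f x)
    have := rootMultiplicity_one_cayley (f y)
    have := hrank x y
    omega
  have near (x₀ : X) : ∀ᶠ y : ℝ × X in 𝓝 (0, x₀),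
      y.1 ≠ 0 → Nondegenerate (f y.2 * rotation n y.1) := by
    have roots_near := eventually_eq_of_mem_roots_charpoly (c := 1)
      (fun x ↦ cayley_mem_unitaryGroup (f x)) ((continuous_cayley.comp hf).tendsto x₀)
      (.of_forall fun x ↦ multiplicity_eq x x₀)
    rw [← nhds_prod_eq] at roots_near
    have tendsto_exp : Tendsto (fun y : ℝ × X ↦ (y.2, (Circle.exp (-y.1) : ℂ)))
        (𝓝 (0, x₀)) (𝓝 (x₀, 1)) := by
      have : Continuous fun y : ℝ × X ↦ (y.2, (Circle.exp (-y.1) : ℂ)) := by fun_prop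
      simpa using this.tendsto (0, x₀)
    have small : ∀ᶠ y : ℝ × X in 𝓝 (0, x₀), -y.1 ∈ Ioo (-π) π :=
      (by fun_prop : Continuous fun y : ℝ × X ↦ -y.1).tendsto _
        (Ioo_mem_nhds (by simp [pi_pos]) (by simp [pi_pos]))
    filter_upwards [tendsto_exp.eventually roots_near, small] with y hy hsmall hne
    by_contra hdeg
    have hexp : Circle.exp (-y.1) = 1 :=
      Circle.ext (hy ((mem_roots_charpoly_cayley_iff _ _).2 (by rwa [neg_neg])))
    have := Circle.arg_exp hsmall.1 hsmall.2.le
    rw [hexp, Circle.coe_one, Complex.arg_one] at this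
    exact hne (neg_eq_zero.1 this.symm)
  rw [eventually_nhdsWithin_iff]
  filter_upwards [isCompact_univ.eventually_forall_of_forall_eventually
    (P := fun u x ↦ u ≠ 0 → Nondegenerate (f x * rotation n u)) fun x _ ↦ near x]
    with u hu hne x using hu x (mem_univ x) hne

lemma mem_lowerArc {z : ℂ} (hz : ‖z‖ = 1) {δ : ℝ} (hδ : δ ∈ Ioo 0 π)
    (h : ∀ α ∈ Ioo 0 δ, (Circle.exp α : ℂ) ≠ z) : z ∈ lowerArc (1 - cos δ) := by
  refine ⟨hz, ?_⟩
  by_contra! hcon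
  obtain ⟨him, hre⟩ := hcon
  have exp_arg : (Circle.exp (Complex.arg z) : ℂ) = z := by
    simpa [hz] using Complex.norm_mul_exp_arg_mul_I z
  have arg_pos : 0 < Complex.arg z :=
    lt_of_le_of_ne (Complex.arg_nonneg_iff.2 him.le)
      fun h0 ↦ him.ne' ((Complex.arg_eq_zero_iff.1 h0.symm).2)
  refine h _ ⟨arg_pos, lt_of_not_ge fun hle ↦ hre.not_ge ?_⟩ exp_arg
  have re_eq : z.re = cos (Complex.arg z) := by
    rw [Complex.cos_arg (norm_ne_zero_iff.1 (hz ▸ one_ne_zero)), hz, div_one]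
  rw [re_eq, sub_sub_cancel]
  exact cos_le_cos_of_nonneg_of_le_pi hδ.1.le (Complex.arg_le_pi z) hle

lemma mem_upperArc {z : ℂ} (hz : ‖z‖ = 1) {δ : ℝ} (hδ : δ ∈ Ioo 0 π)
    (h : ∀ α ∈ Ioo 0 δ, (Circle.exp (-α) : ℂ) ≠ z) : z ∈ upperArc (1 - cos δ) := by
  have := mem_lowerArc (z := star z) (by rwa [norm_star]) hδ fun α hα hz' ↦
    h α hα (by rw [Circle.exp_neg, Circle.coe_inv_eq_conj, hz', ← Complex.star_def, star_star])
  simpa [lowerArc, upperArc] using this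

lemma exists_forall_nondegenerate_mul_rotation (a : Sp n) :
    ∃ δ ∈ Ioo 0 π, ∀ u, 0 < |u| → |u| < 2 * δ → Nondegenerate (a * rotation n u) := by
  have near := eventually_nondegenerate_mul_rotation (f := fun _ : Unit ↦ a) continuous_const
    fun _ _ ↦ rfl
  rw [eventually_nhdsWithin_iff, Metric.eventually_nhds_iff] at near
  obtain ⟨ε, hε, near⟩ := near
  refine ⟨min (ε / 2) (π / 2), ⟨by positivity, ?_⟩, fun u hu hu' ↦ near ?_ (abs_pos.1 hu) ()⟩
  · linarith [min_le_right (ε / 2) (π / 2), pi_pos]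
  · rw [dist_zero_right, norm_eq_abs]
    linarith [min_le_left (ε / 2) (π / 2)]

/-- No eigenvalue of the Cayley transform is close to `1` counterclockwise: it would come from a
degenerate rotation of `a`. -/
lemma tendsto_spectralAngle_mul_rotation_neg (a : Sp n) :
    Tendsto (fun s ↦ spectralAngle (a * rotation n (-s))) (𝓝[>] 0) (𝓝 (spectralAngle a)) := by
  obtain ⟨δ, hδ, nondegenerate⟩ := exists_forall_nondegenerate_mul_rotation a
  have cos_lt : cos δ < 1 := cos_zero ▸ cos_lt_cos_of_nonneg_of_le_pi le_rfl hδ.2.le hδ.1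
  have hlim : Tendsto (fun s ↦ cayley (a * rotation n (-s))) (𝓝[>] 0) (𝓝 (cayley a)) := by
    have : Continuous fun s ↦ cayley (a * rotation n (-s)) := by fun_prop
    simpa using (this.tendsto 0).mono_left nhdsWithin_le_nhds
  refine tendsto_spectralSum_of_isClosed (fun s ↦ cayley_mem_unitaryGroup _) hlim
    (isClosed_lowerArc _) (continuousOn_angleIoc (sub_pos.2 cos_lt)) ?_
  filter_upwards [Ioo_mem_nhdsGT hδ.1] with s hs z hz
  refine mem_lowerArc (norm_eq_one_of_mem_roots_charpoly (cayley_mem_unitaryGroup _) hz) hδ ?_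
  rintro α hα rfl
  rw [mem_roots_charpoly_cayley_iff, mul_assoc, ← rotation_add] at hz
  have habs : |-s + -α| = s + α := by
    rw [← neg_add, abs_neg, abs_of_pos (add_pos hs.1 hα.1)]
  exact hz (nondegenerate _ (by linarith [hs.1, hα.1]) (by linarith [hs.2, hα.2]))

lemma tendsto_spectralAngle_mul_rotation (a : Sp n) :
    Tendsto (fun s ↦ spectralAngle (a * rotation n s)) (𝓝[>] 0)
      (𝓝 (spectralAngle a - (2 * n - rankSubOne a) * (2 * π))) := by
  obtain ⟨δ, hδ, nondegenerate⟩ := exists_forall_nondegenerate_mul_rotation a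
  have cos_lt : cos δ < 1 := cos_zero ▸ cos_lt_cos_of_nonneg_of_le_pi le_rfl hδ.2.le hδ.1
  have hlim : Tendsto (fun s ↦ cayley (a * rotation n s)) (𝓝[>] 0) (𝓝 (cayley a)) := by
    have : Continuous fun s ↦ cayley (a * rotation n s) := by fun_prop
    simpa using (this.tendsto 0).mono_left nhdsWithin_le_nhds
  have multiplicity (b : Sp n) :
      ((cayley b).charpoly.rootMultiplicity 1 : ℝ) = 2 * n - rankSubOne b := by
    rw [eq_sub_iff_add_eq]
    exact_mod_cast rootMultiplicity_one_cayley b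
  have limit_eq : spectralSum angleIco (cayley a) =
      spectralAngle a - (2 * n - rankSubOne a) * (2 * π) := by
    rw [spectralSum_angleIco (cayley_mem_unitaryGroup a), multiplicity, spectralAngle]
    ring
  rw [← limit_eq]
  refine (tendsto_spectralSum_of_isClosed (fun s ↦ cayley_mem_unitaryGroup _) hlim
    (isClosed_upperArc _) (continuousOn_angleIco (sub_pos.2 cos_lt)) ?_).congr' ?_
  · filter_upwards [Ioo_mem_nhdsGT hδ.1] with s hs z hz
    refine mem_upperArc (norm_eq_one_of_mem_roots_charpoly (cayley_mem_unitaryGroup _) hz) hδ ?_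
    rintro α hα rfl
    rw [mem_roots_charpoly_cayley_iff, mul_assoc, ← rotation_add, neg_neg] at hz
    have habs : |s + α| = s + α := abs_of_pos (add_pos hs.1 hα.1)
    exact hz (nondegenerate _ (by linarith [hs.1, hα.1]) (by linarith [hs.2, hα.2]))
  · filter_upwards [Ioo_mem_nhdsGT hδ.1] with s hs
    have hnd : Nondegenerate (a * rotation n s) :=
      nondegenerate s (abs_pos.2 hs.1.ne') (by rw [abs_of_pos hs.1]; linarith [hs.1, hs.2])
    rw [spectralSum_angleIco (cayley_mem_unitaryGroup _), multiplicity, hnd.rankSubOne_eq,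
      spectralAngle]
    push_cast
    ring

end Sp

namespace BasedPath

open Filter Topology

variable {n : ℕ}

@[fun_prop]
lemma continuous_rotation : Continuous (rotation n) :=
  continuous_of_uncurry (by simp only [rotation_apply]; fun_prop)

lemma rotation_zero : rotation n 0 = 1 :=
  DFunLike.ext _ _ fun t ↦ by rw [rotation_apply, zero_mul, Sp.rotation_zero, one_apply]

lemma eventually_czIndex_mul_rotation_neg (γ : BasedPath n) :
    ∀ᶠ s in 𝓝[>] (0 : ℝ), czIndex (γ * rotation n (-s)) = czIndex γ := by
  have h := eventually_czIndex_eq (F := fun s ↦ γ * rotation n (-s)) (by fun_prop) (k := 0) <| by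
    simpa [mul_apply, rotation_apply, rotation_zero] using
      Sp.tendsto_spectralAngle_mul_rotation_neg (γ 1)
  simpa [rotation_zero] using h

lemma eventually_czIndex_mul_rotation (γ : BasedPath n) :
    ∀ᶠ s in 𝓝[>] (0 : ℝ),
      czIndex (γ * rotation n s) = czIndex γ + (2 * n - Sp.rankSubOne (γ 1)) := by
  have h := eventually_czIndex_eq (F := fun s ↦ γ * rotation n s) (by fun_prop)
    (k := Sp.rankSubOne (γ 1) - 2 * n) <| by
    convert Sp.tendsto_spectralAngle_mul_rotation (γ 1) using 2
    · simp [mul_apply, rotation_apply]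
    · simp [rotation_zero]
      ring
  simpa [rotation_zero, sub_sub_eq_add_sub, add_sub_assoc] using h

end BasedPath

/-! ### The symplectic plane -/

lemma stdJ_one : stdJ 1 = !![0, -1; 1, 0] := by
  ext i j
  fin_cases i <;> fin_cases j <;> simp [stdJ, conjIndex, conjSign]

namespace Sp

open Real

lemma mem_Sp_one_iff {V : Mat 1} : V ∈ Sp 1 ↔ V.det = 1 := by
  have h : V * stdJ 1 * Vᵀ = V.det • stdJ 1 := by
    ext i j
    fin_cases i <;> fin_cases j <;>
      simp [stdJ_one, det_fin_two, mul_apply, Fin.sum_univ_two] <;> ring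
  rw [mem_Sp_iff_mul_stdJ_mul_transpose, h]
  refine ⟨fun h ↦ ?_, fun h ↦ by rw [h, one_smul]⟩
  simpa [stdJ_one] using congrFun₂ h 1 0

lemma nondegenerate_iff_trace_ne (a : Sp 1) : Nondegenerate a ↔ (a : Mat 1).trace ≠ 2 := by
  have hdet := mem_Sp_one_iff.1 a.2
  have h : ((a : Mat 1) - 1).det = 2 - (a : Mat 1).trace := by
    rw [det_fin_two] at hdet
    simp [det_fin_two, trace_fin_two]
    linear_combination hdet
  rw [Nondegenerate, h, sub_ne_zero, ne_comm]

/-- `[[1, a], [0, 1]]`. -/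
def shear (a : ℝ) : Sp 1 := ⟨upperTri a, mem_Sp_one_iff.2 (by simp [upperTri, det_fin_two])⟩

/-- `diag (e^x, e^{-x})`. -/
def hyperbolic (x : ℝ) : Sp 1 :=
  ⟨!![exp x, 0; 0, exp (-x)], mem_Sp_one_iff.2 (by simp [det_fin_two, ← exp_add])⟩

lemma coe_shear (a : ℝ) : (shear a : Mat 1) = !![1, a; 0, 1] := rfl

lemma coe_hyperbolic (x : ℝ) : (hyperbolic x : Mat 1) = !![exp x, 0; 0, exp (-x)] := rfl

lemma coe_rotation_one (θ : ℝ) : (rotation 1 θ : Mat 1) = !![cos θ, -sin θ; sin θ, cos θ] := by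
  rw [coe_rotation, stdJ_one]
  ext i j
  fin_cases i <;> fin_cases j <;> simp

lemma shear_zero : shear 0 = 1 :=
  Subtype.ext (by rw [coe_shear, coe_one, one_fin_two])

lemma hyperbolic_zero : hyperbolic 0 = 1 :=
  Subtype.ext (by rw [coe_hyperbolic, coe_one, one_fin_two, neg_zero, exp_zero])

@[fun_prop]
lemma continuous_shear : Continuous shear := by
  refine continuous_induced_rng.2 (continuous_matrix (Fin.forall_fin_two.2 ?_))
  exact ⟨Fin.forall_fin_two.2 ⟨continuous_const, continuous_id⟩,
    Fin.forall_fin_two.2 ⟨continuous_const, continuous_const⟩⟩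

@[fun_prop]
lemma continuous_hyperbolic : Continuous hyperbolic := by
  refine continuous_induced_rng.2 (continuous_matrix (Fin.forall_fin_two.2 ?_))
  exact ⟨Fin.forall_fin_two.2 ⟨continuous_exp, continuous_const⟩,
    Fin.forall_fin_two.2 ⟨continuous_const, continuous_exp.comp continuous_neg⟩⟩

lemma hyperbolic_mul_shear_mul_inv (x a : ℝ) :
    hyperbolic x * shear a * (hyperbolic x)⁻¹ = shear (exp (2 * x) * a) := by
  have h : exp x = exp (2 * x) * exp (-x) := by rw [← exp_add]; ring_nf
  rw [mul_inv_eq_iff_eq_mul]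
  refine Subtype.ext ?_
  rw [coe_mul, coe_mul, coe_hyperbolic, coe_shear, coe_shear]
  ext i j
  fin_cases i <;> fin_cases j <;> simp
  linear_combination a * h

lemma rankSubOne_shear {a : ℝ} (ha : a ≠ 0) : rankSubOne (shear a) = 1 := by
  have h : (shear a : Mat 1) - 1 = vecMulVec ![a, 0] ![0, 1] := by
    ext i j
    fin_cases i <;> fin_cases j <;> simp [coe_shear, vecMulVec]
  refine le_antisymm (by rw [rankSubOne, h]; exact rank_vecMulVec_le _ _) ?_
  rw [Nat.one_le_iff_ne_zero, rankSubOne, rank, ne_eq, Submodule.finrank_eq_zero,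
    LinearMap.range_eq_bot]
  exact fun h0 ↦ ha (by simpa [coe_shear] using congrFun (LinearMap.congr_fun h0 ![0, 1]) 0)

lemma trace_hyperbolic_mul_shear_mul_rotation (x a θ : ℝ) :
    ((hyperbolic x * shear a * rotation 1 θ : Sp 1) : Mat 1).trace =
      exp x * (cos θ + a * sin θ) + exp (-x) * cos θ := by
  simp [coe_mul, coe_hyperbolic, coe_shear, coe_rotation_one, trace_fin_two]
  ring

lemma nondegenerate_hyperbolic {x : ℝ} (hx : x ≠ 0) : Nondegenerate (hyperbolic x) := by
  have h := one_lt_cosh.2 hx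
  rw [cosh_eq] at h
  rw [nondegenerate_iff_trace_ne, coe_hyperbolic, trace_fin_two_of]
  linarith

lemma detCayley_hyperbolic (x : ℝ) : detCayley (hyperbolic x) = 1 := by
  have hadd : (hyperbolic x : Mat 1) + 1 = !![exp x + 1, 0; 0, exp (-x) + 1] := by
    ext i j
    fin_cases i <;> fin_cases j <;> simp [coe_hyperbolic]
  have hmul : stdJ 1 * ((hyperbolic x : Mat 1) - 1) = !![0, 1 - exp (-x); exp x - 1, 0] := by
    ext i j
    fin_cases i <;> fin_cases j <;> simp [coe_hyperbolic, stdJ_one, neg_add_eq_sub, mul_sub]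
  have hdet := congrArg det (cayley_mul_cayleyDenom (hyperbolic x))
  have heq : (cayleyNum (hyperbolic x)).det = (cayleyDenom (hyperbolic x)).det := by
    rw [cayleyNum, cayleyDenom, hadd, hmul]
    simp [det_fin_two]
  rw [det_mul, heq] at hdet
  exact Circle.ext (mul_right_cancel₀ (isUnit_det_cayleyDenom _).ne_zero (hdet.trans (by simp)))

lemma spectralAngle_mem_Ioo {a : Sp 1} (ha : Nondegenerate a) :
    spectralAngle a ∈ Ioo 0 (4 * π) := by
  have hcard : (cayley a).charpoly.roots.card = 2 := by
    rw [← (IsAlgClosed.splits _).natDegree_eq_card_roots, charpoly_natDegree_eq_dim]; rfl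
  obtain ⟨z, hz⟩ := exists_eq_map_univ_val _ hcard
  have z_mem (i) : z i ∈ (cayley a).charpoly.roots := by
    rw [hz]; exact Multiset.mem_map_of_mem z (Finset.mem_univ i)
  have z_ne_one (i) : z i ≠ 1 := fun h ↦ by
    have h1 := z_mem i
    rw [h, ← Circle.coe_one, ← Circle.exp_zero, mem_roots_charpoly_cayley_iff, neg_zero,
      rotation_zero, mul_one] at h1
    exact h1 ha
  have hangle (i) : angleIoc (z i) ∈ Ioo 0 (2 * π) := by
    have norm_z := norm_eq_one_of_mem_roots_charpoly (cayley_mem_unitaryGroup a) (z_mem i)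
    have arg_ne := Complex.slitPlane_arg_ne_pi (neg_mem_slitPlane norm_z (z_ne_one i))
    have arg_lt := lt_of_le_of_ne (Complex.arg_le_pi (-z i)) arg_ne
    rw [angleIoc]
    constructor <;> linarith [Complex.neg_pi_lt_arg (-z i)]
  rw [spectralAngle, spectralSum_eq_sum hz, Fin.sum_univ_two]
  constructor <;> linarith [(hangle 0).1, (hangle 1).1, (hangle 0).2, (hangle 1).2]

lemma spectralAngle_hyperbolic {x : ℝ} (hx : x ≠ 0) : spectralAngle (hyperbolic x) = 2 * π := by
  obtain ⟨hpos, hlt⟩ := spectralAngle_mem_Ioo (nondegenerate_hyperbolic hx)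
  obtain ⟨m, hm⟩ := Circle.exp_eq_one.1 ((exp_spectralAngle _).trans (detCayley_hyperbolic x))
  rw [hm] at hpos hlt ⊢
  have m_pos : (0 : ℝ) < m := by nlinarith [pi_pos]
  have m_lt : (m : ℝ) < 2 := by nlinarith [pi_pos]
  norm_cast at m_pos m_lt
  obtain rfl : m = 1 := by lia
  simp

end Sp

/-! ### The axioms for based paths -/

namespace BasedPath

open Filter Topology

variable {n : ℕ}

/-- The path `t ↦ diag (1 + t, (1 + t)⁻¹)`. -/
def hyperbolic : BasedPath 1 :=
  of (fun t ↦ Sp.hyperbolic (Real.log (1 + t)))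
    (Sp.continuous_hyperbolic.comp <| .log (by fun_prop) fun t ↦ by linarith [t.2.1])
    (by simp [Sp.hyperbolic_zero])

lemma hyperbolic_apply (t : unitInterval) :
    hyperbolic t = Sp.hyperbolic (Real.log (1 + t)) := rfl

lemma czIndex_hyperbolic : czIndex hyperbolic = 0 := by
  have htotal : totalAngle hyperbolic = 0 :=
    totalAngle_eq_of_lift (.const _ 0) rfl fun t ↦ by
      simp [hyperbolic_apply, Sp.detCayley_hyperbolic]
  have hspec : Sp.spectralAngle (hyperbolic 1) = 2 * Real.pi := by
    rw [hyperbolic_apply, Sp.spectralAngle_hyperbolic]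
    norm_num
  have h := coe_czIndex hyperbolic
  rw [htotal, hspec, zero_sub, neg_div, div_self (by positivity), Nat.cast_one,
    neg_add_cancel] at h
  exact_mod_cast h

/-- The path `[γ(1) φ_θ] * γ`, which follows `γ` at double speed and then rotates its endpoint. -/
def concatRotation (γ : BasedPath n) (θ : ℝ) : BasedPath n :=
  of (fun t ↦ γ (projIcc 0 1 zero_le_one (2 * t)) * Sp.rotation n (θ * max (2 * t - 1 : ℝ) 0))
    (by fun_prop) (by simp [apply_zero])

lemma concatRotation_apply (γ : BasedPath n) (θ : ℝ) (t : unitInterval) :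
    concatRotation γ θ t =
      γ (projIcc 0 1 zero_le_one (2 * t)) * Sp.rotation n (θ * max (2 * t - 1 : ℝ) 0) := rfl

lemma exists_homotopy_concatRotation (γ : BasedPath n) (θ : ℝ) :
    ∃ F : unitInterval → BasedPath n, Continuous F ∧ F 0 = γ * rotation n θ ∧
      F 1 = concatRotation γ θ ∧ ∀ s, F s 1 = γ 1 * Sp.rotation n θ := by
  refine ⟨fun s ↦ of (fun t ↦ γ (projIcc 0 1 zero_le_one ((1 + s) * t)) *
    Sp.rotation n (θ * max ((1 + s) * t - s : ℝ) 0)) (by fun_prop) ?_,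
    continuous_of_uncurry ?_, DFunLike.ext _ _ fun t ↦ ?_, DFunLike.ext _ _ fun t ↦ ?_, fun s ↦ ?_⟩
  · simp [apply_zero, s.2.1]
  · simp only [of_apply]
    fun_prop
  · simp [of_apply, mul_apply, rotation_apply, t.2.1]
  · simp [of_apply, concatRotation_apply, one_add_one_eq_two]
  · simp [of_apply, projIcc_of_right_le, s.2.1]

/-- Invariance of a family of functions under homotopies along which the rank of `γ(1) - 1` is
constant. -/
def HomotopyInvariant (i : ∀ n, BasedPath n → ℤ) : Prop :=
  ∀ ⦃n : ℕ⦄, 1 ≤ n → ∀ ⦃F : unitInterval → BasedPath n⦄, Continuous F →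
    (∀ s s', Sp.rankSubOne (F s 1) = Sp.rankSubOne (F s' 1)) → i n (F 0) = i n (F 1)

lemma HomotopyInvariant.concatRotation {i : ∀ n, BasedPath n → ℤ} (hi : HomotopyInvariant i)
    (hn : 1 ≤ n) (γ : BasedPath n) (θ : ℝ) :
    i n (concatRotation γ θ) = i n (γ * rotation n θ) := by
  obtain ⟨F, hF, hF0, hF1, hend⟩ := exists_homotopy_concatRotation γ θ
  rw [← hF0, ← hF1]
  exact (hi hn hF fun s s' ↦ by rw [hend, hend]).symm

/-- The axioms of the Conley–Zehnder index for based paths, with an arbitrary jump `k` (in place of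
`1`) in the condition on small counterclockwise rotations. With `k = 0` they are satisfied by the
difference of two indices. -/
structure IsIndexWithJump (k : ℤ) (i : ∀ n, BasedPath n → ℤ) : Prop where
  homotopyInvariant : HomotopyInvariant i
  blockSum : ∀ ⦃p q : ℕ⦄, 1 ≤ p → 1 ≤ q → ∀ (a : BasedPath p) (b : BasedPath q),
    i (p + q) (BasedPath.blockSum a b) = i p a + i q b
  clockwise : ∀ a : ℝ, a = 0 ∨ a = 1 ∨ a = -1 → ∀ γ : BasedPath 1, γ 1 = Sp.shear a →
    ∀ᶠ θ in 𝓝[>] (0 : ℝ), i 1 (γ * rotation 1 (-θ)) = i 1 γ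
  counterclockwise : ∀ a : ℝ, a = 1 ∨ a = -1 → ∀ γ : BasedPath 1, γ 1 = Sp.shear a →
    ∀ᶠ θ in 𝓝[>] (0 : ℝ), i 1 (γ * rotation 1 θ) = i 1 γ + k
  hyperbolic : i 1 hyperbolic = 0

lemma IsIndexWithJump.sub {k l : ℤ} {i j : ∀ n, BasedPath n → ℤ} (hi : IsIndexWithJump k i)
    (hj : IsIndexWithJump l j) : IsIndexWithJump (k - l) (fun n γ ↦ i n γ - j n γ) where
  homotopyInvariant _ hn _ hF hrank :=
    congrArg₂ _ (hi.homotopyInvariant hn hF hrank) (hj.homotopyInvariant hn hF hrank)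
  blockSum _ _ hp hq a b := by rw [hi.blockSum hp hq, hj.blockSum hp hq]; ring
  clockwise a ha γ hγ := by
    filter_upwards [hi.clockwise a ha γ hγ, hj.clockwise a ha γ hγ] with θ h₁ h₂
    rw [h₁, h₂]
  counterclockwise a ha γ hγ := by
    filter_upwards [hi.counterclockwise a ha γ hγ, hj.counterclockwise a ha γ hγ] with θ h₁ h₂
    rw [h₁, h₂]
    ring
  hyperbolic := by rw [hi.hyperbolic, hj.hyperbolic, sub_zero]

lemma isIndexWithJump_czIndex : IsIndexWithJump 1 fun _ γ ↦ czIndex γ where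
  homotopyInvariant _ _ _ hF hrank := czIndex_eq_of_continuous hF hrank 0 1
  blockSum _ _ _ _ := czIndex_blockSum
  clockwise _ _ γ _ := eventually_czIndex_mul_rotation_neg γ
  counterclockwise a ha γ hγ := by
    have ha0 : a ≠ 0 := by rcases ha with rfl | rfl <;> norm_num
    simpa [hγ, Sp.rankSubOne_shear ha0] using eventually_czIndex_mul_rotation γ
  hyperbolic := czIndex_hyperbolic

end BasedPath

namespace SympPath

open BasedPath Filter Topology

variable {τ : ℝ} {n : ℕ}

/-- The symplectic path `t ↦ γ (t / τ)`, made constant outside `[0, τ]`. -/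
def ofBasedPath (τ : ℝ) (γ : BasedPath n) : SympPath τ n where
  toFun t := γ (projIcc 0 1 zero_le_one (t / τ))
  continuousOn := by fun_prop
  init := by simp [apply_zero, Sp.coe_one]
  mem_Sp _ _ := (γ _).2

/-- The based path `t ↦ γ (τ t)`. -/
def toBasedPath (hτ : 0 < τ) (γ : SympPath τ n) : BasedPath n :=
  of (fun t ↦ ⟨γ.toFun (τ * t), γ.mem_Sp _ ⟨by nlinarith [t.2.1], by nlinarith [t.2.2]⟩⟩)
    (continuous_induced_rng.2 <| γ.continuousOn.comp_continuous (by fun_prop) fun t ↦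
      ⟨by nlinarith [t.2.1], by nlinarith [t.2.2]⟩)
    (Subtype.ext (by simp [γ.init, Sp.coe_one]))

lemma coe_toBasedPath (hτ : 0 < τ) (γ : SympPath τ n) (t : unitInterval) :
    (toBasedPath hτ γ t : Mat n) = γ.toFun (τ * t) := rfl

lemma coe_toBasedPath_one (hτ : 0 < τ) (γ : SympPath τ n) :
    (toBasedPath hτ γ 1 : Mat n) = γ.toFun τ := by
  rw [coe_toBasedPath, Icc.coe_one, mul_one]

lemma toFun_eq_toBasedPath (hτ : 0 < τ) (γ : SympPath τ n) {t : ℝ} (ht : t ∈ Icc 0 τ) :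
    γ.toFun t = toBasedPath hτ γ ⟨t / τ, unitInterval.div_mem ht.1 hτ.le ht.2⟩ := by
  rw [coe_toBasedPath, mul_div_cancel₀ t hτ.ne']

lemma toBasedPath_ofBasedPath (hτ : 0 < τ) (γ : BasedPath n) :
    toBasedPath hτ (ofBasedPath τ γ) = γ := by
  refine DFunLike.ext _ _ fun t ↦ Subtype.ext ?_
  simp [coe_toBasedPath, ofBasedPath, mul_div_cancel_left₀ _ hτ.ne']

lemma toBasedPath_eq_iff (hτ : 0 < τ) (γ : SympPath τ n) (γ' : BasedPath n) :
    toBasedPath hτ γ = γ' ↔ ∀ t ∈ Icc 0 τ, γ.toFun t = (ofBasedPath τ γ').toFun t := by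
  refine ⟨?_, fun h ↦ DFunLike.ext _ _ fun t ↦ Subtype.ext ?_⟩
  · rintro rfl t ht
    rw [toFun_eq_toBasedPath hτ γ ht, toFun_eq_toBasedPath hτ _ ht, toBasedPath_ofBasedPath]
  · have ht : τ * t ∈ Icc 0 τ := ⟨by nlinarith [t.2.1], by nlinarith [t.2.2]⟩
    rw [coe_toBasedPath, h _ ht, ← coe_toBasedPath hτ, toBasedPath_ofBasedPath]

/-- `β` is the concatenation `[γ(τ) φ_{τ,θ}] * γ`. -/
def IsConcatRotation (θ : ℝ) (γ β : SympPath τ 1) : Prop :=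
  (∀ t ∈ Icc (0:ℝ) (τ / 2), β.toFun t = γ.toFun (2 * t)) ∧
    ∀ t ∈ Icc (τ / 2) τ, β.toFun t = γ.toFun τ * rotPath τ θ (2 * t - τ)

lemma rotPath_eq_rotation (τ θ t : ℝ) : rotPath τ θ t = Sp.rotation 1 (θ * (t / τ)) := by
  rw [rotPath, Sp.coe_rotation_one, mul_comm t, mul_div_assoc]

lemma isConcatRotation_iff (hτ : 0 < τ) (θ : ℝ) (γ β : SympPath τ 1) :
    IsConcatRotation θ γ β ↔ toBasedPath hτ β = concatRotation (toBasedPath hτ γ) θ := by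
  have h₁ (t) (ht : t ∈ Icc 0 (τ / 2)) :
      (ofBasedPath τ (concatRotation (toBasedPath hτ γ) θ)).toFun t = γ.toFun (2 * t) := by
    have hmem : 2 * t ∈ Icc 0 τ := ⟨by linarith [ht.1], by linarith [ht.2]⟩
    have hdiv := unitInterval.div_mem hmem.1 hτ.le hmem.2
    rw [toFun_eq_toBasedPath hτ _ ⟨ht.1, by linarith [ht.2]⟩, toBasedPath_ofBasedPath,
      concatRotation_apply, toFun_eq_toBasedPath hτ γ hmem, ← mul_div_assoc, projIcc_of_mem _ hdiv,
      max_eq_right (by linarith [hdiv.2]), mul_zero, Sp.rotation_zero, mul_one]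
  have h₂ (t) (ht : t ∈ Icc (τ / 2) τ) :
      (ofBasedPath τ (concatRotation (toBasedPath hτ γ) θ)).toFun t =
        γ.toFun τ * rotPath τ θ (2 * t - τ) := by
    have hmem : t ∈ Icc 0 τ := ⟨by linarith [ht.1], ht.2⟩
    have hdiv : 1 ≤ 2 * (t / τ) := by
      rw [← mul_div_assoc, one_le_div hτ]; linarith [ht.1]
    rw [toFun_eq_toBasedPath hτ _ hmem, toBasedPath_ofBasedPath, concatRotation_apply,
      projIcc_of_right_le _ hdiv, max_eq_left (by linarith), rotPath_eq_rotation, sub_div,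
      div_self hτ.ne', mul_div_assoc, Sp.coe_mul, ← coe_toBasedPath_one hτ]
    rfl
  rw [toBasedPath_eq_iff]
  refine ⟨fun h t ht ↦ ?_, fun h ↦ ⟨fun t ht ↦ ?_, fun t ht ↦ ?_⟩⟩
  · rcases le_total t (τ / 2) with hle | hle
    · rw [h.1 t ⟨ht.1, hle⟩, h₁ t ⟨ht.1, hle⟩]
    · rw [h.2 t ⟨hle, ht.2⟩, h₂ t ⟨hle, ht.2⟩]
  · rw [h t ⟨ht.1, by linarith [ht.2]⟩, h₁ t ht]
  · rw [h t ⟨by linarith [ht.1], ht.2⟩, h₂ t ht]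

lemma toBasedPath_apply_one_eq_iff (hτ : 0 < τ) (γ : SympPath τ 1) (a : ℝ) :
    toBasedPath hτ γ 1 = Sp.shear a ↔ γ.toFun τ = upperTri a := by
  rw [Subtype.ext_iff, coe_toBasedPath_one, Sp.coe_shear, upperTri]

lemma toBasedPath_eq_hyperbolic_iff (hτ : 0 < τ) (γ : SympPath τ 1) :
    toBasedPath hτ γ = hyperbolic ↔ ∀ t ∈ Icc 0 τ, γ.toFun t = diagPath τ t := by
  have h (t) (ht : t ∈ Icc 0 τ) : (ofBasedPath τ hyperbolic).toFun t = diagPath τ t := by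
    have hpos : 0 < 1 + t / τ := by have := div_nonneg ht.1 hτ.le; linarith
    rw [toFun_eq_toBasedPath hτ _ ht, toBasedPath_ofBasedPath, hyperbolic_apply,
      Sp.coe_hyperbolic, Real.exp_neg, Real.exp_log hpos, diagPath]
  rw [toBasedPath_eq_iff]
  exact forall₂_congr fun t ht ↦ by rw [h t ht]

lemma toBasedPath_eq_blockSum_iff {p q : ℕ} (hτ : 0 < τ) (a : SympPath τ p) (b : SympPath τ q)
    (γ : SympPath τ (p + q)) :
    toBasedPath hτ γ = blockSum (toBasedPath hτ a) (toBasedPath hτ b) ↔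
      ∀ t ∈ Icc 0 τ, γ.toFun t = blockDiagSum p q (a.toFun t) (b.toFun t) := by
  rw [toBasedPath_eq_iff]
  refine forall₂_congr fun t ht ↦ ?_
  rw [toFun_eq_toBasedPath hτ (ofBasedPath τ _) ht, toBasedPath_ofBasedPath, blockSum_apply,
    toFun_eq_toBasedPath hτ a ht, toFun_eq_toBasedPath hτ b ht, Sp.coe_blockSum,
    blockDiagSum_eq_blockHom]

lemma exists_homotopy_toBasedPath (hτ : 0 < τ) {γ₀ γ₁ : SympPath τ n} {δ : ℝ → ℝ → Mat n}
    (hδ : ContinuousOn (fun p : ℝ × ℝ ↦ δ p.1 p.2) (Icc 0 1 ×ˢ Icc 0 τ))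
    (hmem : ∀ s ∈ Icc (0:ℝ) 1, ∀ t ∈ Icc (0:ℝ) τ, δ s t ∈ Sp n)
    (hends : ∀ t ∈ Icc (0:ℝ) τ, δ 0 t = γ₀.toFun t ∧ δ 1 t = γ₁.toFun t)
    (hinit : ∀ s ∈ Icc (0:ℝ) 1, δ s 0 = 1) :
    ∃ F : unitInterval → BasedPath n, Continuous F ∧ F 0 = toBasedPath hτ γ₀ ∧
      F 1 = toBasedPath hτ γ₁ ∧ ∀ s : unitInterval, (F s 1 : Mat n) = δ s τ := by
  have mul_mem (t : unitInterval) : τ * t ∈ Icc 0 τ :=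
    ⟨by nlinarith [t.2.1], by nlinarith [t.2.2]⟩
  have hcont : Continuous fun x : unitInterval × unitInterval ↦
      (⟨δ x.1 (τ * x.2), hmem _ x.1.2 _ (mul_mem x.2)⟩ : Sp n) :=
    continuous_induced_rng.2 <| hδ.comp_continuous (f := fun x : unitInterval × unitInterval ↦
      ((x.1 : ℝ), τ * (x.2 : ℝ))) (by fun_prop) fun x ↦ ⟨x.1.2, mul_mem x.2⟩
  refine ⟨fun s ↦ of (fun t ↦ ⟨δ s (τ * t), hmem _ s.2 _ (mul_mem t)⟩)
    (hcont.comp (.prodMk_right s)) (Subtype.ext (by simp [hinit s s.2, Sp.coe_one])),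
    continuous_of_uncurry hcont, DFunLike.ext _ _ fun t ↦ Subtype.ext ?_,
    DFunLike.ext _ _ fun t ↦ Subtype.ext ?_, fun s ↦ by simp [BasedPath.of_apply]⟩
  · exact (hends _ (mul_mem t)).1
  · exact (hends _ (mul_mem t)).2

lemma czAxioms_comp_toBasedPath (hτ : 0 < τ) {i : ∀ n, BasedPath n → ℤ}
    (hi : IsIndexWithJump 1 i) : CZAxioms τ fun n γ ↦ i n (toBasedPath hτ γ) := by
  have concat {k : ℤ} {σ : ℝ} {γ : SympPath τ 1} (h : ∀ᶠ θ in 𝓝[>] (0 : ℝ),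
      i 1 (toBasedPath hτ γ * BasedPath.rotation 1 (σ * θ)) = i 1 (toBasedPath hτ γ) + k) :
      ∃ θ₀ > 0, ∀ θ ∈ Ioc 0 θ₀, ∀ β : SympPath τ 1, IsConcatRotation (σ * θ) γ β →
        i 1 (toBasedPath hτ β) = i 1 (toBasedPath hτ γ) + k := by
    obtain ⟨θ₀, hpos, hθ₀⟩ := mem_nhdsGT_iff_exists_Ioc_subset.1 h
    refine ⟨θ₀, hpos, fun θ hθ β hβ ↦ ?_⟩
    rw [(isConcatRotation_iff hτ _ γ β).1 hβ, hi.homotopyInvariant.concatRotation le_rfl]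
    exact hθ₀ hθ
  refine ⟨?homotopy, ?blockSum, ?clockwise, ?counterclockwise, ?normalization⟩
  case homotopy =>
    rintro n hn γ₀ γ₁ ⟨δ, hδ, hmem, hends, hinit, hrank⟩
    obtain ⟨F, hF, hF0, hF1, hFend⟩ := exists_homotopy_toBasedPath hτ hδ hmem hends hinit
    change i n (toBasedPath hτ γ₀) = i n (toBasedPath hτ γ₁)
    rw [← hF0, ← hF1]
    refine hi.homotopyInvariant hn hF fun s s' ↦ ?_
    rw [Sp.rankSubOne, Sp.rankSubOne, hFend, hFend, hrank s s.2 s' s'.2]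
  case blockSum =>
    intro p q hp hq a b γ hγ
    change i (p + q) (toBasedPath hτ γ) = _
    rw [(toBasedPath_eq_blockSum_iff hτ a b γ).2 hγ, hi.blockSum hp hq]
  case clockwise =>
    intro a ha γ hγ
    have h := hi.clockwise a ha _ ((toBasedPath_apply_one_eq_iff hτ γ a).2 hγ)
    obtain ⟨θ₀, hpos, hθ₀⟩ := concat (k := 0) (σ := -1) (by simpa using h)
    exact ⟨θ₀, hpos, fun θ hθ β h₁ h₂ ↦ by simpa using hθ₀ θ hθ β (by simpa using ⟨h₁, h₂⟩)⟩
  case counterclockwise =>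
    intro a ha γ hγ
    have h := hi.counterclockwise a ha _ ((toBasedPath_apply_one_eq_iff hτ γ a).2 hγ)
    obtain ⟨θ₀, hpos, hθ₀⟩ := concat (k := 1) (σ := 1) (by simpa using h)
    exact ⟨θ₀, hpos, fun θ hθ β h₁ h₂ ↦ hθ₀ θ hθ β (by simpa using ⟨h₁, h₂⟩)⟩
  case normalization =>
    intro γ hγ
    change i 1 (toBasedPath hτ γ) = 0
    rw [(toBasedPath_eq_hyperbolic_iff hτ γ).2 hγ, hi.hyperbolic]

lemma homotopyInvariant_comp_ofBasedPath (hτ : 0 < τ) {i : ∀ n, SympPath τ n → ℤ}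
    (hi : CZAxioms τ i) : HomotopyInvariant fun n γ ↦ i n (ofBasedPath τ γ) := by
  intro n hn F hF hrank
  refine hi.1 n hn _ _ ⟨fun s t ↦ F (projIcc 0 1 zero_le_one s) (projIcc 0 1 zero_le_one (t / τ)),
    ?_, fun _ _ _ _ ↦ Subtype.prop _, fun t _ ↦ ?_, fun s _ ↦ ?_, fun s _ s' _ ↦ ?_⟩
  · have : Continuous fun p : ℝ × ℝ ↦
        F (projIcc 0 1 zero_le_one p.1) (projIcc 0 1 zero_le_one (p.2 / τ)) := by fun_prop
    exact (continuous_subtype_val.comp this).continuousOn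
  · simp [ofBasedPath]
  · simp [apply_zero, Sp.coe_one]
  · simpa [div_self hτ.ne'] using! hrank _ _

lemma isIndexWithJump_comp_ofBasedPath (hτ : 0 < τ) {i : ∀ n, SympPath τ n → ℤ}
    (hi : CZAxioms τ i) : IsIndexWithJump 1 fun n γ ↦ i n (ofBasedPath τ γ) := by
  have homotopyInvariant := homotopyInvariant_comp_ofBasedPath hτ hi
  obtain ⟨-, blockSum, clockwise, counterclockwise, normalization⟩ := hi
  have apply_one {γ : BasedPath 1} {a : ℝ} (hγ : γ 1 = Sp.shear a) :
      (ofBasedPath τ γ).toFun τ = upperTri a := by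
    rw [← toBasedPath_apply_one_eq_iff hτ, toBasedPath_ofBasedPath, hγ]
  have concat (γ : BasedPath 1) (θ : ℝ) :
      IsConcatRotation θ (ofBasedPath τ γ) (ofBasedPath τ (concatRotation γ θ)) := by
    rw [isConcatRotation_iff hτ, toBasedPath_ofBasedPath, toBasedPath_ofBasedPath]
  refine ⟨homotopyInvariant, fun p q hp hq a b ↦ ?_, fun a ha γ hγ ↦ ?_, fun a ha γ hγ ↦ ?_, ?_⟩
  · refine blockSum p q hp hq _ _ _ ((toBasedPath_eq_blockSum_iff hτ _ _ _).1 ?_)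
    simp only [toBasedPath_ofBasedPath]
  · obtain ⟨θ₀, hpos, hθ₀⟩ := clockwise a ha _ (apply_one hγ)
    filter_upwards [Ioc_mem_nhdsGT hpos] with θ hθ
    rw [← homotopyInvariant.concatRotation le_rfl]
    exact hθ₀ θ hθ _ (concat γ (-θ)).1 (concat γ (-θ)).2
  · obtain ⟨θ₀, hpos, hθ₀⟩ := counterclockwise a ha _ (apply_one hγ)
    filter_upwards [Ioc_mem_nhdsGT hpos] with θ hθ
    rw [← homotopyInvariant.concatRotation le_rfl]
    exact hθ₀ θ hθ _ (concat γ θ).1 (concat γ θ).2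
  · refine normalization _ ((toBasedPath_eq_hyperbolic_iff hτ _).1 ?_)
    rw [toBasedPath_ofBasedPath]

lemma apply_ofBasedPath_toBasedPath (hτ : 0 < τ) {i : ∀ n, SympPath τ n → ℤ}
    (hi : CZAxioms τ i) (hn : 1 ≤ n) (γ : SympPath τ n) :
    i n (ofBasedPath τ (toBasedPath hτ γ)) = i n γ := by
  refine hi.1 n hn _ _ ⟨fun _ t ↦ γ.toFun t, ?_, fun _ _ t ht ↦ γ.mem_Sp t ht,
    fun t ht ↦ ⟨(toBasedPath_eq_iff hτ γ _).1 rfl t ht, rfl⟩, fun _ _ ↦ γ.init,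
    fun _ _ _ _ ↦ rfl⟩
  exact γ.continuousOn.comp continuousOn_snd fun p hp ↦ hp.2

end SympPath

/-! ### Indices without jump in the symplectic plane -/

open Filter Topology in
lemma eventually_nhds_zero {p : ℝ → Prop} (h0 : p 0) (hpos : ∀ᶠ u in 𝓝[>] (0 : ℝ), p u)
    (hneg : ∀ᶠ u in 𝓝[>] (0 : ℝ), p (-u)) : ∀ᶠ u in 𝓝 (0 : ℝ), p u := by
  rw [← nhdsNE_sup_pure, ← nhdsLT_sup_nhdsGT, eventually_sup, eventually_sup]
  refine ⟨⟨?_, hpos⟩, h0⟩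
  have htends : Tendsto Neg.neg (𝓝[<] (0 : ℝ)) (𝓝[>] 0) := by
    simpa only [neg_zero] using tendsto_neg_nhdsLT (a := (0 : ℝ))
  filter_upwards [htends.eventually hneg] with u hu
  rwa [neg_neg] at hu

section HyperbolicShear

open Real

/-- The trace condition making the shear by `±m` times a small rotation by `±m φ` hyperbolic. -/
lemma two_lt_two_mul_cos_add_mul_sin {m φ : ℝ} (hm : m ∈ Ioc 0 1) (hφ : φ ∈ Ioc 0 (1 / 2)) :
    2 < 2 * cos (m * φ) + m * sin (m * φ) := by
  have hpos : 0 < m * φ := mul_pos hm.1 hφ.1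
  have hle : m * φ ≤ 1 / 2 := (mul_le_of_le_one_left hφ.1.le hm.2).trans hφ.2
  have hcos := one_sub_sq_div_two_le_cos (x := m * φ)
  have hsin := sin_gt_sub_cube hpos
  have hcube : (m * φ) ^ 3 ≤ m * φ * (1 / 4) := by nlinarith [mul_pos hpos hpos]
  have hsin' : m * (m * φ / 2) < m * sin (m * φ) := mul_lt_mul_of_pos_left (by linarith) hm.1
  nlinarith [mul_nonneg (mul_pos hm.1 hpos).le (sub_nonneg.2 hφ.2)]

namespace Sp

lemma nondegenerate_hyperbolic_mul_shear_mul_rotation {a : ℝ} (ha : a = 1 ∨ a = -1) {s φ : ℝ}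
    (hs : s ∈ Icc 0 1) (hφ : φ ∈ Ioc 0 (1 / 2)) : Nondegenerate (hyperbolic (s * log 2) *
      shear ((1 - s) * a) * rotation 1 (a * ((1 - s) * φ))) := by
  have hcos (y : ℝ) : cos (a * y) = cos y := by rcases ha with rfl | rfl <;> simp
  have hsin (y : ℝ) : a * sin (a * y) = sin y := by rcases ha with rfl | rfl <;> simp
  rw [nondegenerate_iff_trace_ne, trace_hyperbolic_mul_shear_mul_rotation, hcos, mul_assoc (1 - s),
    hsin]
  rcases hs.2.eq_or_lt with rfl | hs1
  · have h := one_lt_cosh.2 (log_pos one_lt_two).ne'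
    rw [cosh_eq] at h
    refine ne_of_gt ?_
    simp only [one_mul, sub_self, zero_mul, cos_zero, sin_zero, mul_zero, add_zero, mul_one]
    linarith
  · have hpos := two_lt_two_mul_cos_add_mul_sin (m := 1 - s) ⟨sub_pos.2 hs1, by linarith [hs.1]⟩ hφ
    have hcosh := one_le_cosh (s * log 2)
    rw [cosh_eq] at hcosh
    have hexp : 1 ≤ exp (s * log 2) := one_le_exp (mul_nonneg hs.1 (log_nonneg one_le_two))
    have hy : (1 - s) * φ ∈ Ioc 0 (1 / 2) := ⟨mul_pos (sub_pos.2 hs1) hφ.1,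
      (mul_le_of_le_one_left hφ.1.le (by linarith [hs.1])).trans hφ.2⟩
    have hsin_pos : 0 < (1 - s) * sin ((1 - s) * φ) :=
      mul_pos (sub_pos.2 hs1) (sin_pos_of_pos_of_lt_pi hy.1 (by linarith [hy.2, pi_gt_three]))
    have hcos_pos : 0 < cos ((1 - s) * φ) :=
      cos_pos_of_mem_Ioo ⟨by linarith [hy.1, pi_gt_three], by linarith [hy.2, pi_gt_three]⟩
    refine ne_of_gt ?_
    nlinarith [mul_nonneg (sub_nonneg.2 hcosh) hcos_pos.le]

lemma nondegenerate_shear_mul_rotation_neg {a : ℝ} (ha : a = 1 ∨ a = -1) {s φ : ℝ}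
    (hs : s ∈ Icc 0 1) (hφ : φ ∈ Ioc 0 (1 / 2)) :
    Nondegenerate (shear ((1 - s) * a) * rotation 1 (-(a * φ))) := by
  have htrace := trace_hyperbolic_mul_shear_mul_rotation 0 ((1 - s) * a) (-(a * φ))
  have hcos : cos (-(a * φ)) = cos φ := by rcases ha with rfl | rfl <;> simp
  have hsin : a * sin (-(a * φ)) = -sin φ := by rcases ha with rfl | rfl <;> simp
  rw [hyperbolic_zero, one_mul, hcos, mul_assoc (1 - s), hsin, neg_zero, exp_zero] at htrace
  have hsin_pos : 0 < sin φ := sin_pos_of_pos_of_lt_pi hφ.1 (by linarith [hφ.2, pi_gt_three])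
  have hcos_lt : cos φ < 1 := by nlinarith [sin_sq_add_cos_sq φ]
  rw [nondegenerate_iff_trace_ne, htrace]
  exact ne_of_lt (by nlinarith [mul_nonneg (sub_nonneg.2 hs.2) hsin_pos.le])

end Sp

end HyperbolicShear

namespace BasedPath

open Filter Topology

/-- The path `t ↦ !![1, a * t; 0, 1]`. -/
def shear (a : ℝ) : BasedPath 1 :=
  of (fun t ↦ Sp.shear (a * t)) (by fun_prop) (by simp [Sp.shear_zero])

lemma shear_apply (a : ℝ) (t : unitInterval) : shear a t = Sp.shear (a * t) := rfl

lemma shear_apply_one (a : ℝ) : shear a 1 = Sp.shear a := by simp [shear_apply]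

lemma blockSum_mul {p q : ℕ} (a c : BasedPath p) (b d : BasedPath q) :
    BasedPath.blockSum (a * c) (b * d) = BasedPath.blockSum a b * BasedPath.blockSum c d :=
  DFunLike.ext _ _ fun t ↦ Sp.blockSum_mul (a t) (c t) (b t) (d t)

lemma blockSum_rotation (p q : ℕ) (θ : ℝ) :
    BasedPath.blockSum (rotation p θ) (rotation q θ) = rotation (p + q) θ :=
  DFunLike.ext _ _ fun t : unitInterval ↦ Sp.blockSum_rotation (θ * t)

lemma HomotopyInvariant.eq_of_nondegenerate {i : ∀ n, BasedPath n → ℤ} (hi : HomotopyInvariant i)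
    {n : ℕ} (hn : 1 ≤ n) {F : unitInterval → BasedPath n} (hF : Continuous F)
    (hend : ∀ s, Sp.Nondegenerate (F s 1)) : i n (F 0) = i n (F 1) :=
  hi hn hF fun s s' ↦ by rw [(hend s).rankSubOne_eq, (hend s').rankSubOne_eq]

namespace IsIndexWithJump

variable {D : ∀ n, BasedPath n → ℤ}

/-- The homotopy stretches the hyperbolic factor while removing the shear and the rotation. -/
lemma shear_mul_rotation_eq_zero {k : ℤ} (hD : IsIndexWithJump k D) {a : ℝ} (ha : a = 1 ∨ a = -1)
    {φ : ℝ} (hφ : φ ∈ Ioc 0 (1 / 2)) : D 1 (shear a * BasedPath.rotation 1 (a * φ)) = 0 := by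
  let F (s : unitInterval) : BasedPath 1 :=
    of (fun t ↦ Sp.hyperbolic (s * Real.log (1 + t)) * Sp.shear ((1 - s) * a * t) *
      Sp.rotation 1 ((1 - s) * (a * φ) * t))
      (by fun_prop (disch := intro t; linarith [t.2.1]))
      (by simp [Sp.hyperbolic_zero, Sp.shear_zero])
  have hF : Continuous F := continuous_of_uncurry (by
    simp only [F, of_apply]
    fun_prop (disch := intro p; linarith [p.2.2.1]))
  have hend (s) : Sp.Nondegenerate (F s 1) := by
    have hF1 : F s 1 = Sp.hyperbolic (s * Real.log 2) * Sp.shear ((1 - s) * a) *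
        Sp.rotation 1 (a * ((1 - s) * φ)) := by
      simp only [F, of_apply, Icc.coe_one, mul_one, one_add_one_eq_two, mul_left_comm]
    rw [hF1]
    exact Sp.nondegenerate_hyperbolic_mul_shear_mul_rotation ha s.2 hφ
  have hF0 : F 0 = shear a * BasedPath.rotation 1 (a * φ) := by
    refine DFunLike.ext _ _ fun t ↦ ?_
    simp [F, of_apply, mul_apply, shear_apply, rotation_apply, Sp.hyperbolic_zero]
  have hF1 : F 1 = BasedPath.hyperbolic := by
    refine DFunLike.ext _ _ fun t ↦ ?_
    simp [F, of_apply, hyperbolic_apply, Sp.shear_zero]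
  rw [← hF0, hD.homotopyInvariant.eq_of_nondegenerate le_rfl hF hend, hF1, hD.hyperbolic]

lemma shear_mul_rotation_neg {k : ℤ} (hD : IsIndexWithJump k D) {a : ℝ} (ha : a = 1 ∨ a = -1)
    {φ : ℝ} (hφ : φ ∈ Ioc 0 (1 / 2)) : D 1 (shear a * BasedPath.rotation 1 (-(a * φ))) =
      D 1 (BasedPath.rotation 1 (-(a * φ))) := by
  let F (s : unitInterval) : BasedPath 1 := shear ((1 - s) * a) * BasedPath.rotation 1 (-(a * φ))
  have hF : Continuous F := continuous_of_uncurry (by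
    simp only [F, mul_apply, shear_apply, rotation_apply]
    fun_prop)
  have hend (s) : Sp.Nondegenerate (F s 1) := by
    simp only [F, mul_apply, shear_apply_one, rotation_apply, Icc.coe_one, mul_one]
    exact Sp.nondegenerate_shear_mul_rotation_neg ha s.2 hφ
  have hF0 : F 0 = shear a * BasedPath.rotation 1 (-(a * φ)) := by simp [F]
  have hF1 : F 1 = BasedPath.rotation 1 (-(a * φ)) := by
    refine DFunLike.ext _ _ fun t ↦ ?_
    simp [F, mul_apply, shear_apply, Sp.shear_zero]
  rw [← hF0, hD.homotopyInvariant.eq_of_nondegenerate le_rfl hF hend, hF1]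

lemma eventually_mul_rotation_of_eq_shear (hD : IsIndexWithJump 0 D) {a : ℝ}
    (ha : a = 1 ∨ a = -1) {γ : BasedPath 1} (hγ : γ 1 = Sp.shear a) :
    ∀ᶠ u in 𝓝 (0 : ℝ), D 1 (γ * BasedPath.rotation 1 u) = D 1 γ :=
  eventually_nhds_zero (by rw [BasedPath.rotation_zero, mul_one])
    (by simpa using hD.counterclockwise a ha γ hγ) (hD.clockwise a (.inr ha) γ hγ)

lemma shear_eq_zero (hD : IsIndexWithJump 0 D) {a : ℝ} (ha : a = 1 ∨ a = -1) :
    D 1 (shear a) = 0 := by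
  have htends : Tendsto (a * ·) (𝓝[>] 0) (𝓝 0) :=
    (continuous_const_mul a).tendsto' 0 0 (mul_zero a) |>.mono_left nhdsWithin_le_nhds
  obtain ⟨φ, hφ, h⟩ := ((eventually_mem_set.2 <| Ioc_mem_nhdsGT one_half_pos).and <|
    htends.eventually <| hD.eventually_mul_rotation_of_eq_shear ha (shear_apply_one a)).exists
  rw [← h, hD.shear_mul_rotation_eq_zero ha hφ]

lemma eventually_rotation_neg_eq_zero (hD : IsIndexWithJump 0 D) {a : ℝ} (ha : a = 1 ∨ a = -1) :
    ∀ᶠ φ in 𝓝[>] (0 : ℝ), D 1 (BasedPath.rotation 1 (-(a * φ))) = 0 := by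
  have htends : Tendsto (fun φ ↦ -(a * φ)) (𝓝[>] 0) (𝓝 0) :=
    (continuous_const_mul a).neg.tendsto' 0 0 (by simp) |>.mono_left nhdsWithin_le_nhds
  filter_upwards [Ioc_mem_nhdsGT one_half_pos, htends.eventually <|
    hD.eventually_mul_rotation_of_eq_shear ha (shear_apply_one a)] with φ hφ h
  rw [← hD.shear_mul_rotation_neg ha hφ, h, hD.shear_eq_zero ha]

lemma one_eq_zero (hD : IsIndexWithJump 0 D) : D 1 1 = 0 := by
  obtain ⟨φ, h₁, h₂⟩ := ((hD.clockwise 0 (.inl rfl) 1 Sp.shear_zero.symm).and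
    (hD.eventually_rotation_neg_eq_zero (.inl rfl))).exists
  rw [← h₁, one_mul, ← one_mul φ, h₂]

lemma eventually_rotation_eq_zero (hD : IsIndexWithJump 0 D) :
    ∀ᶠ u in 𝓝 (0 : ℝ), D 1 (BasedPath.rotation 1 u) = 0 :=
  eventually_nhds_zero (by rw [BasedPath.rotation_zero, hD.one_eq_zero])
    (by simpa using hD.eventually_rotation_neg_eq_zero (.inr rfl))
    (by simpa using hD.eventually_rotation_neg_eq_zero (.inl rfl))

end IsIndexWithJump

/-- Some path with endpoint `a` keeps its value of `D` under all short rotations; for indices this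
holds for every path with endpoint `a`, see `IsRotationStable.eventually_mul_rotation`. -/
def IsRotationStable (D : ∀ n, BasedPath n → ℤ) {n : ℕ} (a : Sp n) : Prop :=
  ∃ γ : BasedPath n, γ 1 = a ∧ ∀ᶠ u in 𝓝 (0 : ℝ), D n (γ * BasedPath.rotation n u) = D n γ

namespace IsIndexWithJump

variable {D : ∀ n, BasedPath n → ℤ}

lemma isRotationStable_one (hD : IsIndexWithJump 0 D) : IsRotationStable D (1 : Sp 1) :=
  ⟨1, rfl, hD.eventually_rotation_eq_zero.mono fun u hu ↦ by rw [one_mul, hu, hD.one_eq_zero]⟩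

lemma isRotationStable_shear (hD : IsIndexWithJump 0 D) {a : ℝ} (ha : a = 1 ∨ a = -1) :
    IsRotationStable D (Sp.shear a) :=
  ⟨shear a, shear_apply_one a, hD.eventually_mul_rotation_of_eq_shear ha (shear_apply_one a)⟩

lemma isRotationStable_blockSum {k : ℤ} (hD : IsIndexWithJump k D) {p q : ℕ} (hp : 1 ≤ p)
    (hq : 1 ≤ q) {a : Sp p} {b : Sp q} (ha : IsRotationStable D a) (hb : IsRotationStable D b) :
    IsRotationStable D (Sp.blockSum a b) := by
  obtain ⟨x, rfl, hx⟩ := ha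
  obtain ⟨y, rfl, hy⟩ := hb
  refine ⟨BasedPath.blockSum x y, rfl, ?_⟩
  filter_upwards [hx, hy] with u hux huy
  rw [← BasedPath.blockSum_rotation, ← blockSum_mul, hD.blockSum hp hq, hD.blockSum hp hq, hux, huy]

end IsIndexWithJump

end BasedPath

/-! ### Rotation stability -/

namespace Sp

variable {n : ℕ}

lemma isOpen_setOf_nondegenerate : IsOpen {a : Sp n | Nondegenerate a} :=
  isOpen_ne_fun (Continuous.matrix_det (by fun_prop)) continuous_const

/-- The unitary rotation by the angle `θ` mixing the two summands of `ℝ^{2n} ⊕ ℝ^{2n}`; by the angle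
`π / 2` it swaps them. -/
def blockRotation (n : ℕ) (θ : ℝ) : Sp (n + n) :=
  ⟨reindex (blockEquiv n n) (blockEquiv n n) <| fromBlocks (Real.cos θ • 1) (-Real.sin θ • 1)
      (Real.sin θ • 1) (Real.cos θ • 1), mem_Sp_iff_mul_stdJ_mul_transpose.2 <| by
    rw [← blockHom_stdJ, blockHom_apply, transpose_reindex]
    simp only [reindex_apply, submatrix_mul_equiv, fromBlocks_transpose, fromBlocks_multiply]
    congr 2 <;> simp [smul_smul, ← add_smul, mul_comm, ← sq]⟩

lemma coe_blockRotation (θ : ℝ) : (blockRotation n θ : Mat (n + n)) =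
    reindex (blockEquiv n n) (blockEquiv n n) (fromBlocks (Real.cos θ • 1) (-Real.sin θ • 1)
      (Real.sin θ • 1) (Real.cos θ • 1)) := rfl

@[fun_prop]
lemma continuous_blockRotation : Continuous (blockRotation n) :=
  continuous_induced_rng.2 <| Continuous.matrix_reindex
    (.matrix_fromBlocks (by fun_prop) (by fun_prop) (by fun_prop) (by fun_prop)) _ _

lemma blockRotation_zero : blockRotation n 0 = 1 :=
  Subtype.ext (by simp [coe_blockRotation, coe_one])

lemma blockRotation_pi_div_two_mul_blockSum_mul_inv (a b : Sp n) :
    blockRotation n (Real.pi / 2) * blockSum a b * (blockRotation n (Real.pi / 2))⁻¹ =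
      blockSum b a := by
  rw [mul_inv_eq_iff_eq_mul]
  refine Subtype.ext ?_
  rw [coe_mul, coe_mul, coe_blockSum, coe_blockSum, blockHom_apply, blockHom_apply,
    coe_blockRotation]
  simp only [reindex_apply, submatrix_mul_equiv, fromBlocks_multiply]
  simp

end Sp

namespace BasedPath

open Filter Topology

variable {n : ℕ}

/-- The path `t ↦ γ (r t)`. -/
def initialSegment (γ : BasedPath n) (r : unitInterval) : BasedPath n :=
  of (fun t ↦ γ (r * t)) (by fun_prop) (by simp [apply_zero])

lemma initialSegment_apply (γ : BasedPath n) (r t : unitInterval) :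
    initialSegment γ r t = γ (r * t) := rfl

lemma initialSegment_zero (γ : BasedPath n) : initialSegment γ 0 = 1 :=
  DFunLike.ext _ _ fun t ↦ by simp [initialSegment_apply, apply_zero, one_apply]

lemma initialSegment_one (γ : BasedPath n) : initialSegment γ 1 = γ :=
  DFunLike.ext _ _ fun t ↦ by simp [initialSegment_apply]

lemma continuous_initialSegment (γ : BasedPath n) : Continuous (initialSegment γ) :=
  continuous_of_uncurry (by simp only [initialSegment_apply]; fun_prop)

lemma rotation_add (θ θ' : ℝ) : rotation n (θ + θ') = rotation n θ * rotation n θ' :=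
  DFunLike.ext _ _ fun t ↦ by
    rw [mul_apply, rotation_apply, rotation_apply, rotation_apply, add_mul, Sp.rotation_add]

/-- The path `t ↦ g γ(t) g⁻¹`. -/
def conj (g : Sp n) (γ : BasedPath n) : BasedPath n :=
  of (fun t ↦ g * γ t * g⁻¹) (by fun_prop) (by simp [apply_zero])

lemma conj_apply (g : Sp n) (γ : BasedPath n) (t : unitInterval) :
    conj g γ t = g * γ t * g⁻¹ := rfl

/-- Swapping the two summands in `γ ⋄ 1` by a block rotation moves the loop from one to the
other. -/
lemma IsIndexWithJump.loop_mul_add {k : ℤ} {D : ∀ n, BasedPath n → ℤ} (hD : IsIndexWithJump k D)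
    (hn : 1 ≤ n) {l : BasedPath n} (hl : l 1 = 1) (x y : BasedPath n) :
    D n (l * x) + D n y = D n x + D n (l * y) := by
  rw [← hD.blockSum hn hn, ← hD.blockSum hn hn]
  let F (s : unitInterval) : BasedPath (n + n) :=
    conj (Sp.blockRotation n (Real.pi / 2 * s)) (BasedPath.blockSum l 1) * BasedPath.blockSum x y
  have hF : Continuous F := continuous_of_uncurry (by
    simp only [F, mul_apply, conj_apply, blockSum_apply]
    fun_prop)
  have hF0 : F 0 = BasedPath.blockSum (l * x) y := DFunLike.ext _ _ fun t ↦ by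
    simp [F, mul_apply, conj_apply, blockSum_apply, Sp.blockRotation_zero, ← Sp.blockSum_mul,
      one_apply]
  have hF1 : F 1 = BasedPath.blockSum x (l * y) := DFunLike.ext _ _ fun t ↦ by
    simp [F, mul_apply, conj_apply, blockSum_apply, ← Sp.blockSum_mul,
      Sp.blockRotation_pi_div_two_mul_blockSum_mul_inv, one_apply]
  have hend (s) : F s 1 = Sp.blockSum (x 1) (y 1) := by
    simp [F, mul_apply, conj_apply, blockSum_apply, hl, one_apply, Sp.blockSum_one]
  rw [← hF0, ← hF1]
  exact hD.homotopyInvariant (by lia) hF fun s s' ↦ by rw [hend, hend]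

namespace IsRotationStable

variable {k : ℤ} {D : ∀ n, BasedPath n → ℤ}

lemma eventually_mul_rotation {γ : BasedPath n} (h : IsRotationStable D (γ 1))
    (hD : IsIndexWithJump k D) (hn : 1 ≤ n) :
    ∀ᶠ u in 𝓝 (0 : ℝ), D n (γ * BasedPath.rotation n u) = D n γ := by
  obtain ⟨x, hx1, hx⟩ := h
  filter_upwards [hx] with u hu
  have hloop := hD.loop_mul_add hn (l := γ * x⁻¹) (by simp [mul_apply, inv_apply, hx1])
    (x * BasedPath.rotation n u) x
  rw [hu, ← mul_assoc, inv_mul_cancel_right] at hloop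
  linarith

lemma of_joinedIn (hD : IsIndexWithJump k D) (hn : 1 ≤ n) {a b : Sp n}
    (ha : IsRotationStable D a)
    (hab : JoinedIn {c | Sp.rankSubOne c = Sp.rankSubOne a} a b) : IsRotationStable D b := by
  obtain ⟨x, rfl, hx⟩ := ha
  obtain ⟨M, hM⟩ := hab
  let N : BasedPath n := of (fun t ↦ M t * (x 1)⁻¹) (by fun_prop) (by simp)
  let F (s : unitInterval) : BasedPath n := initialSegment N s * x
  have hF : Continuous F := (continuous_initialSegment N).mul continuous_const
  have hF0 : F 0 = x := by simp only [F, initialSegment_zero, one_mul]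
  have hend (s) : F s 1 = M s := by simp [F, N, mul_apply, initialSegment_apply, of_apply]
  refine ⟨F 1, by rw [hend, M.target], ?_⟩
  have hrank (s s') : Sp.rankSubOne (M s) = Sp.rankSubOne (M s') := (hM s).trans (hM s').symm
  filter_upwards [hx, eventually_nhdsWithin_iff.1 <|
    Sp.eventually_nondegenerate_mul_rotation M.continuous hrank] with u hxu hu
  rcases eq_or_ne u 0 with rfl | hu0
  · rw [BasedPath.rotation_zero, mul_one]
  · rw [← hD.homotopyInvariant hn hF fun s s' ↦ by rw [hend, hend, hrank],
      ← hD.homotopyInvariant.eq_of_nondegenerate hn (F := fun s ↦ F s * BasedPath.rotation n u)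
        (by fun_prop) fun s ↦ ?_, hF0, hxu]
    simpa [mul_apply, hend, rotation_apply] using hu hu0 s

end IsRotationStable

namespace IsIndexWithJump

variable {k : ℤ} {D : ∀ n, BasedPath n → ℤ}

lemma mul_rotation_of_isRotationStable (hD : IsIndexWithJump k D) (hn : 1 ≤ n)
    (hstable : ∀ a : Sp n, IsRotationStable D a) (γ : BasedPath n) (u : ℝ) :
    D n (γ * BasedPath.rotation n u) = D n γ := by
  have hconst : IsLocallyConstant fun u ↦ D n (γ * BasedPath.rotation n u) := by
    rw [IsLocallyConstant.iff_eventually_eq]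
    intro u
    have htends : Tendsto (· - u) (𝓝 u) (𝓝 0) := (continuous_sub_right u).tendsto' _ _ (sub_self u)
    have hstable_u := hstable ((γ * BasedPath.rotation n u) 1)
    filter_upwards [htends.eventually <| hstable_u.eventually_mul_rotation hD hn] with v hv
    rwa [mul_assoc, ← BasedPath.rotation_add, add_sub_cancel] at hv
  have h := hconst.apply_eq_of_preconnectedSpace u 0
  rwa [BasedPath.rotation_zero, mul_one] at h

lemma eq_one_of_isRotationStable (hD : IsIndexWithJump k D) (hn : 1 ≤ n)
    (hstable : ∀ a : Sp n, IsRotationStable D a) (γ : BasedPath n) : D n γ = D n 1 := by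
  let F (r : ℝ) : BasedPath n := initialSegment γ (projIcc 0 1 zero_le_one r)
  have hF : Continuous F := (continuous_initialSegment γ).comp continuous_projIcc
  have hconst : IsLocallyConstant fun r ↦ D n (F r) := by
    rw [IsLocallyConstant.iff_eventually_eq]
    intro r
    obtain ⟨u, hu⟩ := (Sp.eventually_nondegenerate_mul_rotation (f := fun _ : Unit ↦ F r 1)
      continuous_const fun _ _ ↦ rfl).exists
    have hopen : IsOpen {r | Sp.Nondegenerate (F r 1 * Sp.rotation n u)} :=
      Sp.isOpen_setOf_nondegenerate.preimage (by fun_prop)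
    obtain ⟨W, ⟨hW, hWconn, hWsub⟩, -⟩ :=
      (pathConnected_subset_basis hopen (hu ())).mem_iff.1 Filter.univ_mem
    filter_upwards [hW] with r' hr'
    obtain ⟨p, hp⟩ := hWconn.joinedIn r' hr' r (mem_of_mem_nhds hW)
    rw [← hD.mul_rotation_of_isRotationStable hn hstable (F r') u,
      ← hD.mul_rotation_of_isRotationStable hn hstable (F r) u]
    have h := hD.homotopyInvariant.eq_of_nondegenerate hn
      (F := fun s ↦ F (p s) * BasedPath.rotation n u) (by fun_prop) fun s ↦ by
        simpa [mul_apply, rotation_apply] using hWsub (hp s)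
    rwa [p.source, p.target] at h
  have hF0 : F 0 = 1 := by simp only [F, projIcc_left]; exact initialSegment_zero γ
  have hF1 : F 1 = γ := by simp only [F, projIcc_right]; exact initialSegment_one γ
  rw [← hF0, ← hF1]
  exact hconst.apply_eq_of_preconnectedSpace 1 0

end IsIndexWithJump

end BasedPath

/-! ### Hamiltonian matrices and the real Cayley transform -/

/-- The elements of the Lie algebra of `Sp n`. -/
def IsHamiltonian {n : ℕ} (K : Mat n) : Prop := K * stdJ n + stdJ n * Kᵀ = 0

namespace IsHamiltonian

variable {n : ℕ} {K : Mat n}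

lemma stdJ_mul_transpose (hK : IsHamiltonian K) : stdJ n * Kᵀ = -(K * stdJ n) :=
  eq_neg_of_add_eq_zero_right hK

lemma smul (hK : IsHamiltonian K) (c : ℝ) : IsHamiltonian (c • K) := by
  rw [IsHamiltonian, transpose_smul, smul_mul_assoc, mul_smul_comm, ← smul_add, hK, smul_zero]

end IsHamiltonian

namespace Sp

variable {n : ℕ}

lemma mem_of_mul_eq {A B C : Mat n} (hA : IsUnit A) (hAC : A * C = B)
    (h : B * stdJ n * Bᵀ = A * stdJ n * Aᵀ) : C ∈ Sp n := by
  rw [mem_Sp_iff_mul_stdJ_mul_transpose]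
  refine hA.mul_left_cancel (((isUnit_transpose A).2 hA).mul_right_cancel ?_)
  rw [← mul_assoc A, ← h, ← hAC, transpose_mul]
  noncomm_ring

/-- The real Cayley transform `(1 - K)⁻¹ (1 + K)` of a Hamiltonian matrix. -/
def ofHamiltonian (K : Mat n) (hK : IsHamiltonian K) (hunit : IsUnit (1 - K)) : Sp n :=
  ⟨(1 - K)⁻¹ * (1 + K), mem_of_mul_eq hunit
    (mul_nonsing_inv_cancel_left _ _ ((isUnit_iff_isUnit_det _).1 hunit)) <| by
      simp only [transpose_add, transpose_sub, transpose_one, mul_add, add_mul, mul_sub, sub_mul,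
        mul_one, one_mul, mul_assoc, hK.stdJ_mul_transpose]
      abel⟩

section OfHamiltonian

variable {K : Mat n} (hK : IsHamiltonian K) (hunit : IsUnit (1 - K))

lemma one_sub_mul_ofHamiltonian : (1 - K) * (ofHamiltonian K hK hunit : Mat n) = 1 + K :=
  mul_nonsing_inv_cancel_left _ _ ((isUnit_iff_isUnit_det _).1 hunit)

lemma ofHamiltonian_eq {a : Sp n} (h : (1 - K) * (a : Mat n) = 1 + K) :
    ofHamiltonian K hK hunit = a :=
  Subtype.ext <| hunit.mul_left_cancel <| (one_sub_mul_ofHamiltonian hK hunit).trans h.symm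

lemma one_sub_mul_ofHamiltonian_sub_one :
    (1 - K) * ((ofHamiltonian K hK hunit : Mat n) - 1) = (2 : ℝ) • K := by
  rw [mul_sub, one_sub_mul_ofHamiltonian, mul_one, two_smul]
  abel

lemma rankSubOne_ofHamiltonian : rankSubOne (ofHamiltonian K hK hunit) = K.rank := by
  rw [rankSubOne, ← rank_mul_eq_right_of_isUnit_det _ _ ((isUnit_iff_isUnit_det _).1 hunit),
    one_sub_mul_ofHamiltonian_sub_one hK hunit,
    rank_smul_of_mem_nonZeroDivisors _ (by simp)]

end OfHamiltonian

lemma continuous_ofHamiltonian {X : Type*} [TopologicalSpace X] {K : X → Mat n}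
    (hcont : Continuous K) (hK : ∀ x, IsHamiltonian (K x)) (hunit : ∀ x, IsUnit (1 - K x)) :
    Continuous fun x ↦ ofHamiltonian (K x) (hK x) (hunit x) := by
  refine Continuous.subtype_mk (.mul (continuous_iff_continuousAt.2 fun x ↦ ?_) (by fun_prop)) _
  refine (continuousAt_matrix_inv _ ?_).comp (f := fun x ↦ 1 - K x) (by fun_prop)
  rw [Ring.inverse_eq_inv']
  exact continuousAt_inv₀ ((isUnit_iff_isUnit_det _).1 (hunit x)).ne_zero

/-- The inverse Cayley transform `(a - 1) (a + 1)⁻¹`. -/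
def toHamiltonian (a : Sp n) : Mat n := ((a : Mat n) - 1) * ((a : Mat n) + 1)⁻¹

lemma toHamiltonian_mul_add_one {a : Sp n} (ha : IsUnit ((a : Mat n) + 1)) :
    toHamiltonian a * ((a : Mat n) + 1) = (a : Mat n) - 1 :=
  nonsing_inv_mul_cancel_right _ _ ((isUnit_iff_isUnit_det _).1 ha)

lemma isHamiltonian_toHamiltonian {a : Sp n} (ha : IsUnit ((a : Mat n) + 1)) :
    IsHamiltonian (toHamiltonian a) := by
  have mul_eq : ((a : Mat n) + 1) * toHamiltonian a = (a : Mat n) - 1 := by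
    have hcomm : ((a : Mat n) + 1) * ((a : Mat n) - 1) = ((a : Mat n) - 1) * ((a : Mat n) + 1) := by
      noncomm_ring
    rw [toHamiltonian, ← mul_assoc, hcomm,
      mul_nonsing_inv_cancel_right _ _ ((isUnit_iff_isUnit_det _).1 ha)]
  refine ha.mul_left_cancel (((isUnit_transpose _).2 ha).mul_right_cancel ?_)
  set K := toHamiltonian a
  calc ((a : Mat n) + 1) * (K * stdJ n + stdJ n * Kᵀ) * ((a : Mat n) + 1)ᵀ
      = (((a : Mat n) + 1) * K) * stdJ n * ((a : Mat n) + 1)ᵀ +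
          ((a : Mat n) + 1) * stdJ n * (((a : Mat n) + 1) * K)ᵀ := by
        rw [transpose_mul]; noncomm_ring
    _ = (2 : ℝ) • ((a : Mat n) * stdJ n * (a : Mat n)ᵀ - stdJ n) := by
        rw [mul_eq, transpose_add, transpose_sub, transpose_one]
        simp only [add_mul, mul_add, sub_mul, mul_sub, mul_one, one_mul]
        module
    _ = ((a : Mat n) + 1) * 0 * ((a : Mat n) + 1)ᵀ := by
        rw [coe_mul_stdJ_mul_transpose]; simp

lemma isUnit_one_sub_smul_toHamiltonian {a : Sp n} (ha : IsUnit ((a : Mat n) + 1)) {c : ℝ}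
    (hc : IsUnit ((1 - c) • (a : Mat n) + (1 + c) • 1)) :
    IsUnit (1 - c • toHamiltonian a) := by
  have h : (1 - c • toHamiltonian a) * ((a : Mat n) + 1) =
      (1 - c) • (a : Mat n) + (1 + c) • 1 := by
    rw [sub_mul, smul_mul_assoc, toHamiltonian_mul_add_one ha, one_mul]; module
  rw [← h, isUnit_iff_isUnit_det, det_mul] at hc
  exact (isUnit_iff_isUnit_det _).2 (isUnit_of_mul_isUnit_left hc)

lemma ofHamiltonian_toHamiltonian {a : Sp n} (ha : IsUnit ((a : Mat n) + 1))
    (hK : IsHamiltonian (toHamiltonian a)) (hunit : IsUnit (1 - toHamiltonian a)) :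
    ofHamiltonian (toHamiltonian a) hK hunit = a := by
  have h := toHamiltonian_mul_add_one ha
  rw [mul_add, mul_one] at h
  refine ofHamiltonian_eq _ _ ?_
  rw [sub_mul, one_mul, eq_sub_of_add_eq h]
  abel

/-! ### Connectedness of the symplectic group -/

lemma joined_one_of_isUnit {a : Sp n}
    (ha : ∀ t : unitInterval, IsUnit ((1 - (t : ℝ)) • (a : Mat n) + (1 + (t : ℝ)) • 1)) :
    Joined 1 a := by
  have ha0 : IsUnit ((a : Mat n) + 1) := by simpa using ha 0
  have hK := isHamiltonian_toHamiltonian ha0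
  have hunit (t : unitInterval) := isUnit_one_sub_smul_toHamiltonian ha0 (ha t)
  refine ⟨⟨⟨fun t ↦ ofHamiltonian _ (hK.smul t) (hunit t),
    continuous_ofHamiltonian (by fun_prop) _ _⟩, ?_, ?_⟩⟩
  · exact ofHamiltonian_eq (hK.smul _) (hunit 0) (by simp [coe_one])
  · simp only [Icc.coe_one, one_smul, ofHamiltonian_toHamiltonian ha0]

lemma joined_one_rotation (θ : ℝ) : Joined 1 (rotation n θ) :=
  ⟨⟨⟨fun t ↦ rotation n (t * θ), by fun_prop⟩, by simp, by simp⟩⟩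

lemma joined_one_of_transpose_mul_self {a : Sp n} (horth : (a : Mat n)ᵀ * a = 1)
    (ha : IsUnit ((a : Mat n) + 1)) : Joined 1 a := by
  refine joined_one_of_isUnit fun t ↦ ?_
  by_contra hsing
  rw [isUnit_iff_isUnit_det, isUnit_iff_ne_zero, not_not] at hsing
  obtain ⟨x, hx, hax⟩ := exists_mulVec_eq_zero_iff.2 hsing
  rw [add_mulVec, smul_mulVec, smul_mulVec, one_mulVec] at hax
  have norm_eq : (a : Mat n) *ᵥ x ⬝ᵥ (a : Mat n) *ᵥ x = x ⬝ᵥ x := by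
    rw [dotProduct_mulVec, vecMul_mulVec, horth, vecMul_one]
  have hsq := congrArg (fun y ↦ y ⬝ᵥ y) (eq_neg_of_add_eq_zero_left hax)
  simp only [smul_dotProduct, dotProduct_smul, neg_dotProduct, dotProduct_neg, norm_eq,
    smul_eq_mul] at hsq
  have ht : (t : ℝ) = 0 :=
    (mul_eq_zero.1 (by linarith : (t : ℝ) * (x ⬝ᵥ x) = 0)).resolve_right
      (dotProduct_self_eq_zero.not.2 hx)
  simp only [ht, sub_zero, add_zero, one_smul] at hsing
  exact ((isUnit_iff_isUnit_det _).1 ha).ne_zero hsing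

section Polar

open scoped MatrixOrder

lemma posDef_transpose_mul_self (a : Sp n) : ((a : Mat n)ᵀ * a).PosDef := by
  have h := posSemidef_conjTranspose_mul_self (a : Mat n)
  rw [conjTranspose_eq_transpose_of_trivial] at h
  rw [h.posDef_iff_det_ne_zero, det_mul, det_transpose]
  exact mul_ne_zero (isUnit_det a).ne_zero (isUnit_det a).ne_zero

lemma sqrt_mem_Sp {N : Mat n} (hN : N ∈ Sp n) (hpos : N.PosDef) : CFC.sqrt N ∈ Sp n := by
  have sqrt_posDef : (CFC.sqrt N).PosDef :=
    (IsStrictlyPositive.sqrt N hpos.isStrictlyPositive).posDef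
  have sqrt_mul_sqrt : CFC.sqrt N * CFC.sqrt N = N :=
    CFC.sqrt_mul_sqrt_self N hpos.posSemidef.nonneg
  have transpose_mul_J : (stdJ n)ᵀ * stdJ n = 1 := by
    rw [transpose_stdJ, neg_mul, stdJ_mul_stdJ, neg_neg]
  have J_mul_transpose : stdJ n * (stdJ n)ᵀ = 1 := by
    rw [transpose_stdJ, mul_neg, stdJ_mul_stdJ, neg_neg]
  have J_mul_inv : stdJ n * N⁻¹ = N * stdJ n := by
    have h := mem_Sp_iff_mul_stdJ_mul_transpose.1 hN
    rw [← conjTranspose_eq_transpose_of_trivial, hpos.isHermitian] at h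
    nth_rw 1 [← h]
    exact mul_nonsing_inv_cancel_right _ _ hpos.det_pos.ne'.isUnit
  -- `J (√N)⁻¹ Jᵀ` is a positive square root of `J N⁻¹ Jᵀ = N`, hence equal to `√N`.
  have sqrt_eq : CFC.sqrt N = stdJ n * (CFC.sqrt N)⁻¹ * (stdJ n)ᵀ := by
    refine CFC.sqrt_unique ?_ (nonneg_iff_posSemidef.2 ?_)
    · calc stdJ n * (CFC.sqrt N)⁻¹ * (stdJ n)ᵀ * (stdJ n * (CFC.sqrt N)⁻¹ * (stdJ n)ᵀ)
          = stdJ n * (CFC.sqrt N)⁻¹ * ((stdJ n)ᵀ * stdJ n) * (CFC.sqrt N)⁻¹ * (stdJ n)ᵀ := by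
            noncomm_ring
        _ = stdJ n * (CFC.sqrt N * CFC.sqrt N)⁻¹ * (stdJ n)ᵀ := by
            rw [transpose_mul_J, mul_one, Matrix.mul_inv_rev, mul_assoc (stdJ n)]
        _ = N := by rw [sqrt_mul_sqrt, J_mul_inv, mul_assoc, J_mul_transpose, mul_one]
    · rw [← conjTranspose_eq_transpose_of_trivial]
      exact sqrt_posDef.posSemidef.inv.mul_mul_conjTranspose_same (stdJ n)
  rw [mem_Sp_iff_mul_stdJ_mul_transpose, ← conjTranspose_eq_transpose_of_trivial,
    sqrt_posDef.isHermitian]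
  nth_rw 1 [sqrt_eq]
  rw [mul_assoc _ _ (stdJ n), transpose_mul_J, mul_one,
    nonsing_inv_mul_cancel_right _ _ sqrt_posDef.det_pos.ne'.isUnit]

lemma exists_posDef_mul_self_eq (a : Sp n) :
    ∃ p : Sp n, (p : Mat n).PosDef ∧ (p : Mat n) * p = (a : Mat n)ᵀ * a := by
  have hpos := posDef_transpose_mul_self a
  have hmem : (a : Mat n)ᵀ * a ∈ Sp n := ((⟨_, transpose_mem_Sp a.2⟩ : Sp n) * a).2
  exact ⟨⟨_, sqrt_mem_Sp hmem hpos⟩, (IsStrictlyPositive.sqrt _ hpos.isStrictlyPositive).posDef,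
    CFC.sqrt_mul_sqrt_self _ hpos.posSemidef.nonneg⟩

lemma joined_one_of_posDef {p : Sp n} (hp : (p : Mat n).PosDef) : Joined 1 p := by
  refine joined_one_of_isUnit fun t ↦ ?_
  have hsum := (PosDef.one (n := Fin (2 * n)) (R := ℝ)).smul (by linarith [t.2.1] :
    (0 : ℝ) < 1 + t) |>.posSemidef_add (hp.posSemidef.smul (by linarith [t.2.2] : (0 : ℝ) ≤ 1 - t))
  exact (isUnit_iff_isUnit_det _).2 hsum.det_pos.ne'.isUnit

end Polar

lemma exists_polar_decomposition (a : Sp n) :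
    ∃ u p : Sp n, a = u * p ∧ (u : Mat n)ᵀ * u = 1 ∧ (p : Mat n).PosDef := by
  obtain ⟨p, hp, hpp⟩ := exists_posDef_mul_self_eq a
  have transpose_p : (p : Mat n)ᵀ = p := by
    rw [← conjTranspose_eq_transpose_of_trivial, hp.isHermitian]
  refine ⟨a * p⁻¹, p, by simp, ?_, hp⟩
  have transpose_inv : ((p⁻¹ : Sp n) : Mat n)ᵀ * p = 1 := by
    have h := congrArg transpose (coe_mul_coe_inv p)
    rwa [transpose_mul, transpose_p, transpose_one] at h
  calc ((a * p⁻¹ : Sp n) : Mat n)ᵀ * (a * p⁻¹ : Sp n)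
      = ((p⁻¹ : Sp n) : Mat n)ᵀ * ((a : Mat n)ᵀ * a) * (p⁻¹ : Sp n) := by
        rw [coe_mul, transpose_mul]; noncomm_ring
    _ = (((p⁻¹ : Sp n) : Mat n)ᵀ * p) * ((p : Mat n) * (p⁻¹ : Sp n)) := by
        rw [← hpp]; noncomm_ring
    _ = 1 := by rw [transpose_inv, coe_mul_coe_inv, one_mul]

lemma transpose_rotation_mul_self (θ : ℝ) : (rotation n θ : Mat n)ᵀ * rotation n θ = 1 := by
  have h : (rotation n θ : Mat n)ᵀ = rotation n (-θ) := by
    simp [coe_rotation, transpose_stdJ]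
  rw [h, ← coe_mul, ← rotation_add, neg_add_cancel, rotation_zero, coe_one]

instance : PathConnectedSpace (Sp n) := by
  refine pathConnectedSpace_iff_eq.2 ⟨1, eq_univ_of_forall fun a ↦ ?_⟩
  obtain ⟨u, p, rfl, hu, hp⟩ := exists_polar_decomposition a
  obtain ⟨θ, hθ⟩ := (eventually_nondegenerate_mul_rotation
    (f := fun _ : Unit ↦ u * rotation n Real.pi) continuous_const fun _ _ ↦ rfl).exists
  have horth : ((u * rotation n θ : Sp n) : Mat n)ᵀ * (u * rotation n θ : Sp n) = 1 := by
    rw [coe_mul, transpose_mul, mul_assoc, ← mul_assoc _ (u : Mat n), hu, one_mul,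
      transpose_rotation_mul_self]
  have hunit : IsUnit (((u * rotation n θ : Sp n) : Mat n) + 1) := by
    have h : ((u * rotation n Real.pi * rotation n θ : Sp n) : Mat n) - 1 =
        -(((u * rotation n θ : Sp n) : Mat n) + 1) := by
      simp only [coe_mul, coe_rotation Real.pi]
      simp [sub_eq_add_neg, add_comm]
    have hdet := hθ ()
    rw [Nondegenerate, h, ← isUnit_iff_ne_zero, ← isUnit_iff_isUnit_det, IsUnit.neg_iff] at hdet
    exact hdet
  have hjoin := ((joined_one_of_transpose_mul_self horth hunit).mul
    (joined_one_rotation (-θ))).mul (joined_one_of_posDef hp)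
  rwa [mul_assoc u, ← rotation_add, add_neg_cancel, rotation_zero, mul_one, mul_one, mul_one]
    at hjoin

end Sp

namespace BasedPath

variable {n : ℕ}

lemma exists_apply_one_eq (a : Sp n) : ∃ γ : BasedPath n, γ 1 = a :=
  let ⟨p⟩ := PathConnectedSpace.joined (1 : Sp n) a
  ⟨of p p.continuous p.source, p.target⟩

namespace IsIndexWithJump

variable {k : ℤ} {D : ∀ n, BasedPath n → ℤ}

lemma isRotationStable_of_nondegenerate (hD : IsIndexWithJump k D) (hn : 1 ≤ n) {a : Sp n}
    (ha : Sp.Nondegenerate a) : IsRotationStable D a := by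
  obtain ⟨γ, rfl⟩ := exists_apply_one_eq a
  have hopen : IsOpen {u | Sp.Nondegenerate (γ 1 * Sp.rotation n u)} :=
    Sp.isOpen_setOf_nondegenerate.preimage (by fun_prop)
  obtain ⟨ε, hε, hball⟩ := Metric.isOpen_iff.1 hopen 0 (by simpa using ha)
  refine ⟨γ, rfl, Metric.eventually_nhds_iff_ball.2 ⟨ε, hε, fun u hu ↦ ?_⟩⟩
  have h := hD.homotopyInvariant.eq_of_nondegenerate hn
    (F := fun s ↦ γ * BasedPath.rotation n (s * u)) (by fun_prop) fun s ↦ by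
      rw [mul_apply, rotation_apply, Icc.coe_one, mul_one]
      exact hball ((convex_ball 0 ε).smul_mem_of_zero_mem (Metric.mem_ball_self hε) hu s.2)
  simpa [BasedPath.rotation_zero] using h.symm

lemma isRotationStable_conj (hD : IsIndexWithJump k D) (hn : 1 ≤ n) {a : Sp n}
    (ha : IsRotationStable D a) (g : Sp n) : IsRotationStable D (g * a * g⁻¹) := by
  obtain ⟨γ, rfl⟩ := exists_apply_one_eq g
  exact ha.of_joinedIn hD hn ⟨⟨⟨fun s ↦ γ s * a * (γ s)⁻¹, by fun_prop⟩, by simp [apply_zero],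
    rfl⟩, fun s ↦ Sp.rankSubOne_conj _ _⟩

end IsIndexWithJump

end BasedPath

/-! ### Unipotent endpoints -/

lemma isHamiltonian_mul_stdJ {n : ℕ} {S : Mat n} (hS : Sᵀ = S) : IsHamiltonian (S * stdJ n) := by
  rw [IsHamiltonian, transpose_mul, hS, transpose_stdJ, mul_assoc, stdJ_mul_stdJ, neg_mul, mul_neg,
    mul_neg, stdJ_mul_stdJ_mul]
  simp

lemma IsHamiltonian.exists_eq_mul_stdJ {n : ℕ} {K : Mat n} (hK : IsHamiltonian K) :
    ∃ S : Mat n, Sᵀ = S ∧ K = S * stdJ n :=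
  ⟨-(K * stdJ n), by
    rw [transpose_neg, transpose_mul, transpose_stdJ, neg_mul, neg_neg, hK.stdJ_mul_transpose],
    by rw [neg_mul, mul_assoc, stdJ_mul_stdJ]; simp⟩

section UnipotentExp

variable {m : Type*} [Fintype m] [DecidableEq m]

lemma exists_path_from_diagonal (R : Matrix m m ℝ) (hR : R.det ≠ 0) :
    ∃ F : unitInterval → Matrix m m ℝ,
      Continuous F ∧ (∃ d, F 0 = Matrix.diagonal d) ∧ F 1 = R ∧ ∀ s, IsUnit (F s).det := by
  refine diagonal_transvection_induction_of_det_ne_zero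
    (fun R ↦ ∃ F : unitInterval → Matrix m m ℝ,
      Continuous F ∧ (∃ d, F 0 = Matrix.diagonal d) ∧ F 1 = R ∧ ∀ s, IsUnit (F s).det) R hR ?_ ?_ ?_
  · exact fun d hd ↦ ⟨fun _ ↦ Matrix.diagonal d, continuous_const, ⟨d, rfl⟩, rfl, fun _ ↦ hd.isUnit⟩
  · intro t
    have hcont : Continuous fun s : unitInterval ↦ transvection t.i t.j (t.c * s) :=
      continuous_const.add <| continuous_matrix fun i j ↦ by
        simp only [single_apply]
        split_ifs <;> fun_prop
    exact ⟨fun s ↦ transvection t.i t.j (t.c * s), hcont, ⟨1, by simp⟩,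
      by simp [TransvectionStruct.toMatrix],
      fun s ↦ by rw [det_transvection_of_ne _ _ t.hij]; exact isUnit_one⟩
  · rintro A B - - ⟨F, hF, ⟨d, hd⟩, rfl, hFunit⟩ ⟨F', hF', ⟨d', hd'⟩, rfl, hFunit'⟩
    exact ⟨fun s ↦ F s * F' s, hF.mul hF', ⟨fun i ↦ d i * d' i,
      by simp only [hd, hd', diagonal_mul_diagonal]⟩, rfl,
      fun s ↦ by rw [det_mul]; exact (hFunit s).mul (hFunit' s)⟩

lemma exists_eq_transpose_mul_diagonal_mul {S : Matrix m m ℝ} (hS : Sᵀ = S) :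
    ∃ (R : Matrix m m ℝ) (d : m → ℝ), R.det ≠ 0 ∧ S = Rᵀ * Matrix.diagonal d * R := by
  have hH : S.IsHermitian := by rw [IsHermitian, conjTranspose_eq_transpose_of_trivial, hS]
  refine ⟨(hH.eigenvectorUnitary : Matrix m m ℝ)ᵀ, hH.eigenvalues, ?_, ?_⟩
  · rw [det_transpose]
    exact ((isUnit_iff_isUnit_det _).1 (Unitary.toUnits hH.eigenvectorUnitary).isUnit).ne_zero
  · rw [transpose_transpose]
    conv_lhs => rw [hH.spectral_theorem, Unitary.conjStarAlgAut_apply]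
    rw [star_eq_conjTranspose, conjTranspose_eq_transpose_of_trivial]
    rfl

open Filter Topology in
lemma exists_pos_forall_isUnit_one_sub_smul {X : Type*} [TopologicalSpace X] [CompactSpace X]
    {K : X → Matrix m m ℝ} (hK : Continuous K) : ∃ c > (0 : ℝ), ∀ x, IsUnit (1 - c • K x) := by
  have hcont : Continuous fun z : ℝ × X ↦ (1 - z.1 • K z.2).det := by fun_prop
  have heventually : ∀ᶠ c in 𝓝 (0 : ℝ), ∀ x ∈ (univ : Set X), (1 - c • K x).det ≠ 0 :=
    isCompact_univ.eventually_forall_of_forall_eventually fun x _ ↦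
      hcont.continuousAt.eventually_ne (by simp)
  obtain ⟨c, hunit, hc⟩ :=
    ((heventually.filter_mono nhdsWithin_le_nhds).and (self_mem_nhdsWithin (s := Ioi 0))).exists
  exact ⟨c, hc, fun x ↦ (isUnit_iff_isUnit_det _).2 (hunit x (mem_univ x)).isUnit⟩

end UnipotentExp

lemma diagonal_mul_stdJ (p q : ℕ) (d : Fin (2 * (p + q)) → ℝ) :
    Matrix.diagonal d * stdJ (p + q) =
      blockHom ℝ p q (Matrix.diagonal (fun i ↦ d (blockEquiv p q (.inl i))) * stdJ p,
        Matrix.diagonal (fun i ↦ d (blockEquiv p q (.inr i))) * stdJ q) := by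
  have h : Matrix.diagonal d =
      blockHom ℝ p q (Matrix.diagonal fun i ↦ d (blockEquiv p q (.inl i)),
        Matrix.diagonal fun i ↦ d (blockEquiv p q (.inr i))) := by
    rw [blockHom_apply, ← Equiv.symm_apply_eq]
    ext i j
    rcases i with i | i <;> rcases j with j | j <;> simp [diagonal_apply]
  rw [h, ← blockHom_stdJ, ← map_mul, Prod.mk_mul_mk]

lemma isUnit_blockHom_iff {p q : ℕ} {A : Mat p} {B : Mat q} :
    IsUnit (blockHom ℝ p q (A, B)) ↔ IsUnit A ∧ IsUnit B := by
  simp only [isUnit_iff_isUnit_det, det_blockHom, isUnit_iff_ne_zero, mul_ne_zero_iff]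

namespace Sp

lemma ofHamiltonian_blockHom {p q : ℕ} {K : Mat p} {L : Mat q}
    (hKL : IsHamiltonian (blockHom ℝ p q (K, L))) (hunit : IsUnit (1 - blockHom ℝ p q (K, L)))
    (hK : IsHamiltonian K) (hK_unit : IsUnit (1 - K)) (hL : IsHamiltonian L)
    (hL_unit : IsUnit (1 - L)) :
    ofHamiltonian (blockHom ℝ p q (K, L)) hKL hunit =
      blockSum (ofHamiltonian K hK hK_unit) (ofHamiltonian L hL hL_unit) := by
  refine ofHamiltonian_eq _ _ ?_
  rw [coe_blockSum, ← map_one (blockHom ℝ p q), ← map_sub, ← map_mul, ← map_add]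
  exact congrArg _ (Prod.ext (one_sub_mul_ofHamiltonian hK hK_unit)
    (one_sub_mul_ofHamiltonian hL hL_unit))

lemma joinedIn_ofHamiltonian {n : ℕ} {K : unitInterval → Mat n} (hcont : Continuous K)
    (hK : ∀ s, IsHamiltonian (K s)) (hunit : ∀ s, IsUnit (1 - K s))
    (hrank : ∀ s, (K s).rank = (K 0).rank) :
    JoinedIn {b | rankSubOne b = rankSubOne (ofHamiltonian _ (hK 0) (hunit 0))}
      (ofHamiltonian _ (hK 0) (hunit 0)) (ofHamiltonian _ (hK 1) (hunit 1)) :=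
  ⟨⟨⟨_, continuous_ofHamiltonian hcont hK hunit⟩, rfl, rfl⟩, fun s ↦ by
    simpa [rankSubOne_ofHamiltonian] using hrank s⟩

end Sp

namespace BasedPath.IsIndexWithJump

variable {D : ∀ n, BasedPath n → ℤ}

lemma isRotationStable_shear_real (hD : IsIndexWithJump 0 D) (a : ℝ) :
    IsRotationStable D (Sp.shear a) := by
  have stable {ε b : ℝ} (hε : ε = 1 ∨ ε = -1) (hb : 0 < b) :
      IsRotationStable D (Sp.shear (b * ε)) := by
    have h := hD.isRotationStable_conj le_rfl (hD.isRotationStable_shear hε)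
      (Sp.hyperbolic (Real.log b / 2))
    rwa [Sp.hyperbolic_mul_shear_mul_inv, mul_div_cancel₀ _ two_ne_zero, Real.exp_log hb] at h
  rcases lt_trichotomy a 0 with ha | rfl | ha
  · simpa using stable (.inr rfl) (neg_pos.2 ha)
  · exact Sp.shear_zero ▸ hD.isRotationStable_one
  · simpa using stable (.inl rfl) ha

lemma isRotationStable_ofHamiltonian_antidiagonal (hD : IsIndexWithJump 0 D) {a b : ℝ}
    (hK : IsHamiltonian (n := 1) !![0, -a; b, 0])
    (hunit : IsUnit (1 - (!![0, -a; b, 0] : Mat 1))) :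
    IsRotationStable D (Sp.ofHamiltonian _ hK hunit) := by
  by_cases hb : b = 0
  · subst hb
    rw [Sp.ofHamiltonian_eq hK hunit (a := Sp.shear (-2 * a))]
    · exact hD.isRotationStable_shear_real _
    · rw [Sp.coe_shear]
      ext i j
      fin_cases i <;> fin_cases j <;> simp [Matrix.mul_apply, Fin.sum_univ_two]
      ring
  by_cases ha : a = 0
  · subst ha
    rw [Sp.ofHamiltonian_eq hK hunit (a := Sp.rotation 1 (Real.pi / 2) * Sp.shear (-2 * b) *
      (Sp.rotation 1 (Real.pi / 2))⁻¹)]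
    · exact hD.isRotationStable_conj le_rfl (hD.isRotationStable_shear_real _) _
    · rw [← Sp.rotation_neg, Sp.coe_mul, Sp.coe_mul, Sp.coe_shear, Sp.coe_rotation_one,
        Sp.coe_rotation_one]
      ext i j
      fin_cases i <;> fin_cases j <;> simp [Matrix.mul_apply, Fin.sum_univ_two]
      ring
  · refine hD.isRotationStable_of_nondegenerate le_rfl fun hdet ↦ ?_
    have h := congrArg det (Sp.one_sub_mul_ofHamiltonian_sub_one hK hunit)
    rw [det_mul, hdet, mul_zero] at h
    have hab : a = 0 ∨ b = 0 := by simpa [det_fin_two] using h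
    tauto

lemma isRotationStable_ofHamiltonian_diagonal (hD : IsIndexWithJump 0 D) {n : ℕ} (hn : 1 ≤ n)
    (d : Fin (2 * n) → ℝ) (hK : IsHamiltonian (Matrix.diagonal d * stdJ n))
    (hunit : IsUnit (1 - Matrix.diagonal d * stdJ n)) :
    IsRotationStable D (Sp.ofHamiltonian _ hK hunit) := by
  have base (d : Fin (2 * 1) → ℝ) (hK : IsHamiltonian (Matrix.diagonal d * stdJ 1)) (hunit) :
      IsRotationStable D (Sp.ofHamiltonian _ hK hunit) := by
    have h : Matrix.diagonal d * stdJ 1 = !![0, -d 0; d 1, 0] := by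
      rw [stdJ_one]
      ext i j
      fin_cases i <;> fin_cases j <;> simp
    simp only [h] at hK hunit ⊢
    exact hD.isRotationStable_ofHamiltonian_antidiagonal hK hunit
  induction n, hn using Nat.le_induction with
  | base => exact base d hK hunit
  | succ n hn ih =>
    simp only [diagonal_mul_stdJ] at hK hunit ⊢
    obtain ⟨hunit₁, hunit₂⟩ := isUnit_blockHom_iff.1 <| by
      rwa [← map_one (blockHom ℝ n 1), ← map_sub] at hunit
    have hK₁ := isHamiltonian_mul_stdJ (diagonal_transpose fun i ↦ d (blockEquiv n 1 (.inl i)))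
    have hK₂ := isHamiltonian_mul_stdJ (diagonal_transpose fun i ↦ d (blockEquiv n 1 (.inr i)))
    rw [Sp.ofHamiltonian_blockHom hK hunit hK₁ hunit₁ hK₂ hunit₂]
    exact hD.isRotationStable_blockSum hn le_rfl (ih _ hK₁ hunit₁) (base _ hK₂ hunit₂)

lemma exists_isRotationStable_ofHamiltonian_smul (hD : IsIndexWithJump 0 D) {n : ℕ} (hn : 1 ≤ n)
    {K : Mat n} (hK : IsHamiltonian K) :
    ∃ c > (0 : ℝ), ∀ hunit, IsRotationStable D (Sp.ofHamiltonian (c • K) (hK.smul c) hunit) := by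
  obtain ⟨S, hS, rfl⟩ := hK.exists_eq_mul_stdJ
  obtain ⟨R, d, hR, rfl⟩ := exists_eq_transpose_mul_diagonal_mul hS
  obtain ⟨F, hF, ⟨d', hd'⟩, rfl, hF_unit⟩ := exists_path_from_diagonal R hR
  let L (s : unitInterval) : Mat n := (F s)ᵀ * Matrix.diagonal d * F s * stdJ n
  have hL (s) : IsHamiltonian (L s) :=
    isHamiltonian_mul_stdJ (by simp [transpose_mul, mul_assoc])
  have rank_L (s) : (L s).rank = (Matrix.diagonal d).rank := by
    rw [rank_mul_eq_left_of_isUnit_det _ _ (isUnit_det_stdJ n),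
      rank_mul_eq_left_of_isUnit_det _ _ (hF_unit s),
      rank_mul_eq_right_of_isUnit_det _ _ (by rw [det_transpose]; exact hF_unit s)]
  have L_zero : L 0 = Matrix.diagonal (fun i ↦ d' i * d i * d' i) * stdJ n := by
    simp only [L, hd', diagonal_transpose, diagonal_mul_diagonal]
  obtain ⟨c, hc, hunit⟩ := exists_pos_forall_isUnit_one_sub_smul (K := L) (by fun_prop)
  refine ⟨c, hc, fun _ ↦ ?_⟩
  have hjoin := Sp.joinedIn_ofHamiltonian (K := fun s ↦ c • L s) (by fun_prop)
    (fun s ↦ (hL s).smul c) hunit fun s ↦ by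
      rw [rank_smul_of_mem_nonZeroDivisors _ (by simpa using hc.ne'),
        rank_smul_of_mem_nonZeroDivisors _ (by simpa using hc.ne'), rank_L, rank_L]
  refine IsRotationStable.of_joinedIn hD hn ?_ hjoin
  have hc0 : c • L 0 = Matrix.diagonal (c • fun i ↦ d' i * d i * d' i) * stdJ n := by
    rw [L_zero, diagonal_smul, smul_mul_assoc]
  simp only [hc0]
  exact hD.isRotationStable_ofHamiltonian_diagonal hn _ _ _

lemma isRotationStable_of_isNilpotent (hD : IsIndexWithJump 0 D) {n : ℕ} (hn : 1 ≤ n) {a : Sp n}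
    (ha : IsNilpotent ((a : Mat n) - 1)) : IsRotationStable D a := by
  have hsum (c : ℝ) : IsUnit ((1 - c) • (a : Mat n) + (1 + c) • 1) := by
    have h : (1 - c) • (a : Mat n) + (1 + c) • 1 =
        algebraMap ℝ _ 2 + (1 - c) • ((a : Mat n) - 1) := by
      rw [Algebra.algebraMap_eq_smul_one]; module
    rw [h]
    exact (ha.smul (1 - c)).isUnit_add_left_of_commute
      ((isUnit_iff_ne_zero.2 two_ne_zero).map (algebraMap ℝ _)) (Algebra.commutes _ _).symm
  have ha_unit : IsUnit ((a : Mat n) + 1) := by simpa using hsum 0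
  have hK := Sp.isHamiltonian_toHamiltonian ha_unit
  have hunit (c : ℝ) := Sp.isUnit_one_sub_smul_toHamiltonian ha_unit (hsum c)
  obtain ⟨c, hc, hstable⟩ := hD.exists_isRotationStable_ofHamiltonian_smul hn hK
  have coeff_pos (s : unitInterval) : 0 < AffineMap.lineMap c 1 (s : ℝ) :=
    (convex_Ioi (0 : ℝ)).lineMap_mem hc (mem_Ioi.2 one_pos) s.2
  have hjoin := Sp.joinedIn_ofHamiltonian
    (K := fun s ↦ AffineMap.lineMap c 1 (s : ℝ) • Sp.toHamiltonian a) (by fun_prop)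
    (fun s ↦ hK.smul _) (fun s ↦ hunit _) fun s ↦ by
      rw [rank_smul_of_mem_nonZeroDivisors _ (by simpa using (coeff_pos s).ne'),
        rank_smul_of_mem_nonZeroDivisors _ (by simpa using (coeff_pos 0).ne')]
  simp only [Icc.coe_zero, Icc.coe_one, AffineMap.lineMap_apply_zero, AffineMap.lineMap_apply_one,
    one_smul, Sp.ofHamiltonian_toHamiltonian ha_unit] at hjoin
  exact (hstable _).of_joinedIn hD hn hjoin

end BasedPath.IsIndexWithJump

/-! ### Symplectic linear algebra -/

/-- The standard symplectic form as a bilinear form. -/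
def stdForm (n : ℕ) : LinearMap.BilinForm ℝ (Fin (2 * n) → ℝ) := Matrix.toBilin' (stdJ n)

lemma stdForm_apply {n : ℕ} (x y : Fin (2 * n) → ℝ) : stdForm n x y = x ⬝ᵥ stdJ n *ᵥ y :=
  Matrix.toBilin'_apply' _ x y

lemma stdForm_isAlt (n : ℕ) : (stdForm n).IsAlt := fun x ↦ by
  have h : x ⬝ᵥ stdJ n *ᵥ x = -(x ⬝ᵥ stdJ n *ᵥ x) := by
    conv_lhs => rw [dotProduct_mulVec, ← mulVec_transpose, transpose_stdJ, neg_mulVec,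
      neg_dotProduct, dotProduct_comm]
  rw [stdForm_apply]
  linarith

lemma stdForm_nondegenerate (n : ℕ) : (stdForm n).Nondegenerate :=
  LinearMap.BilinForm.nondegenerate_toBilin'_of_det_ne_zero' _ (isUnit_det_stdJ n).ne_zero

lemma stdForm_mulVec_mulVec {n : ℕ} (A : Mat n) (x y : Fin (2 * n) → ℝ) :
    stdForm n (A *ᵥ x) (A *ᵥ y) = Matrix.toBilin' (Aᵀ * stdJ n * A) x y := by
  rw [stdForm_apply, Matrix.toBilin'_apply', ← mulVec_mulVec, ← mulVec_mulVec,
    dotProduct_mulVec x, vecMul_transpose]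

lemma mem_Sp_iff_stdForm_mulVec {n : ℕ} {A : Mat n} :
    A ∈ Sp n ↔ (stdForm n).IsOrthogonal (A *ᵥ ·) := by
  simp_rw [LinearMap.IsOrthogonal, stdForm_mulVec_mulVec, ← LinearMap.ext_iff₂, stdForm,
    EmbeddingLike.apply_eq_iff_eq, mem_Sp_iff_transpose_mul_stdJ_mul]

/-- Concatenation of coordinates, compatible with `blockHom`. -/
def appendEquiv (p q : ℕ) :
    ((Fin (2 * p) → ℝ) × (Fin (2 * q) → ℝ)) ≃ₗ[ℝ] (Fin (2 * (p + q)) → ℝ) :=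
  (LinearEquiv.sumArrowLequivProdArrow _ _ ℝ ℝ).symm ≪≫ₗ
    LinearEquiv.funCongrLeft ℝ ℝ (blockEquiv p q).symm

section Append

variable {p q : ℕ}

lemma appendEquiv_apply (z : (Fin (2 * p) → ℝ) × (Fin (2 * q) → ℝ)) :
    appendEquiv p q z = Sum.elim z.1 z.2 ∘ (blockEquiv p q).symm := rfl

lemma blockHom_mulVec_appendEquiv (A : Mat p) (B : Mat q)
    (z : (Fin (2 * p) → ℝ) × (Fin (2 * q) → ℝ)) :
    blockHom ℝ p q (A, B) *ᵥ appendEquiv p q z = appendEquiv p q (A *ᵥ z.1, B *ᵥ z.2) := by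
  rw [appendEquiv_apply, appendEquiv_apply, blockHom_apply, reindex_apply, submatrix_mulVec_equiv,
    Equiv.symm_symm, Function.comp_assoc, Equiv.symm_comp_self, Function.comp_id, fromBlocks_mulVec]
  simp

lemma stdForm_appendEquiv (z w : (Fin (2 * p) → ℝ) × (Fin (2 * q) → ℝ)) :
    stdForm (p + q) (appendEquiv p q z) (appendEquiv p q w) =
      stdForm p z.1 w.1 + stdForm q z.2 w.2 := by
  rw [stdForm_apply, ← blockHom_stdJ, blockHom_mulVec_appendEquiv, appendEquiv_apply,
    appendEquiv_apply, comp_equiv_dotProduct_comp_equiv, sumElim_dotProduct_sumElim,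
    stdForm_apply, stdForm_apply]

end Append

/-- `T` identifies the form `B` with the standard symplectic form. -/
def IsDarbouxChart {V : Type*} [AddCommGroup V] [Module ℝ V] {p : ℕ}
    (B : LinearMap.BilinForm ℝ V) (T : V ≃ₗ[ℝ] (Fin (2 * p) → ℝ)) : Prop :=
  ∀ x y, stdForm p (T x) (T y) = B x y

lemma IsDarbouxChart.nondegenerate {V : Type*} [AddCommGroup V] [Module ℝ V] {p : ℕ}
    {B : LinearMap.BilinForm ℝ V} {T : V ≃ₗ[ℝ] (Fin (2 * p) → ℝ)} (hT : IsDarbouxChart B T) :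
    B.Nondegenerate := by
  have h : B = LinearMap.BilinForm.congr T.symm (stdForm p) :=
    LinearMap.ext₂ fun x y ↦ (hT x y).symm
  rw [h, LinearMap.BilinForm.nondegenerate_congr_iff]
  exact stdForm_nondegenerate p

section Darboux

variable {V : Type*} [AddCommGroup V] [Module ℝ V] {B : LinearMap.BilinForm ℝ V}
  {E F : Submodule ℝ V}

lemma nondegenerate_restrict_of_isCompl (hB : B.Nondegenerate) (hrefl : B.IsRefl)
    (hEF : IsCompl E F) (horth : ∀ x ∈ E, ∀ y ∈ F, B x y = 0) : (B.restrict E).Nondegenerate := by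
  refine B.nondegenerate_restrict_of_disjoint_orthogonal hrefl <|
    Submodule.disjoint_def.2 fun x hx hx' ↦ hB.1 x fun y ↦ ?_
  obtain ⟨u, hu, v, hv, rfl⟩ := Submodule.mem_sup.1 (hEF.sup_eq_top ▸ Submodule.mem_top (x := y))
  rw [map_add, hrefl _ _ (hx' u hu), horth x hx v hv, add_zero]

/-- The chart of an internal direct sum obtained by concatenating charts of the summands. -/
def sumChart (hEF : IsCompl E F) {p q : ℕ} (T : E ≃ₗ[ℝ] (Fin (2 * p) → ℝ))
    (T' : F ≃ₗ[ℝ] (Fin (2 * q) → ℝ)) : V ≃ₗ[ℝ] (Fin (2 * (p + q)) → ℝ) :=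
  (E.prodEquivOfIsCompl F hEF).symm ≪≫ₗ T.prodCongr T' ≪≫ₗ appendEquiv p q

lemma sumChart_add (hEF : IsCompl E F) {p q : ℕ} (T : E ≃ₗ[ℝ] (Fin (2 * p) → ℝ))
    (T' : F ≃ₗ[ℝ] (Fin (2 * q) → ℝ)) (u : E) (v : F) :
    sumChart hEF T T' (u + v) = appendEquiv p q (T u, T' v) := by
  rw [← Submodule.coe_prodEquivOfIsCompl' E F hEF (u, v)]
  simp only [sumChart, LinearEquiv.trans_apply, LinearEquiv.symm_apply_apply,
    LinearEquiv.prodCongr_apply]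

lemma IsDarbouxChart.of_isCompl (hrefl : B.IsRefl) (hEF : IsCompl E F)
    (horth : ∀ x ∈ E, ∀ y ∈ F, B x y = 0) {p q : ℕ} {T : E ≃ₗ[ℝ] (Fin (2 * p) → ℝ)}
    {T' : F ≃ₗ[ℝ] (Fin (2 * q) → ℝ)} (hT : IsDarbouxChart (B.restrict E) T)
    (hT' : IsDarbouxChart (B.restrict F) T') : IsDarbouxChart B (sumChart hEF T T') := by
  intro x y
  obtain ⟨⟨u, v⟩, rfl⟩ := (E.prodEquivOfIsCompl F hEF).surjective x
  obtain ⟨⟨u', v'⟩, rfl⟩ := (E.prodEquivOfIsCompl F hEF).surjective y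
  simp only [Submodule.coe_prodEquivOfIsCompl', sumChart_add, stdForm_appendEquiv, hT u u',
    hT' v v']
  simp only [map_add, LinearMap.add_apply, horth u u.2 v' v'.2, hrefl _ _ (horth u' u'.2 v v.2),
    LinearMap.BilinForm.restrict_apply, LinearMap.domRestrict_apply, zero_add, add_zero]

lemma stdForm_one_apply (x y : Fin (2 * 1) → ℝ) : stdForm 1 x y = x 1 * y 0 - x 0 * y 1 := by
  rw [stdForm_apply, stdJ_one]
  simp [dotProduct, mulVec, Fin.sum_univ_two]
  ring

lemma exists_isDarbouxChart_span_pair (halt : B.IsAlt) {e f : V} (h : B e f = -1) :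
    ∃ T : Submodule.span ℝ (range ![e, f]) ≃ₗ[ℝ] (Fin (2 * 1) → ℝ),
      IsDarbouxChart (B.restrict (Submodule.span ℝ (range ![e, f]))) T := by
  have hfe : B f e = 1 := by rw [← LinearMap.IsAlt.neg halt e f, h, neg_neg]
  have hindep : LinearIndependent ℝ ![e, f] := LinearIndependent.pair_iff.2 fun s t hst ↦ by
    have hs := congrArg (B f) hst
    have ht := congrArg (B e) hst
    simp only [map_add, map_smul, halt.self_eq_zero, h, hfe, map_zero, smul_eq_mul] at hs ht
    constructor <;> linarith
  let T := (Module.Basis.span hindep).equivFun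
  have hT (c) : (T.symm c : V) = c 0 • e + c 1 • f := by
    simp [T, Module.Basis.equivFun_symm_apply, Module.Basis.span_apply]
  refine ⟨T, fun x y ↦ ?_⟩
  obtain ⟨c, rfl⟩ := T.symm.surjective x
  obtain ⟨d, rfl⟩ := T.symm.surjective y
  rw [T.apply_symm_apply, T.apply_symm_apply, stdForm_one_apply]
  simp [hT, h, hfe, halt.self_eq_zero]
  ring

lemma exists_isDarbouxChart [FiniteDimensional ℝ V] (hB : B.Nondegenerate) (halt : B.IsAlt) :
    ∃ (p : ℕ) (T : V ≃ₗ[ℝ] (Fin (2 * p) → ℝ)), IsDarbouxChart B T := by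
  induction hk : Module.finrank ℝ V using Nat.strong_induction_on generalizing V with
  | _ k ih =>
  rcases subsingleton_or_nontrivial V with hV | hV
  · have : IsEmpty (Fin (2 * 0)) := Fin.isEmpty
    exact ⟨0, 0, fun x y ↦ by simp [Subsingleton.elim x 0]⟩
  obtain ⟨e, he⟩ := exists_ne (0 : V)
  obtain ⟨f, hf⟩ : ∃ f, B e f = -1 := by
    obtain ⟨y, hy⟩ : ∃ y, B e y ≠ 0 := by
      by_contra! h
      exact he (hB.1 e h)
    exact ⟨(-(B e y)⁻¹) • y, by simp [hy]⟩
  let W := Submodule.span ℝ (range ![e, f])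
  obtain ⟨T, hT⟩ : ∃ T, IsDarbouxChart (B.restrict W) T := exists_isDarbouxChart_span_pair halt hf
  have hrefl := halt.isRefl
  have hcompl : IsCompl W (B.orthogonal W) :=
    LinearMap.BilinForm.isCompl_orthogonal_of_restrict_nondegenerate hrefl hT.nondegenerate
  have horth (x) (hx : x ∈ B.orthogonal W) (y) (hy : y ∈ W) : B x y = 0 := hrefl _ _ (hx y hy)
  have hdim : Module.finrank ℝ (B.orthogonal W) < k := by
    have hW := T.finrank_eq
    have hsum := Submodule.finrank_add_eq_of_isCompl hcompl
    simp only [Module.finrank_fin_fun] at hW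
    omega
  obtain ⟨q, T', hT'⟩ := ih _ hdim
    (nondegenerate_restrict_of_isCompl hB hrefl hcompl.symm horth) (fun x ↦ halt x) rfl
  exact ⟨q + 1, sumChart hcompl.symm T' T, hT'.of_isCompl hrefl hcompl.symm horth hT⟩

end Darboux

section Fitting

variable {V : Type*} [AddCommGroup V] [Module ℝ V] {B : LinearMap.BilinForm ℝ V}
  {f : Module.End ℝ V}

lemma bilin_sub_one_pow_apply_eq_zero (hf : B.IsOrthogonal f) {k : ℕ} {x : V}
    (hx : ((f - 1) ^ k) x = 0) (z : V) : B x (((f - 1) ^ k) z) = 0 := by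
  induction k generalizing x z with
  | zero => simp_all
  | succ k ih =>
    have hcomm : f (((f - 1) ^ k) z) = ((f - 1) ^ k) (f z) :=
      LinearMap.congr_fun (((Commute.refl f).sub_right (.one_right f)).pow_right k) z
    calc B x (((f - 1) ^ (k + 1)) z) = B x (f (((f - 1) ^ k) z)) - B x (((f - 1) ^ k) z) := by
          rw [pow_succ', Module.End.mul_apply, LinearMap.sub_apply, Module.End.one_apply, map_sub]
      _ = -B ((f - 1) x) (((f - 1) ^ k) (f z)) := by
          rw [← hf x (((f - 1) ^ k) z), ← hcomm]
          simp
      _ = 0 := by rw [ih (by rwa [← Module.End.mul_apply, ← pow_succ]), neg_zero]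

lemma isOrthogonal_restrict (hf : B.IsOrthogonal f) {E : Submodule ℝ V} (hE : ∀ x ∈ E, f x ∈ E) :
    (B.restrict E).IsOrthogonal (f.restrict hE) := fun x y ↦ hf x y

lemma exists_isCompl_isNilpotent_ker_eq_bot [FiniteDimensional ℝ V] (hf : B.IsOrthogonal f) :
    ∃ E F : Submodule ℝ V, IsCompl E F ∧ (∀ x ∈ E, ∀ y ∈ F, B x y = 0) ∧
      (∃ hE : ∀ x ∈ E, f x ∈ E, IsNilpotent (f.restrict hE - 1)) ∧
      ∃ hF : ∀ x ∈ F, f x ∈ F, (f.restrict hF - 1).ker = ⊥ := by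
  obtain ⟨k, hk, hcompl⟩ : ∃ k ≥ 1, IsCompl ((f - 1) ^ k).ker ((f - 1) ^ k).range :=
    ((Filter.eventually_ge_atTop 1).and (f - 1).eventually_isCompl_ker_pow_range_pow).exists
  have hcomm (x) : f (((f - 1) ^ k) x) = ((f - 1) ^ k) (f x) :=
    LinearMap.congr_fun (((Commute.refl f).sub_right (.one_right f)).pow_right k) x
  refine ⟨((f - 1) ^ k).ker, ((f - 1) ^ k).range, hcompl, ?_, ⟨fun x hx ↦ ?_, k, ?_⟩,
    fun x hx ↦ ?_, ?_⟩
  · rintro x hx _ ⟨z, rfl⟩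
    exact bilin_sub_one_pow_apply_eq_zero hf hx z
  · rw [LinearMap.mem_ker] at hx ⊢
    rw [← hcomm, hx, map_zero]
  · have hmaps (x) (hx : x ∈ ((f - 1) ^ k).ker) : (f - 1) x ∈ ((f - 1) ^ k).ker := by
      rw [LinearMap.mem_ker, ← Module.End.mul_apply, ← pow_succ, pow_succ', Module.End.mul_apply,
        LinearMap.mem_ker.1 hx, map_zero]
    change (f - 1).restrict hmaps ^ k = 0
    rw [Module.End.pow_restrict]
    exact LinearMap.ext fun x ↦ Subtype.ext x.2
  · obtain ⟨z, rfl⟩ := hx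
    exact ⟨f z, (hcomm z).symm⟩
  · refine LinearMap.ker_eq_bot'.2 fun x hx ↦ Subtype.ext <|
      Submodule.disjoint_def.1 hcompl.disjoint x ?_ x.2
    have hfx : (f - 1) x = 0 := congrArg Subtype.val hx
    exact Module.End.pow_map_zero_of_le hk (by rwa [pow_one])

end Fitting

section toSp

variable {V : Type*} [AddCommGroup V] [Module ℝ V] {B : LinearMap.BilinForm ℝ V} {p : ℕ}
  {T : V ≃ₗ[ℝ] (Fin (2 * p) → ℝ)} {f : Module.End ℝ V}

/-- The matrix of an endomorphism in the coordinates given by `T`. -/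
def chartMatrix (T : V ≃ₗ[ℝ] (Fin (2 * p) → ℝ)) : Module.End ℝ V ≃ₐ[ℝ] Mat p :=
  (T.conjAlgEquiv ℝ).trans LinearMap.toMatrixAlgEquiv'

lemma chartMatrix_mulVec (f : Module.End ℝ V) (x : V) : chartMatrix T f *ᵥ T x = T (f x) := by
  have h : chartMatrix T f = LinearMap.toMatrix' (T.conjAlgEquiv ℝ f) := rfl
  rw [h, LinearMap.toMatrix'_mulVec, LinearEquiv.conjAlgEquiv_apply]
  simp

namespace IsDarbouxChart

/-- The symplectic matrix of a `B`-preserving endomorphism `f` in the chart `T`. -/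
def toSp (hT : IsDarbouxChart B T) (hf : B.IsOrthogonal f) : Sp p :=
  ⟨chartMatrix T f, mem_Sp_iff_stdForm_mulVec.2 fun x y ↦ by
    obtain ⟨x, rfl⟩ := T.surjective x
    obtain ⟨y, rfl⟩ := T.surjective y
    simp only [chartMatrix_mulVec]
    rw [hT, hT, hf]⟩

lemma coe_toSp (hT : IsDarbouxChart B T) (hf : B.IsOrthogonal f) :
    (hT.toSp hf : Mat p) = chartMatrix T f := rfl

lemma coe_toSp_sub_one (hT : IsDarbouxChart B T) (hf : B.IsOrthogonal f) :
    (hT.toSp hf : Mat p) - 1 = chartMatrix T (f - 1) := by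
  rw [coe_toSp, map_sub, map_one]

lemma isNilpotent_toSp_sub_one (hT : IsDarbouxChart B T) (hf : B.IsOrthogonal f)
    (h : IsNilpotent (f - 1)) : IsNilpotent ((hT.toSp hf : Mat p) - 1) := by
  rw [coe_toSp_sub_one]
  exact h.map (chartMatrix T)

lemma nondegenerate_toSp [FiniteDimensional ℝ V] (hT : IsDarbouxChart B T) (hf : B.IsOrthogonal f)
    (h : (f - 1).ker = ⊥) : Sp.Nondegenerate (hT.toSp hf) := by
  rw [Sp.Nondegenerate, coe_toSp_sub_one, ← isUnit_iff_ne_zero, ← isUnit_iff_isUnit_det]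
  exact ((f - 1).isUnit_iff_ker_eq_bot.2 h).map (chartMatrix T)

lemma toSp_sumChart {E F : Submodule ℝ V} (hEF : IsCompl E F) {q r : ℕ}
    {T : E ≃ₗ[ℝ] (Fin (2 * q) → ℝ)} {T' : F ≃ₗ[ℝ] (Fin (2 * r) → ℝ)}
    (hT : IsDarbouxChart (B.restrict E) T) (hT' : IsDarbouxChart (B.restrict F) T')
    (hsum : IsDarbouxChart B (sumChart hEF T T')) (hf : B.IsOrthogonal f)
    (hE : ∀ x ∈ E, f x ∈ E) (hF : ∀ x ∈ F, f x ∈ F) :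
    hsum.toSp hf = Sp.blockSum (hT.toSp (isOrthogonal_restrict hf hE))
      (hT'.toSp (isOrthogonal_restrict hf hF)) := by
  refine Subtype.ext <| mulVec_injective <| funext fun w ↦ ?_
  obtain ⟨x, rfl⟩ := (sumChart hEF T T').surjective w
  obtain ⟨⟨u, v⟩, rfl⟩ := (E.prodEquivOfIsCompl F hEF).surjective x
  rw [Sp.coe_blockSum, coe_toSp, coe_toSp, coe_toSp, chartMatrix_mulVec,
    Submodule.coe_prodEquivOfIsCompl', map_add, sumChart_add, blockHom_mulVec_appendEquiv,
    chartMatrix_mulVec, chartMatrix_mulVec, ← sumChart_add]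
  rfl

end IsDarbouxChart

end toSp

section Stability

open BasedPath

variable {D : ∀ n, BasedPath n → ℤ}

namespace BasedPath.IsIndexWithJump

lemma isRotationStable_of_isRotationStable_toSp {k : ℤ} (hD : IsIndexWithJump k D) {n p : ℕ}
    (hn : 1 ≤ n) {a : Sp n} {T : (Fin (2 * n) → ℝ) ≃ₗ[ℝ] (Fin (2 * p) → ℝ)}
    (hT : IsDarbouxChart (stdForm n) T) (ha : (stdForm n).IsOrthogonal (toLin' (a : Mat n)))
    (hstable : IsRotationStable D (hT.toSp ha)) : IsRotationStable D a := by
  obtain rfl : n = p := by simpa using T.finrank_eq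
  let g : Sp n := ⟨LinearMap.toMatrix' T.toLinearMap, mem_Sp_iff_stdForm_mulVec.2 fun x y ↦ by
    simp only [LinearMap.toMatrix'_mulVec]
    exact hT x y⟩
  have hg : hT.toSp ha * g = g * a := by
    refine Subtype.ext <| mulVec_injective <| funext fun v ↦ ?_
    have hg_mulVec (v) : (g : Mat n) *ᵥ v = T v := LinearMap.toMatrix'_mulVec _ _
    rw [Sp.coe_mul, Sp.coe_mul, ← mulVec_mulVec, ← mulVec_mulVec, hg_mulVec, hg_mulVec,
      IsDarbouxChart.coe_toSp, chartMatrix_mulVec, toLin'_apply]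
  have h := hD.isRotationStable_conj hn hstable g⁻¹
  rwa [mul_assoc, inv_inv, hg, inv_mul_cancel_left] at h

lemma isRotationStable_blockSum_of_isNilpotent_of_nondegenerate (hD : IsIndexWithJump 0 D)
    {p q : ℕ} (hpq : 1 ≤ p + q) {a : Sp p} {b : Sp q} (ha : IsNilpotent ((a : Mat p) - 1))
    (hb : Sp.Nondegenerate b) : IsRotationStable D (Sp.blockSum a b) := by
  have hsub : (Sp.blockSum a b : Mat (p + q)) - 1 = blockHom ℝ p q ((a : Mat p) - 1, b - 1) := by
    rw [Sp.coe_blockSum, ← map_one (blockHom ℝ p q), ← map_sub]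
    rfl
  rcases p.eq_zero_or_pos with rfl | hp
  · refine hD.isRotationStable_of_nondegenerate hpq ?_
    rw [Sp.Nondegenerate, hsub, det_blockHom]
    exact mul_ne_zero (by simp) hb
  rcases q.eq_zero_or_pos with rfl | hq
  · refine hD.isRotationStable_of_isNilpotent hpq ?_
    obtain ⟨k, hk⟩ := ha
    have hb_pow : ((b : Mat 0) - 1) ^ k = 0 := Matrix.ext fun i ↦ i.elim0
    exact ⟨k, by rw [hsub, ← map_pow, Prod.pow_mk, hk, hb_pow, Prod.mk_zero_zero, map_zero]⟩
  exact hD.isRotationStable_blockSum hp hq (hD.isRotationStable_of_isNilpotent hp ha)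
    (hD.isRotationStable_of_nondegenerate hq hb)

lemma isRotationStable (hD : IsIndexWithJump 0 D) {n : ℕ} (hn : 1 ≤ n) (a : Sp n) :
    IsRotationStable D a := by
  let f : Module.End ℝ (Fin (2 * n) → ℝ) := toLin' (a : Mat n)
  have hf : (stdForm n).IsOrthogonal f := mem_Sp_iff_stdForm_mulVec.1 a.2
  have hrefl := (stdForm_isAlt n).isRefl
  obtain ⟨E, F, hcompl, horth, ⟨hE, hE_nilp⟩, hF, hF_ker⟩ :=
    exists_isCompl_isNilpotent_ker_eq_bot hf
  obtain ⟨p, T, hT⟩ := exists_isDarbouxChart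
    (nondegenerate_restrict_of_isCompl (stdForm_nondegenerate n) hrefl hcompl horth)
    fun x ↦ stdForm_isAlt n x
  obtain ⟨q, T', hT'⟩ := exists_isDarbouxChart
    (nondegenerate_restrict_of_isCompl (stdForm_nondegenerate n) hrefl hcompl.symm
      fun y hy x hx ↦ hrefl _ _ (horth x hx y hy))
    fun x ↦ stdForm_isAlt n x
  have hsum := hT.of_isCompl hrefl hcompl horth hT'
  have hpq : n = p + q := by simpa using (sumChart hcompl T T').finrank_eq
  refine hD.isRotationStable_of_isRotationStable_toSp hn hsum hf ?_
  rw [IsDarbouxChart.toSp_sumChart hcompl hT hT' hsum hf hE hF]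
  exact hD.isRotationStable_blockSum_of_isNilpotent_of_nondegenerate (hpq ▸ hn)
    (hT.isNilpotent_toSp_sub_one _ hE_nilp) (hT'.nondegenerate_toSp _ hF_ker)

lemma eq_zero (hD : IsIndexWithJump 0 D) {n : ℕ} (hn : 1 ≤ n) (γ : BasedPath n) : D n γ = 0 := by
  rw [hD.eq_one_of_isRotationStable hn (hD.isRotationStable hn)]
  induction n, hn using Nat.le_induction with
  | base => exact hD.one_eq_zero
  | succ n hn ih =>
    have hone : (1 : BasedPath (n + 1)) = BasedPath.blockSum 1 1 := by
      refine DFunLike.ext _ _ fun t ↦ ?_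
      rw [blockSum_apply]
      exact Sp.blockSum_one.symm
    rw [hone, hD.blockSum hn le_rfl, ih 1, hD.one_eq_zero, add_zero]

end BasedPath.IsIndexWithJump

end Stability

/-- **Theorem (Long).** For every `τ > 0` there is a map
`i : ⋃_{n ≥ 1} P_τ(2n) → ℤ` satisfying the five axioms, and it is unique. -/
theorem conleyZehnder_index_exists_unique (τ : ℝ) (hτ : 0 < τ) :
    ∃ i : ∀ n : ℕ, SympPath τ n → ℤ, CZAxioms τ i ∧
      ∀ i' : ∀ n : ℕ, SympPath τ n → ℤ, CZAxioms τ i' →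
        ∀ n : ℕ, 1 ≤ n → ∀ γ : SympPath τ n, i' n γ = i n γ := by
  have hcz := BasedPath.isIndexWithJump_czIndex
  refine ⟨_, SympPath.czAxioms_comp_toBasedPath hτ hcz, fun i' hi' n hn γ ↦ ?_⟩
  have hdiff := (SympPath.isIndexWithJump_comp_ofBasedPath hτ hi').sub hcz
  rw [sub_self] at hdiff
  have h := sub_eq_zero.1 (hdiff.eq_zero hn (γ.toBasedPath hτ))
  rwa [SympPath.apply_ofBasedPath_toBasedPath hτ hi' hn γ] at h
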